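/- arXiv:2501.10590 — 2 statements merged into one kernel-verified Lean document; each statement's English description precedes it below -/
import Mathlib

section
/- For j = 1,2, let c_j be a wave speed (for the same constant c0 > 0), let f_j ∈ C²([0,∞)) be not identically zero with supp f_j ⊂ (0,1), and let u_j be a classical solution of the half-line wave problem for (c_j, f_j) that decays exponentially near the boundary region. Assume u_1(t,1) = u_2(t,1) for all t ≥ 0. Then there exists a function ρ : ℝ → ℝ with ρ(ξ) ≠ 0 for every ξ ∈ ℝ such that v_{c_2}(ξ,x) = ρ(ξ) v_{c_1}(ξ,x) for all x ≥ 1 and all ξ ∈ ℝ. -/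
open Set

/-- `c` is a wave speed for the constant `c0 > 0`: a positive `C²` function on `[0,∞)`
equal to `c0` outside `(0,1)`. -/
def IsWaveSpeed (c0 : ℝ) (c : ℝ → ℝ) : Prop :=
  ContDiffOn ℝ 2 c (Ici 0) ∧ (∀ x ∈ Ici (0:ℝ), 0 < c x) ∧
    ∀ x ∈ Ici (0:ℝ), x ∉ Ioo (0:ℝ) 1 → c x = c0

/-- `u` is a classical solution of the half-line wave problem for `(c, f)`. -/
def IsWaveSolution (c : ℝ → ℝ) (f : ℝ → ℝ) (u : ℝ → ℝ → ℝ) : Prop :=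
  ContDiffOn ℝ 2 (Function.uncurry u) (Ici 0 ×ˢ Ici 0) ∧
  (∀ t > (0:ℝ), ∀ x > (0:ℝ),
      deriv (fun s => deriv (fun r => u r x) s) t
        = (c x)^2 * deriv (fun y => deriv (fun w => u t w) y) x) ∧
  (∀ x ∈ Ici (0:ℝ), u 0 x = f x) ∧
  (∀ x ∈ Ici (0:ℝ), derivWithin (fun s => u s x) (Ici 0) 0 = 0) ∧
  (∀ t ∈ Ici (0:ℝ), u t 0 = 0)

/-- `u` decays exponentially near the boundary region `[0,1]`. -/
def DecaysExp (u : ℝ → ℝ → ℝ) : Prop :=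
  ∃ C > (0:ℝ), ∃ κ > (0:ℝ), ∀ t ∈ Ici (0:ℝ), ∀ x ∈ Icc (0:ℝ) 1,
    |u t x| + |derivWithin (fun y => u t y) (Ici 0) x| ≤ C * Real.exp (-κ * t)

/-- `v = v_c` is the family of solutions of `-c(x)² ∂²ₓ v(z,x) = z² v(z,x)` with
`v(z,0) = 0`, `∂ₓ v(z,0) = 1`. -/
def IsFreqSolution (c : ℝ → ℝ) (v : ℂ → ℝ → ℂ) : Prop :=
  ∀ z : ℂ, ContDiff ℝ 2 (v z) ∧
    (∀ x ∈ Ici (0:ℝ), -(c x : ℂ)^2 * deriv (deriv (v z)) x = z^2 * v z x) ∧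
    v z 0 = 0 ∧ deriv (v z) 0 = 1

/-!
The cosine transform in time `A(ξ, x) = ∫₀^∞ cos(ξt) u(t, x) dt` of a decaying solution satisfies
`-c² A'' = ξ² A` and `A(ξ, 0) = 0` (the initial velocity vanishes, so integrating `∂ₜ²u` by parts
twice leaves no boundary term), hence `A(ξ, ·) = b(ξ) v_c(ξ, ·)` on `[0, 1]` with
`b(ξ) = A'(ξ, 0)`. To the right of the support of the initial data the wave is outgoing,
`∂ₜu + c0 ∂ₓu = 0`, so `u₁(·, 1) = u₂(·, 1)` forces `∂ₓu₁(·, 1) = ∂ₓu₂(·, 1)`: both transforms have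
the same Cauchy data at `x = 1`, whence `b₁ · (v₁, v₁')(1) = b₂ · (v₂, v₂')(1)`. Exponential decay
makes `A` analytic in `ξ`, so `b₁` cannot vanish on an open set without `u₁` vanishing. The
Wronskian of `v₁` and `v₂` at `x = 1` is therefore zero on a dense set of `ξ`, and by continuity for
all `ξ`. Both vectors `(v_j, v_j')(1)` are nonzero, so they are proportional with a factor
`ρ(ξ) ≠ 0`, and the proportionality propagates to `x ≥ 1`, where both speeds equal `c0`.
-/

open MeasureTheory ProbabilityTheory Filter Topology
open scoped ENNReal NNReal

section LinearODE

variable {E F : Type*} [NormedAddCommGroup E] [NormedSpace ℝ E] [NormedAddCommGroup F]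
  [NormedSpace ℝ F] {q : ℝ → ℝ} {y y' z z' : ℝ → E} {s t : Set ℝ} {a b : ℝ}

/-- `y` solves the second-order linear equation `y'' = q y` on `s`. The derivative `y'` is part of
the data, and both derivatives are taken within `s`, so that endpoints of intervals are allowed. -/
structure IsLinearODESolution (q : ℝ → ℝ) (y y' : ℝ → E) (s : Set ℝ) : Prop where
  hasDerivWithinAt : ∀ x ∈ s, HasDerivWithinAt y (y' x) s x
  hasDerivWithinAt_deriv : ∀ x ∈ s, HasDerivWithinAt y' (q x • y x) s x

/-- The vector field `(p, p') ↦ (p', q p)` on phase space, whose trajectories are the pairs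
`(y, y')` with `y'' = q y`. -/
def phaseField (q : ℝ) (p : E × E) : E × E := (p.2, q • p.1)

theorem lipschitzWith_phaseField {q : ℝ} {K : ℝ≥0} (hK : 1 ≤ K) (hq : |q| ≤ K) :
    LipschitzWith K (phaseField q : E × E → E × E) := by
  refine LipschitzWith.of_dist_le_mul fun p r => ?_
  simp only [phaseField, Prod.dist_eq, dist_smul₀, Real.norm_eq_abs]
  refine max_le ?_ ?_
  · exact (le_max_right _ _).trans (le_mul_of_one_le_left (by positivity) hK)
  · exact mul_le_mul hq (le_max_left _ _) dist_nonneg K.2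

theorem exists_lipschitzWith_phaseField (hq : ContinuousOn q (Icc a b)) :
    ∃ K : ℝ≥0, ∀ x ∈ Icc a b, LipschitzWith K (phaseField (q x) : E × E → E × E) := by
  obtain ⟨M, hM⟩ := isCompact_Icc.exists_bound_of_continuousOn hq
  refine ⟨max 1 M.toNNReal, fun x hx => lipschitzWith_phaseField (le_max_left _ _) ?_⟩
  exact (hM x hx).trans ((Real.le_coe_toNNReal M).trans (NNReal.coe_le_coe.2 (le_max_right _ _)))

namespace IsLinearODESolution

theorem mono (h : IsLinearODESolution q y y' t) (hst : s ⊆ t) : IsLinearODESolution q y y' s :=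
  ⟨fun x hx => (h.1 x (hst hx)).mono hst, fun x hx => (h.2 x (hst hx)).mono hst⟩

theorem clm_comp (h : IsLinearODESolution q y y' s) (L : E →L[ℝ] F) :
    IsLinearODESolution q (L ∘ y) (L ∘ y') s :=
  ⟨fun x hx => L.hasFDerivAt.comp_hasDerivWithinAt x (h.1 x hx), fun x hx => by
    simpa only [Function.comp_apply, map_smul] using
      L.hasFDerivAt.comp_hasDerivWithinAt x (h.2 x hx)⟩

theorem const_smul (h : IsLinearODESolution q y y' s) (r : ℝ) :
    IsLinearODESolution q (r • y) (r • y') s :=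
  h.clm_comp (r • ContinuousLinearMap.id ℝ E)

theorem zero : IsLinearODESolution q (0 : ℝ → E) 0 s :=
  ⟨fun x _ => hasDerivWithinAt_const x s 0, fun x _ => by
    rw [Pi.zero_apply, smul_zero]
    exact hasDerivWithinAt_const x s 0⟩

theorem congr_coeff {r : ℝ → ℝ} (h : IsLinearODESolution q y y' s) (hqr : EqOn q r s) :
    IsLinearODESolution r y y' s :=
  ⟨h.1, fun x hx => hqr hx ▸ h.2 x hx⟩

theorem hasDerivWithinAt_phase (h : IsLinearODESolution q y y' s) {x : ℝ} (hx : x ∈ s) :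
    HasDerivWithinAt (fun x => (y x, y' x)) (phaseField (q x) (y x, y' x)) s x :=
  (h.1 x hx).prodMk (h.2 x hx)

theorem continuousOn_phase (h : IsLinearODESolution q y y' s) :
    ContinuousOn (fun x => (y x, y' x)) s :=
  fun _ hx => (h.hasDerivWithinAt_phase hx).continuousWithinAt

theorem hasDerivWithinAt_phase_Ici (h : IsLinearODESolution q y y' (Icc a b)) {x : ℝ}
    (hx : x ∈ Ico a b) :
    HasDerivWithinAt (fun x => (y x, y' x)) (phaseField (q x) (y x, y' x)) (Ici x) x :=
  (h.hasDerivWithinAt_phase (Ico_subset_Icc_self hx)).mono_of_mem_nhdsWithin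
    (Icc_mem_nhdsGE_of_mem hx)

theorem hasDerivWithinAt_phase_Iic (h : IsLinearODESolution q y y' (Icc a b)) {x : ℝ}
    (hx : x ∈ Ioc a b) :
    HasDerivWithinAt (fun x => (y x, y' x)) (phaseField (q x) (y x, y' x)) (Iic x) x :=
  (h.hasDerivWithinAt_phase (Ioc_subset_Icc_self hx)).mono_of_mem_nhdsWithin
    (Icc_mem_nhdsLE_of_mem hx)

theorem eqOn_phase_of_eq_left (hq : ContinuousOn q (Icc a b))
    (hy : IsLinearODESolution q y y' (Icc a b)) (hz : IsLinearODESolution q z z' (Icc a b))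
    (heq : y a = z a) (heq' : y' a = z' a) :
    EqOn (fun x => (y x, y' x)) (fun x => (z x, z' x)) (Icc a b) := by
  obtain ⟨K, hK⟩ := exists_lipschitzWith_phaseField (E := E) hq
  exact ODE_solution_unique_of_mem_Icc_right
    (fun x hx => (hK x (Ico_subset_Icc_self hx)).lipschitzOnWith)
    hy.continuousOn_phase (fun _ => hy.hasDerivWithinAt_phase_Ici) (fun _ _ => mem_univ _)
    hz.continuousOn_phase (fun _ => hz.hasDerivWithinAt_phase_Ici) (fun _ _ => mem_univ _)
    (Prod.ext heq heq')

theorem eqOn_phase_of_eq_right (hq : ContinuousOn q (Icc a b))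
    (hy : IsLinearODESolution q y y' (Icc a b)) (hz : IsLinearODESolution q z z' (Icc a b))
    (heq : y b = z b) (heq' : y' b = z' b) :
    EqOn (fun x => (y x, y' x)) (fun x => (z x, z' x)) (Icc a b) := by
  obtain ⟨K, hK⟩ := exists_lipschitzWith_phaseField (E := E) hq
  exact ODE_solution_unique_of_mem_Icc_left
    (fun x hx => (hK x (Ioc_subset_Icc_self hx)).lipschitzOnWith)
    hy.continuousOn_phase (fun _ => hy.hasDerivWithinAt_phase_Iic) (fun _ _ => mem_univ _)
    hz.continuousOn_phase (fun _ => hz.hasDerivWithinAt_phase_Iic) (fun _ _ => mem_univ _)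
    (Prod.ext heq heq')

theorem dist_phase_le_gronwallBound {r : ℝ → ℝ} {K : ℝ≥0} {M ε : ℝ}
    (hK : ∀ x ∈ Icc a b, LipschitzWith K (phaseField (q x) : E × E → E × E))
    (hM : ∀ x ∈ Icc a b, ‖z x‖ ≤ M) (hε : ∀ x ∈ Icc a b, dist (q x) (r x) ≤ ε)
    (hy : IsLinearODESolution q y y' (Icc a b)) (hz : IsLinearODESolution r z z' (Icc a b))
    (heq : y a = z a) (heq' : y' a = z' a) {x : ℝ} (hx : x ∈ Icc a b) :
    dist (y x, y' x) (z x, z' x) ≤ gronwallBound 0 K (ε * M) (x - a) := by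
  have herror : ∀ x ∈ Ico a b,
      dist (phaseField (r x) (z x, z' x)) (phaseField (q x) (z x, z' x)) ≤ ε * M := by
    intro x hx
    have hx' := Ico_subset_Icc_self hx
    rw [phaseField, phaseField, dist_prod_same_left, dist_comm, dist_eq_norm, ← sub_smul,
      norm_smul, ← dist_eq_norm]
    exact mul_le_mul (hε x hx') (hM x hx') (norm_nonneg _) (dist_nonneg.trans (hε x hx'))
  have hbound := dist_le_of_approx_trajectories_ODE_of_mem (εf := 0) (δ := 0)
    (fun x hx => (hK x (Ico_subset_Icc_self hx)).lipschitzOnWith)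
    hy.continuousOn_phase (fun _ => hy.hasDerivWithinAt_phase_Ici)
    (fun _ _ => (dist_self _).le) (fun _ _ => mem_univ _)
    hz.continuousOn_phase (fun _ => hz.hasDerivWithinAt_phase_Ici) herror
    (fun _ _ => mem_univ _) (by simp [heq, heq']) x hx
  rwa [zero_add] at hbound

theorem tendsto_phase {ι : Type*} {l : Filter ι} {Q : ι → ℝ → ℝ} {Y Y' : ι → ℝ → E}
    (hq : ContinuousOn q (Icc a b)) (hQ : TendstoUniformlyOn Q q l (Icc a b))
    (hY : ∀ i, IsLinearODESolution (Q i) (Y i) (Y' i) (Icc a b))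
    (hy : IsLinearODESolution q y y' (Icc a b)) (heq : ∀ i, Y i a = y a)
    (heq' : ∀ i, Y' i a = y' a) {x : ℝ} (hx : x ∈ Icc a b) :
    Tendsto (fun i => (Y i x, Y' i x)) l (𝓝 (y x, y' x)) := by
  obtain ⟨B, hB⟩ := isCompact_Icc.exists_bound_of_continuousOn hq
  obtain ⟨M, hM⟩ := isCompact_Icc.exists_bound_of_continuousOn hy.continuousOn_phase.fst
  set K : ℝ≥0 := max 1 (B + 1).toNNReal
  have hgronwall : Tendsto (fun ε => gronwallBound 0 K (ε * M) (x - a)) (𝓝[>] 0) (𝓝 0) := by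
    have hcont : Continuous fun ε => gronwallBound 0 K (ε * M) (x - a) :=
      (gronwallBound_continuous_ε 0 K (x - a)).comp (continuous_mul_const M)
    simpa [gronwallBound_ε0_δ0] using (hcont.tendsto 0).mono_left nhdsWithin_le_nhds
  refine Metric.tendsto_nhds.2 fun δ hδ => ?_
  obtain ⟨ε, hεδ, hε0, hε1⟩ : ∃ ε, gronwallBound 0 K (ε * M) (x - a) < δ ∧ 0 < ε ∧ ε < 1 :=
    ((hgronwall.eventually_lt_const hδ).and (Ioo_mem_nhdsGT zero_lt_one)).exists
  filter_upwards [Metric.tendstoUniformlyOn_iff.1 hQ ε hε0] with i hi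
  have hlip : ∀ x ∈ Icc a b, LipschitzWith K (phaseField (Q i x) : E × E → E × E) := by
    intro x hx
    have hQx : |Q i x| ≤ B + 1 := by
      have hqx := hB x hx
      have hdist := hi x hx
      rw [Real.norm_eq_abs] at hqx
      rw [dist_comm, Real.dist_eq] at hdist
      linarith [abs_sub_abs_le_abs_sub (Q i x) (q x)]
    exact lipschitzWith_phaseField (le_max_left _ _)
      (hQx.trans ((Real.le_coe_toNNReal _).trans (NNReal.coe_le_coe.2 (le_max_right _ _))))
  refine (dist_phase_le_gronwallBound hlip hM (fun x hx => ?_) (hY i) hy (heq i) (heq' i)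
    hx).trans_lt hεδ
  rw [dist_comm]
  exact (hi x hx).le

end IsLinearODESolution

end LinearODE

theorem measure_eq_of_frequently_charFun_eq {μ ν : Measure ℝ} [IsFiniteMeasure μ]
    [IsFiniteMeasure ν] (hμ : 0 ∈ interior (integrableExpSet id μ))
    (hν : 0 ∈ interior (integrableExpSet id ν)) {ξ₀ : ℝ}
    (h : ∃ᶠ ξ in 𝓝[≠] ξ₀, charFun μ ξ = charFun ν ξ) : μ = ν := by
  set strip : Set ℂ :=
    {z | z.re ∈ interior (integrableExpSet id μ) ∩ interior (integrableExpSet id ν)}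
  have hstrip : IsPreconnected strip :=
    ((convex_integrableExpSet.interior.inter convex_integrableExpSet.interior).linear_preimage
      Complex.reLm).isPreconnected
  have imaginary_mem (ξ : ℝ) : (ξ * Complex.I : ℂ) ∈ strip := by simp [strip, hμ, hν]
  have hrotate : Tendsto (fun ξ : ℝ => (ξ * Complex.I : ℂ)) (𝓝[≠] ξ₀) (𝓝[≠] (ξ₀ * Complex.I)) :=
    (Continuous.continuousWithinAt (by fun_prop)).tendsto_nhdsWithin fun ξ hξ => by
      simpa using hξ
  have hmgf : EqOn (complexMGF id μ) (complexMGF id ν) strip := by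
    refine AnalyticOnNhd.eqOn_of_preconnected_of_frequently_eq
      (analyticOnNhd_complexMGF.mono fun z hz => hz.1)
      (analyticOnNhd_complexMGF.mono fun z hz => hz.2) hstrip (imaginary_mem ξ₀)
      (hrotate.frequently ?_)
    simpa only [complexMGF_id_mul_I] using h
  refine Measure.ext_of_charFun (funext fun ξ => ?_)
  simpa only [complexMGF_id_mul_I] using hmgf (imaginary_mem ξ)

/-- The cosine transform `∫₀^∞ cos (ξ t) g(t) dt` of `g : [0, ∞) → ℝ`, without normalization. -/
noncomputable def cosTransform (g : ℝ → ℝ) (ξ : ℝ) : ℝ :=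
  ∫ t in Ioi 0, Real.cos (ξ * t) * g t

section Density

variable {h : ℝ → ℝ} {κ : ℝ}

theorem integrable_of_integrable_exp_mul_abs_mul (hκ : 0 ≤ κ) (hh : AEStronglyMeasurable h)
    (hint : Integrable fun x => Real.exp (κ * |x|) * h x) : Integrable h := by
  refine hint.mono hh (ae_of_all _ fun x => ?_)
  rw [norm_mul, Real.norm_of_nonneg (Real.exp_nonneg _)]
  exact le_mul_of_one_le_left (norm_nonneg _) (Real.one_le_exp (by positivity))

theorem zero_mem_interior_integrableExpSet_withDensity (hκ : 0 < κ) (hh : Measurable h)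
    (hint : Integrable fun x => Real.exp (κ * |x|) * h x) :
    0 ∈ interior (integrableExpSet id (volume.withDensity fun x => ENNReal.ofReal (h x))) := by
  refine mem_interior_iff_mem_nhds.2 (mem_of_superset (Icc_mem_nhds (neg_lt_zero.2 hκ) hκ) ?_)
  intro s hs
  rw [integrableExpSet, mem_ofPred_eq, integrable_withDensity_iff_integrable_smul'
    (by fun_prop) (ae_of_all _ fun _ => ENNReal.ofReal_lt_top)]
  refine hint.mono (by fun_prop) (ae_of_all _ fun x => ?_)
  have hexp : Real.exp (s * x) ≤ Real.exp (κ * |x|) :=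
    Real.exp_le_exp.2 ((le_abs_self _).trans (by rw [abs_mul]; gcongr; exact abs_le.2 hs))
  have hpos : |max (h x) 0| ≤ |h x| := by
    rcases le_total (h x) 0 with hx | hx <;> simp [hx]
  simp only [id_eq, smul_eq_mul, ENNReal.toReal_ofReal', norm_mul, Real.norm_eq_abs,
    Real.abs_exp]
  rw [mul_comm]
  gcongr

theorem integral_smul_withDensity_sub_withDensity_neg {φ : ℝ → ℂ} (hh : Measurable h)
    (hφ : Measurable φ) (hint : Integrable fun x => h x • φ x) :
    ∫ x, φ x ∂(volume.withDensity fun x => ENNReal.ofReal (h x)) -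
      ∫ x, φ x ∂(volume.withDensity fun x => ENNReal.ofReal (-h x)) = ∫ x, h x • φ x := by
  have hpart (k : ℝ → ℝ) (hk : ∀ x, |k x| ≤ |h x|) (hkm : Measurable k) :
      Integrable fun x => k x • φ x :=
    hint.mono (hkm.aestronglyMeasurable.smul hφ.aestronglyMeasurable) (ae_of_all _ fun x => by
      rw [norm_smul, norm_smul]
      exact mul_le_mul_of_nonneg_right (hk x) (norm_nonneg _))
  rw [integral_withDensity_eq_integral_toReal_smul (by fun_prop)
      (ae_of_all _ fun _ => ENNReal.ofReal_lt_top),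
    integral_withDensity_eq_integral_toReal_smul (by fun_prop)
      (ae_of_all _ fun _ => ENNReal.ofReal_lt_top)]
  simp only [ENNReal.toReal_ofReal']
  rw [← integral_sub]
  · refine integral_congr_ae (ae_of_all _ fun x => ?_)
    simp only [← sub_smul, max_zero_sub_max_neg_zero_eq_self]
  · refine hpart _ (fun x => ?_) (by fun_prop)
    rcases le_total (h x) 0 with hx | hx <;> simp [hx]
  · refine hpart _ (fun x => ?_) (by fun_prop)
    rcases le_total (h x) 0 with hx | hx <;> simp [hx]

theorem eq_zero_of_frequently_integral_cexp_mul_eq_zero (hκ : 0 < κ) (hh : Continuous h)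
    (hint : Integrable fun x => Real.exp (κ * |x|) * h x) {ξ₀ : ℝ}
    (hzero : ∃ᶠ ξ : ℝ in 𝓝[≠] ξ₀, ∫ x, h x • Complex.exp (ξ * x * Complex.I) = 0) : h = 0 := by
  have hneg : Integrable fun x => Real.exp (κ * |x|) * -h x := by
    simpa only [mul_neg] using hint.fun_neg
  have hhint := integrable_of_integrable_exp_mul_abs_mul hκ.le hh.aestronglyMeasurable hint
  have := isFiniteMeasure_withDensity_ofReal hhint.2
  have := isFiniteMeasure_withDensity_ofReal hhint.neg.2
  have hmeasures : (volume.withDensity fun x => ENNReal.ofReal (h x)) =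
      volume.withDensity fun x => ENNReal.ofReal ((-h) x) := by
    refine measure_eq_of_frequently_charFun_eq
      (zero_mem_interior_integrableExpSet_withDensity hκ hh.measurable hint)
      (zero_mem_interior_integrableExpSet_withDensity hκ hh.measurable.neg hneg)
      (hzero.mono fun ξ hξ => sub_eq_zero.1 ?_)
    rw [charFun_apply_real, charFun_apply_real, ← hξ]
    refine integral_smul_withDensity_sub_withDensity_neg hh.measurable (by fun_prop) ?_
    refine hhint.mono (by fun_prop) (ae_of_all _ fun x => ?_)
    rw [norm_smul, ← Complex.ofReal_mul, Complex.norm_exp_ofReal_mul_I, mul_one]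
  rw [withDensity_eq_iff_of_sigmaFinite (by fun_prop)
    (hh.measurable.neg.ennreal_ofReal.aemeasurable)] at hmeasures
  have hae : h =ᵐ[volume] 0 := by
    filter_upwards [hmeasures] with x hx
    have hparts := congrArg ENNReal.toReal hx
    simp only [ENNReal.toReal_ofReal', Pi.neg_apply] at hparts
    rcases max_cases (h x) 0 with ⟨_, _⟩ | ⟨_, _⟩ <;> rcases max_cases (-h x) 0 with ⟨_, _⟩ | ⟨_, _⟩
      <;> simp only [Pi.zero_apply] <;> linarith
  exact (hh.ae_eq_iff_eq volume continuous_zero).1 hae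

end Density

theorem integrable_comp_abs {g : ℝ → ℝ} (hg : IntegrableOn g (Ioi 0)) :
    Integrable fun x => g |x| := by
  have hright : IntegrableOn (fun x => g |x|) (Ioi 0) :=
    hg.congr_fun (fun x hx => by rw [abs_of_pos hx]) measurableSet_Ioi
  have hleft : IntegrableOn (fun x => g |x|) (Iic 0) := by
    rw [← (Measure.measurePreserving_neg volume).integrableOn_comp_preimage
      (Homeomorph.neg ℝ).measurableEmbedding]
    simpa [Function.comp_def, integrableOn_Ici_iff_integrableOn_Ioi] using hright
  simpa only [Iic_union_Ioi, integrableOn_univ] using hleft.union hright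

theorem integral_comp_abs_smul_cexp {g : ℝ → ℝ} (hg : Integrable fun x => g |x|) (ξ : ℝ) :
    ∫ x, g |x| • Complex.exp (ξ * x * Complex.I) = 2 * cosTransform g ξ := by
  have hexp (η : ℝ) : Integrable fun x => g |x| • Complex.exp (η * x * Complex.I) :=
    hg.mono (hg.1.smul (Continuous.aestronglyMeasurable (by fun_prop))) (ae_of_all _ fun x => by
      rw [norm_smul, ← Complex.ofReal_mul, Complex.norm_exp_ofReal_mul_I, mul_one])
  have hreflect : ∫ x, g |x| • Complex.exp (ξ * x * Complex.I) =
      ∫ x, g |x| • Complex.exp ((-ξ : ℝ) * x * Complex.I) := by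
    rw [← integral_neg_eq_self]
    simp [abs_neg]
  have hdouble : 2 * ∫ x, g |x| • Complex.exp (ξ * x * Complex.I) =
      ∫ x, ((2 * (Real.cos (ξ * |x|) * g |x|) : ℝ) : ℂ) := by
    rw [two_mul]
    nth_rewrite 2 [hreflect]
    rw [← integral_add (hexp ξ) (hexp (-ξ))]
    refine integral_congr_ae (ae_of_all _ fun x => ?_)
    have hcos : Real.cos (ξ * |x|) = Real.cos (ξ * x) := by
      rw [← Real.cos_abs (ξ * x), ← Real.cos_abs (ξ * |x|), abs_mul, abs_mul, abs_abs]
    simp only [hcos, Complex.real_smul, Complex.ofReal_mul, Complex.ofReal_cos, Complex.cos,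
      Complex.ofReal_neg, Complex.ofReal_ofNat]
    ring_nf
  have hint := integral_comp_abs (f := fun x => 2 * (Real.cos (ξ * x) * g x))
  rw [integral_complex_ofReal, hint, integral_const_mul] at hdouble
  rw [cosTransform]
  push_cast at hdouble ⊢
  linear_combination hdouble / 2

theorem eqOn_zero_of_frequently_cosTransform_eq_zero {g : ℝ → ℝ} {C κ : ℝ} (hκ : 0 < κ)
    (hg : ContinuousOn g (Ici 0)) (hbound : ∀ t ∈ Ici (0 : ℝ), |g t| ≤ C * Real.exp (-κ * t))
    {ξ₀ : ℝ} (hzero : ∃ᶠ ξ in 𝓝[≠] ξ₀, cosTransform g ξ = 0) : EqOn g 0 (Ici 0) := by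
  have heven : Continuous fun x => g |x| :=
    hg.comp_continuous continuous_abs fun x => abs_nonneg x
  have hexp : Integrable fun x : ℝ => C * Real.exp (-(κ / 2) * |x|) := by
    refine Integrable.const_mul ?_ C
    exact integrable_comp_abs (exp_neg_integrableOn_Ioi 0 (half_pos hκ))
  have hint : Integrable fun x => Real.exp (κ / 2 * |x|) * g |x| := by
    refine hexp.mono' (Continuous.mul (by fun_prop) heven).aestronglyMeasurable
      (ae_of_all _ fun x => ?_)
    rw [norm_mul, Real.norm_of_nonneg (Real.exp_nonneg _), Real.norm_eq_abs]
    calc Real.exp (κ / 2 * |x|) * |g (|x|)|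
        ≤ Real.exp (κ / 2 * |x|) * (C * Real.exp (-κ * |x|)) := by
          gcongr
          exact hbound _ (abs_nonneg x)
      _ = C * Real.exp (-(κ / 2) * |x|) := by
          rw [mul_left_comm, ← Real.exp_add]
          ring_nf
  have hvanish := eq_zero_of_frequently_integral_cexp_mul_eq_zero (half_pos hκ) heven hint
    (hzero.mono fun ξ hξ => by
      rw [integral_comp_abs_smul_cexp (integrable_of_integrable_exp_mul_abs_mul
        (half_pos hκ).le heven.aestronglyMeasurable hint), hξ, Complex.ofReal_zero, mul_zero])
  intro t ht
  simpa [abs_of_nonneg (mem_Ici.1 ht)] using congrFun hvanish t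

section QuarterPlane

/-- The closed quarter plane `t, x ≥ 0` on which the wave problem is posed. -/
abbrev quarterPlane : Set (ℝ × ℝ) := Ici 0 ×ˢ Ici 0

/-- The partial derivative `∂ₜ u(t, x)` on the quarter plane, one-sided at `t = 0`. -/
noncomputable def timeDeriv (u : ℝ → ℝ → ℝ) (t x : ℝ) : ℝ :=
  derivWithin (fun s => u s x) (Ici 0) t

/-- The partial derivative `∂ₓ u(t, x)` on the quarter plane, one-sided at `x = 0`. -/
noncomputable def spaceDeriv (u : ℝ → ℝ → ℝ) (t x : ℝ) : ℝ :=
  derivWithin (fun y => u t y) (Ici 0) x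

variable {u : ℝ → ℝ → ℝ} {t x : ℝ}

theorem uniqueDiffOn_quarterPlane : UniqueDiffOn ℝ quarterPlane :=
  (uniqueDiffOn_Ici 0).prod (uniqueDiffOn_Ici 0)

theorem closure_interior_quarterPlane : closure (interior quarterPlane) = quarterPlane := by
  rw [interior_prod_eq, closure_prod_eq, interior_Ici, closure_Ioi]

theorem hasDerivWithinAt_time_of_hasFDerivWithinAt {L : ℝ × ℝ →L[ℝ] ℝ}
    (h : HasFDerivWithinAt (Function.uncurry u) L quarterPlane (t, x)) (hx : 0 ≤ x) :
    HasDerivWithinAt (fun s => u s x) (L (1, 0)) (Ici 0) t :=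
  have hmaps : MapsTo (fun s => (s, x)) (Ici 0) quarterPlane := fun _ hs => ⟨hs, hx⟩
  h.comp_hasDerivWithinAt (f := fun s => (s, x)) t
    ((hasDerivWithinAt_id t _).prodMk (hasDerivWithinAt_const t _ x)) hmaps

theorem hasDerivWithinAt_space_of_hasFDerivWithinAt {L : ℝ × ℝ →L[ℝ] ℝ}
    (h : HasFDerivWithinAt (Function.uncurry u) L quarterPlane (t, x)) (ht : 0 ≤ t) :
    HasDerivWithinAt (fun y => u t y) (L (0, 1)) (Ici 0) x :=
  have hmaps : MapsTo (fun y => (t, y)) (Ici 0) quarterPlane := fun _ hy => ⟨ht, hy⟩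
  h.comp_hasDerivWithinAt (f := fun y => (t, y)) x
    ((hasDerivWithinAt_const x _ t).prodMk (hasDerivWithinAt_id x _)) hmaps

theorem hasDerivWithinAt_timeDeriv (hu : DifferentiableOn ℝ (Function.uncurry u) quarterPlane)
    (ht : 0 ≤ t) (hx : 0 ≤ x) : HasDerivWithinAt (fun s => u s x) (timeDeriv u t x) (Ici 0) t :=
  (hasDerivWithinAt_time_of_hasFDerivWithinAt (hu (t, x) ⟨ht, hx⟩).hasFDerivWithinAt
    hx).differentiableWithinAt.hasDerivWithinAt

theorem hasDerivWithinAt_spaceDeriv (hu : DifferentiableOn ℝ (Function.uncurry u) quarterPlane)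
    (ht : 0 ≤ t) (hx : 0 ≤ x) : HasDerivWithinAt (fun y => u t y) (spaceDeriv u t x) (Ici 0) x :=
  (hasDerivWithinAt_space_of_hasFDerivWithinAt (hu (t, x) ⟨ht, hx⟩).hasFDerivWithinAt
    ht).differentiableWithinAt.hasDerivWithinAt

theorem fderivWithin_apply_one_zero (hu : DifferentiableOn ℝ (Function.uncurry u) quarterPlane) :
    EqOn (fun p => fderivWithin ℝ (Function.uncurry u) quarterPlane p (1, 0))
      (Function.uncurry (timeDeriv u)) quarterPlane := fun p hp =>
  ((hasDerivWithinAt_time_of_hasFDerivWithinAt (hu p hp).hasFDerivWithinAt hp.2).derivWithin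
    (uniqueDiffOn_Ici 0 _ hp.1)).symm

theorem fderivWithin_apply_zero_one (hu : DifferentiableOn ℝ (Function.uncurry u) quarterPlane) :
    EqOn (fun p => fderivWithin ℝ (Function.uncurry u) quarterPlane p (0, 1))
      (Function.uncurry (spaceDeriv u)) quarterPlane := fun p hp =>
  ((hasDerivWithinAt_space_of_hasFDerivWithinAt (hu p hp).hasFDerivWithinAt hp.1).derivWithin
    (uniqueDiffOn_Ici 0 _ hp.2)).symm

theorem fderivWithin_apply_eq_timeDeriv_add_spaceDeriv
    (hu : DifferentiableOn ℝ (Function.uncurry u) quarterPlane) {p : ℝ × ℝ}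
    (hp : p ∈ quarterPlane) (w : ℝ × ℝ) :
    fderivWithin ℝ (Function.uncurry u) quarterPlane p w =
      w.1 * timeDeriv u p.1 p.2 + w.2 * spaceDeriv u p.1 p.2 := by
  have hw : w = w.1 • (1, 0) + w.2 • (0, 1) := by ext <;> simp
  have htime := fderivWithin_apply_one_zero hu hp
  have hspace := fderivWithin_apply_zero_one hu hp
  simp only [Function.uncurry_def] at htime hspace ⊢
  conv_lhs => rw [hw, map_add, map_smul, map_smul, htime, hspace, smul_eq_mul, smul_eq_mul]

theorem contDiffOn_timeDeriv {n : ℕ}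
    (hu : ContDiffOn ℝ (n + 1) (Function.uncurry u) quarterPlane) :
    ContDiffOn ℝ n (Function.uncurry (timeDeriv u)) quarterPlane :=
  ((hu.fderivWithin uniqueDiffOn_quarterPlane le_rfl).clm_apply contDiffOn_const).congr
    (fderivWithin_apply_one_zero (hu.differentiableOn (by simp))).symm

theorem contDiffOn_spaceDeriv {n : ℕ}
    (hu : ContDiffOn ℝ (n + 1) (Function.uncurry u) quarterPlane) :
    ContDiffOn ℝ n (Function.uncurry (spaceDeriv u)) quarterPlane :=
  ((hu.fderivWithin uniqueDiffOn_quarterPlane le_rfl).clm_apply contDiffOn_const).congr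
    (fderivWithin_apply_zero_one (hu.differentiableOn (by simp))).symm

theorem spaceDeriv_timeDeriv_eq_timeDeriv_spaceDeriv
    (hu : ContDiffOn ℝ 2 (Function.uncurry u) quarterPlane) (ht : 0 ≤ t) (hx : 0 ≤ x) :
    spaceDeriv (timeDeriv u) t x = timeDeriv (spaceDeriv u) t x := by
  have hp : (t, x) ∈ quarterPlane := ⟨ht, hx⟩
  have hdiff := hu.differentiableOn two_ne_zero
  have hD : DifferentiableWithinAt ℝ (fderivWithin ℝ (Function.uncurry u) quarterPlane)
      quarterPlane (t, x) :=
    (hu.fderivWithin (m := 1) uniqueDiffOn_quarterPlane (by norm_num)).differentiableOn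
      one_ne_zero _ hp
  have hsymm := (hu (t, x) hp).isSymmSndFDerivWithinAt (by simp) uniqueDiffOn_quarterPlane
    (by rwa [closure_interior_quarterPlane]) hp
  have hspace := hasDerivWithinAt_space_of_hasFDerivWithinAt (u := timeDeriv u)
    ((hD.hasFDerivWithinAt.clm_apply (hasFDerivWithinAt_const (1, 0) _ _)).congr
      (fderivWithin_apply_one_zero hdiff).symm (fderivWithin_apply_one_zero hdiff hp).symm) ht
  have htime := hasDerivWithinAt_time_of_hasFDerivWithinAt (u := spaceDeriv u)
    ((hD.hasFDerivWithinAt.clm_apply (hasFDerivWithinAt_const (0, 1) _ _)).congr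
      (fderivWithin_apply_zero_one hdiff).symm (fderivWithin_apply_zero_one hdiff hp).symm) hx
  rw [spaceDeriv, hspace.derivWithin (uniqueDiffOn_Ici 0 _ hx), timeDeriv,
    htime.derivWithin (uniqueDiffOn_Ici 0 _ ht)]
  simpa using hsymm.eq (0, 1) (1, 0)

theorem derivWithin_derivWithin_Ici_eq_deriv_deriv {g : ℝ → ℝ} (ht : 0 < t) :
    derivWithin (derivWithin g (Ici 0)) (Ici 0) t = deriv (deriv g) t := by
  rw [derivWithin_of_mem_nhds (Ici_mem_nhds ht)]
  refine Filter.EventuallyEq.deriv_eq ?_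
  filter_upwards [Ioi_mem_nhds ht] with s hs
  exact derivWithin_of_mem_nhds (Ici_mem_nhds hs)

end QuarterPlane

section CosTransform

variable {g g' g'' : ℝ → ℝ} {k : ℝ → ℝ → ℝ} {E : ℝ → ℝ} {s t : Set ℝ} {a b : ℝ}

theorem integrableOn_cos_mul (hg : IntegrableOn g s) (ξ : ℝ) :
    IntegrableOn (fun t => Real.cos (ξ * t) * g t) s :=
  hg.bdd_mul (c := 1) (Continuous.aestronglyMeasurable (by fun_prop))
    (ae_of_all _ fun _ => Real.abs_cos_le_one _)

theorem cosTransform_congr {h : ℝ → ℝ} (hgh : EqOn g h (Ioi 0)) (ξ : ℝ) :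
    cosTransform g ξ = cosTransform h ξ :=
  setIntegral_congr_fun measurableSet_Ioi fun t ht => by simp only [hgh ht]

theorem cosTransform_sub {h : ℝ → ℝ} (hg : IntegrableOn g (Ioi 0)) (hh : IntegrableOn h (Ioi 0))
    (ξ : ℝ) : cosTransform (fun t => g t - h t) ξ = cosTransform g ξ - cosTransform h ξ := by
  simp only [cosTransform, mul_sub]
  exact integral_sub (integrableOn_cos_mul hg ξ) (integrableOn_cos_mul hh ξ)

theorem cosTransform_const_mul (r : ℝ) (g : ℝ → ℝ) (ξ : ℝ) :
    cosTransform (fun t => r * g t) ξ = r * cosTransform g ξ := by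
  simp only [cosTransform, mul_left_comm _ r, integral_const_mul]

theorem eq_zero_of_tendsto_of_tendsto_deriv {l L : ℝ} (hg : Tendsto g atTop (𝓝 l))
    (hg' : Tendsto g' atTop (𝓝 L)) (hderiv : ∀ᶠ t in atTop, HasDerivAt g (g' t) t) : L = 0 := by
  obtain ⟨T, hT⟩ := eventually_atTop.1 hderiv
  have mean_value (t : ℝ) : ∃ s, t ≤ s ∧ (T ≤ t → g' s = g (t + 1) - g t) := by
    by_cases ht : T ≤ t
    · obtain ⟨s, hs, hslope⟩ := exists_hasDerivAt_eq_slope g g' (lt_add_one t)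
        (fun s hs => (hT s (ht.trans hs.1)).continuousAt.continuousWithinAt)
        (fun s hs => hT s (ht.trans hs.1.le))
      exact ⟨s, hs.1.le, fun _ => by rw [hslope, add_sub_cancel_left, div_one]⟩
    · exact ⟨t, le_rfl, fun h => absurd h ht⟩
  choose σ hσ_ge hσ using mean_value
  have hσ_lim : Tendsto (fun t => g' (σ t)) atTop (𝓝 L) :=
    hg'.comp (tendsto_atTop_mono hσ_ge tendsto_id)
  have hincr : Tendsto (fun t => g (t + 1) - g t) atTop (𝓝 (l - l)) :=
    (hg.comp (tendsto_atTop_add_const_right _ 1 tendsto_id)).sub hg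
  rw [sub_self] at hincr
  refine tendsto_nhds_unique hσ_lim (hincr.congr' ?_)
  filter_upwards [eventually_ge_atTop T] with t ht using (hσ t ht).symm

theorem cosTransform_deriv_deriv (hg : ContinuousWithinAt g (Ici 0) 0)
    (hg' : ContinuousWithinAt g' (Ici 0) 0) (hderiv : ∀ t ∈ Ioi 0, HasDerivAt g (g' t) t)
    (hderiv' : ∀ t ∈ Ioi 0, HasDerivAt g' (g'' t) t) (hzero : g' 0 = 0)
    (hlim : Tendsto g atTop (𝓝 0)) (hint : IntegrableOn g (Ioi 0))
    (hint'' : IntegrableOn g'' (Ioi 0)) (ξ : ℝ) :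
    cosTransform g'' ξ = -ξ ^ 2 * cosTransform g ξ := by
  have hlim' : Tendsto g' atTop (𝓝 0) := by
    have hL := tendsto_limUnder_of_hasDerivAt_of_integrableOn_Ioi hderiv' hint''
    rwa [eq_zero_of_tendsto_of_tendsto_deriv hlim hL (eventually_gt_atTop 0 |>.mono hderiv)] at hL
  set Φ : ℝ → ℝ := fun t => Real.cos (ξ * t) * g' t + Real.sin (ξ * t) * (ξ * g t)
  have hΦ_deriv : ∀ t ∈ Ioi (0 : ℝ),
      HasDerivAt Φ (Real.cos (ξ * t) * g'' t + ξ ^ 2 * (Real.cos (ξ * t) * g t)) t := by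
    intro t ht
    have hphase : HasDerivAt (fun t => ξ * t) ξ t := hasDerivAt_const_mul ξ
    refine ((hphase.cos.mul (hderiv' t ht)).add
      (hphase.sin.mul ((hderiv t ht).const_mul ξ))).congr_deriv ?_
    ring
  have hΦ_cont : ContinuousWithinAt Φ (Ici 0) 0 :=
    (ContinuousWithinAt.mul (by fun_prop) hg').add
      (ContinuousWithinAt.mul (by fun_prop) (hg.const_mul ξ))
  have hΦ_lim : Tendsto Φ atTop (𝓝 0) := by
    have hcos := bdd_le_mul_tendsto_zero' (1 : ℝ)
      (Eventually.of_forall fun t => Real.abs_cos_le_one (ξ * t)) hlim'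
    have hsin := bdd_le_mul_tendsto_zero' (1 : ℝ)
      (Eventually.of_forall fun t => Real.abs_sin_le_one (ξ * t))
      (by simpa only [mul_zero] using hlim.const_mul ξ)
    simpa only [add_zero] using hcos.add hsin
  have hcos'' := integrableOn_cos_mul hint'' ξ
  have hcos := (integrableOn_cos_mul hint ξ).const_mul (ξ ^ 2)
  have hparts := integral_Ioi_of_hasDerivAt_of_tendsto hΦ_cont hΦ_deriv (hcos''.add hcos) hΦ_lim
  rw [integral_add hcos'' hcos, integral_const_mul] at hparts
  simp only [Φ, hzero, mul_zero, Real.sin_zero, zero_mul, add_zero, sub_zero] at hparts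
  rw [cosTransform, cosTransform]
  linarith

/-- The kernel `k(t, y)` is continuous on `[0, ∞) × s` and dominated there by an integrable
function `E` of time alone, so that its cosine transform in `t` may be studied as a function
of `y ∈ s`. -/
structure IsDominatedOn (k : ℝ → ℝ → ℝ) (E : ℝ → ℝ) (s : Set ℝ) : Prop where
  continuousOn : ContinuousOn (Function.uncurry k) (Ici 0 ×ˢ s)
  abs_le : ∀ t ∈ Ici (0 : ℝ), ∀ y ∈ s, |k t y| ≤ E t
  integrableOn : IntegrableOn E (Ioi 0)

namespace IsDominatedOn

theorem mono (h : IsDominatedOn k E t) (hst : s ⊆ t) : IsDominatedOn k E s :=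
  ⟨h.1.mono (prod_mono_right hst), fun t ht y hy => h.2 t ht y (hst hy), h.3⟩

theorem aestronglyMeasurable_time (h : IsDominatedOn k E s) {y : ℝ} (hy : y ∈ s) :
    AEStronglyMeasurable (fun t => k t y) (volume.restrict (Ioi 0)) :=
  (h.continuousOn.uncurry_right y hy).mono Ioi_subset_Ici_self |>.aestronglyMeasurable
    measurableSet_Ioi

theorem integrableOn_time (h : IsDominatedOn k E s) {y : ℝ} (hy : y ∈ s) :
    IntegrableOn (fun t => k t y) (Ioi 0) :=
  h.integrableOn.mono' (h.aestronglyMeasurable_time hy)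
    ((ae_restrict_iff' measurableSet_Ioi).2
      (ae_of_all _ fun t ht => h.abs_le t (Ioi_subset_Ici_self ht) y hy))

theorem continuousOn_cosTransform (h : IsDominatedOn k E s) (ξ : ℝ) :
    ContinuousOn (fun y => cosTransform (fun t => k t y) ξ) s := by
  refine continuousOn_of_dominated (bound := E) (fun y hy =>
    (Continuous.aestronglyMeasurable (by fun_prop)).mul (h.aestronglyMeasurable_time hy))
    (fun y hy => ?_) h.integrableOn ?_
  · refine (ae_restrict_iff' measurableSet_Ioi).2 (ae_of_all _ fun t ht => ?_)
    rw [norm_mul]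
    exact (mul_le_of_le_one_left (norm_nonneg _) (Real.abs_cos_le_one _)).trans
      (h.abs_le t (Ioi_subset_Ici_self ht) y hy)
  · exact (ae_restrict_iff' measurableSet_Ioi).2 (ae_of_all _ fun t ht =>
      (h.continuousOn.uncurry_left t (Ioi_subset_Ici_self ht)).const_mul _)

theorem cosTransform_intervalIntegral (h : IsDominatedOn k E (Icc a b)) (hab : a ≤ b) (ξ : ℝ) :
    cosTransform (fun t => ∫ y in a..b, k t y) ξ =
      ∫ y in a..b, cosTransform (fun t => k t y) ξ := by
  have hcont : ContinuousOn (fun p : ℝ × ℝ => Real.cos (ξ * p.1) * k p.1 p.2)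
      (Ioi 0 ×ˢ Ioc a b) :=
    ContinuousOn.mul (by fun_prop)
      (h.continuousOn.mono (prod_mono Ioi_subset_Ici_self Ioc_subset_Icc_self))
  have hint : Integrable (Function.uncurry fun t y => Real.cos (ξ * t) * k t y)
      ((volume.restrict (Ioi 0)).prod (volume.restrict (Ioc a b))) := by
    have hdom : Integrable (fun p : ℝ × ℝ => E p.1 * 1)
        ((volume.restrict (Ioi 0)).prod (volume.restrict (Ioc a b))) :=
      h.integrableOn.mul_prod (integrable_const 1)
    refine hdom.mono' ?_ ?_
    · rw [Measure.prod_restrict]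
      exact hcont.aestronglyMeasurable (measurableSet_Ioi.prod measurableSet_Ioc)
    · rw [Measure.prod_restrict]
      refine (ae_restrict_iff' (measurableSet_Ioi.prod measurableSet_Ioc)).2
        (ae_of_all _ fun p hp => ?_)
      rw [Function.uncurry_def, norm_mul, mul_one]
      exact (mul_le_of_le_one_left (norm_nonneg _) (Real.abs_cos_le_one _)).trans
        (h.abs_le _ (Ioi_subset_Ici_self hp.1) _ (Ioc_subset_Icc_self hp.2))
  simp only [cosTransform, intervalIntegral.integral_of_le hab, ← integral_const_mul]
  exact integral_integral_swap hint

theorem mul_right (h : IsDominatedOn k E s) {m : ℝ → ℝ} {M : ℝ} (hm : ContinuousOn m s)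
    (hM : ∀ y ∈ s, |m y| ≤ M) : IsDominatedOn (fun t y => m y * k t y) (fun t => M * E t) s where
  continuousOn := (hm.comp continuousOn_snd fun _ hp => hp.2).mul h.continuousOn
  abs_le t ht y hy := by
    rw [abs_mul]
    exact mul_le_mul (hM y hy) (h.abs_le t ht y hy) (abs_nonneg _) ((abs_nonneg _).trans (hM y hy))
  integrableOn := h.integrableOn.const_mul M

end IsDominatedOn

end CosTransform

section ParametricIntegral

variable {k k' : ℝ → ℝ → ℝ} {U : Set ℝ} {a b t : ℝ}

theorem continuousOn_intervalIntegral_of_continuousOn (hab : a ≤ b)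
    (hk : ContinuousOn (Function.uncurry k) (U ×ˢ Icc a b)) :
    ContinuousOn (fun t => ∫ y in a..b, k t y) U := by
  have hext : Continuous (Function.uncurry fun (t : U) y => k t (projIcc a b hab y)) :=
    hk.comp_continuous (f := fun p : U × ℝ => ((p.1 : ℝ), (projIcc a b hab p.2 : ℝ)))
      (by fun_prop) fun p => ⟨p.1.2, (projIcc a b hab p.2).2⟩
  refine continuousOn_iff_continuous_domRestrict.2
    ((intervalIntegral.continuous_parametric_intervalIntegral_of_continuous' hext a b).congr
      fun t => intervalIntegral.integral_congr fun y hy => ?_)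
  rw [uIcc_of_le hab] at hy
  simp only [projIcc_of_mem hab hy]

theorem hasDerivAt_intervalIntegral_of_continuousOn (hab : a ≤ b) (hU : U ∈ 𝓝 t)
    (hk : ContinuousOn (Function.uncurry k) (U ×ˢ Icc a b))
    (hk' : ContinuousOn (Function.uncurry k') (U ×ˢ Icc a b))
    (hderiv : ∀ s ∈ U, ∀ y ∈ Icc a b, HasDerivAt (fun s => k s y) (k' s y) s) :
    HasDerivAt (fun s => ∫ y in a..b, k s y) (∫ y in a..b, k' t y) t := by
  obtain ⟨V, hV, hVU, hVc⟩ := local_compact_nhds hU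
  obtain ⟨M, hM⟩ := (hVc.prod isCompact_Icc).exists_bound_of_continuousOn
    (hk'.mono (prod_mono_left hVU))
  have htU := mem_of_mem_nhds hU
  have hslice {m : ℝ → ℝ → ℝ} (hm : ContinuousOn (Function.uncurry m) (U ×ˢ Icc a b)) {s : ℝ}
      (hs : s ∈ U) : ContinuousOn (m s) (uIcc a b) := by
    rw [uIcc_of_le hab]
    exact hm.uncurry_left s hs
  refine (intervalIntegral.hasDerivAt_integral_of_dominated_loc_of_deriv_le (bound := fun _ => M)
    hV ?_ (hslice hk htU).intervalIntegrable ?_ ?_ intervalIntegrable_const ?_).2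
  · filter_upwards [hU] with s hs
    exact (hslice hk hs).intervalIntegrable.aestronglyMeasurable_restrict_uIoc
  · exact (hslice hk' htU).intervalIntegrable.aestronglyMeasurable_restrict_uIoc
  · refine ae_of_all _ fun y hy s hs => hM (s, y) ⟨hs, ?_⟩
    exact uIcc_of_le hab ▸ uIoc_subset_uIcc hy
  · refine ae_of_all _ fun y hy s hs => hderiv s (hVU hs) y ?_
    exact uIcc_of_le hab ▸ uIoc_subset_uIcc hy

end ParametricIntegral

section WaveSpeed

/-- A continuous, positive wave speed on `[0, ∞)`, equal to `c0` to the right of the boundary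
region `[0, 1]`: the form of `IsWaveSpeed` without second derivatives, which also leaves the value
at `0` free. -/
structure IsContinuousWaveSpeed (c0 : ℝ) (c : ℝ → ℝ) : Prop where
  continuousOn : ContinuousOn c (Ici 0)
  pos : ∀ x ∈ Ici (0 : ℝ), 0 < c x
  eq_const : ∀ x ∈ Ici (1 : ℝ), c x = c0

/-- The coefficient `-ξ² / c(x)²` for which the equation `-c² y'' = ξ² y` at frequency `ξ` reads
`y'' = q y`. -/
noncomputable def helmholtzCoeff (c : ℝ → ℝ) (ξ x : ℝ) : ℝ := -ξ ^ 2 * (c x ^ 2)⁻¹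

variable {c0 : ℝ} {c : ℝ → ℝ}

theorem IsWaveSpeed.isContinuousWaveSpeed (hc : IsWaveSpeed c0 c) : IsContinuousWaveSpeed c0 c :=
  ⟨hc.1.continuousOn, hc.2.1, fun x hx =>
    hc.2.2 x (Ici_subset_Ici.2 zero_le_one hx) fun h => h.2.not_ge hx⟩

namespace IsContinuousWaveSpeed

theorem const_pos (hc : IsContinuousWaveSpeed c0 c) : 0 < c0 :=
  hc.eq_const 1 self_mem_Ici ▸ hc.pos 1 (zero_le_one (α := ℝ))

theorem continuousOn_inv_sq (hc : IsContinuousWaveSpeed c0 c) :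
    ContinuousOn (fun x => (c x ^ 2)⁻¹) (Ici 0) :=
  (hc.continuousOn.pow 2).inv₀ fun x hx => (pow_pos (hc.pos x hx) 2).ne'

theorem continuousOn_helmholtzCoeff (hc : IsContinuousWaveSpeed c0 c) (ξ : ℝ) :
    ContinuousOn (helmholtzCoeff c ξ) (Ici 0) :=
  hc.continuousOn_inv_sq.const_mul _

theorem tendstoUniformlyOn_helmholtzCoeff (hc : IsContinuousWaveSpeed c0 c) (ξ₀ b : ℝ) :
    TendstoUniformlyOn (helmholtzCoeff c) (helmholtzCoeff c ξ₀) (𝓝 ξ₀) (Icc 0 b) := by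
  have hcont : ContinuousOn (Function.uncurry (helmholtzCoeff c)) (univ ×ˢ Icc 0 b) :=
    ContinuousOn.mul (by fun_prop)
      (hc.continuousOn_inv_sq.comp continuousOn_snd fun p hp => hp.2.1)
  intro V hV
  obtain ⟨U, hU, hUV⟩ := isCompact_Icc.mem_uniformity_of_prod hcont (mem_univ ξ₀)
    (tendsto_swap_uniformity hV)
  exact mem_of_superset (nhdsWithin_univ ξ₀ ▸ hU) hUV

end IsContinuousWaveSpeed

end WaveSpeed

section WaveEquation

variable {c f : ℝ → ℝ} {u w : ℝ → ℝ → ℝ} {a c0 t x : ℝ}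

theorem intervalIntegral_spaceDeriv (hw : ContDiffOn ℝ 1 (Function.uncurry w) quarterPlane)
    (ht : 0 ≤ t) (hx : 0 ≤ x) : ∫ y in 0..x, spaceDeriv w t y = w t x - w t 0 := by
  have hderiv (y : ℝ) (hy : 0 ≤ y) : HasDerivWithinAt (w t) (spaceDeriv w t y) (Ici 0) y :=
    hasDerivWithinAt_spaceDeriv (hw.differentiableOn one_ne_zero) ht hy
  have hcont : ContinuousOn (Function.uncurry (spaceDeriv w)) quarterPlane :=
    (contDiffOn_spaceDeriv (n := 0) (by simpa using hw)).continuousOn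
  refine intervalIntegral.integral_eq_sub_of_hasDerivAt_of_le hx
    (fun y hy => (hderiv y hy.1).continuousWithinAt.mono Icc_subset_Ici_self)
    (fun y hy => (hderiv y hy.1.le).hasDerivAt (Ici_mem_nhds hy.1)) ?_
  refine ContinuousOn.intervalIntegrable_of_Icc hx ?_
  exact (hcont.uncurry_left t ht).mono Icc_subset_Ici_self

theorem hasDerivWithinAt_along_curve (hw : DifferentiableOn ℝ (Function.uncurry w) quarterPlane)
    {γ : ℝ → ℝ × ℝ} {γ' : ℝ × ℝ} {s : Set ℝ} {r : ℝ} (hγ : HasDerivWithinAt γ γ' s r)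
    (hmaps : MapsTo γ s quarterPlane) (hr : r ∈ s) :
    HasDerivWithinAt (fun r => w (γ r).1 (γ r).2)
      (γ'.1 * timeDeriv w (γ r).1 (γ r).2 + γ'.2 * spaceDeriv w (γ r).1 (γ r).2) s r := by
  rw [← fderivWithin_apply_eq_timeDeriv_add_spaceDeriv hw (hmaps hr)]
  exact (hw _ (hmaps hr)).hasFDerivWithinAt.comp_hasDerivWithinAt r hγ hmaps

namespace IsWaveSolution

theorem differentiableOn (h : IsWaveSolution c f u) :
    DifferentiableOn ℝ (Function.uncurry u) quarterPlane :=
  h.1.differentiableOn two_ne_zero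

theorem contDiffOn_timeDeriv (h : IsWaveSolution c f u) :
    ContDiffOn ℝ 1 (Function.uncurry (timeDeriv u)) quarterPlane :=
  _root_.contDiffOn_timeDeriv (n := 1) (by simpa [one_add_one_eq_two] using h.1)

theorem contDiffOn_spaceDeriv (h : IsWaveSolution c f u) :
    ContDiffOn ℝ 1 (Function.uncurry (spaceDeriv u)) quarterPlane :=
  _root_.contDiffOn_spaceDeriv (n := 1) (by simpa [one_add_one_eq_two] using h.1)

theorem timeDeriv_timeDeriv (h : IsWaveSolution c f u) (ht : 0 < t) (hx : 0 < x) :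
    timeDeriv (timeDeriv u) t x = c x ^ 2 * spaceDeriv (spaceDeriv u) t x :=
  (derivWithin_derivWithin_Ici_eq_deriv_deriv ht).trans ((h.2.1 t ht x hx).trans
    (congrArg _ (derivWithin_derivWithin_Ici_eq_deriv_deriv hx).symm))

theorem timeDeriv_zero (h : IsWaveSolution c f u) (hx : 0 ≤ x) : timeDeriv u 0 x = 0 :=
  h.2.2.2.1 x hx

theorem spaceDeriv_zero_of_eqOn (h : IsWaveSolution c f u) (ha : 0 ≤ a)
    (hf : ∀ y ∈ Ici a, f y = 0) (hx : a < x) : spaceDeriv u 0 x = 0 := by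
  have hzero : (fun y => u 0 y) =ᶠ[𝓝 x] fun _ => 0 := by
    filter_upwards [Ici_mem_nhds hx] with y hy
    rw [h.2.2.1 y (ha.trans hy), hf y hy]
  rw [spaceDeriv, derivWithin_of_mem_nhds (Ici_mem_nhds (ha.trans_lt hx)), hzero.deriv_eq,
    deriv_const]

/-- `∂ₜu + c0 ∂ₓu` is constant along the characteristic `s ↦ (t - s, a + c0 s)`, which reaches the
initial line to the right of the support of `f`. -/
theorem timeDeriv_add_mul_spaceDeriv_eq_zero (h : IsWaveSolution c f u) (hc0 : 0 < c0)
    (ha : 0 < a) (hc : ∀ y ∈ Ici a, c y = c0) (hf : ∀ y ∈ Ici a, f y = 0) (ht : 0 < t) :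
    timeDeriv u t a + c0 * spaceDeriv u t a = 0 := by
  set γ : ℝ → ℝ × ℝ := fun s => (t - s, a + c0 * s)
  have hγ_maps : MapsTo γ (Icc 0 t) quarterPlane := fun s hs =>
    ⟨sub_nonneg.2 hs.2, add_nonneg ha.le (mul_nonneg hc0.le hs.1)⟩
  have hγ_deriv (s : ℝ) : HasDerivWithinAt γ (-1, c0) (Icc 0 t) s :=
    (((hasDerivAt_id s).const_sub t).prodMk
      ((hasDerivAt_const_mul c0).const_add a)).hasDerivWithinAt
  have hderiv {s : ℝ} (hs : s ∈ Icc 0 t) :=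
    (hasDerivWithinAt_along_curve (h.contDiffOn_timeDeriv.differentiableOn one_ne_zero)
      (hγ_deriv s) hγ_maps hs).add
    ((hasDerivWithinAt_along_curve (h.contDiffOn_spaceDeriv.differentiableOn one_ne_zero)
      (hγ_deriv s) hγ_maps hs).const_mul c0)
  have hconst := constant_of_has_deriv_right_zero
    (fun s hs => (hderiv hs).continuousWithinAt) (fun s hs => ?_) t (right_mem_Icc.2 ht.le)
  · have hat : a < a + c0 * t := lt_add_of_pos_right a (mul_pos hc0 ht)
    simpa [γ, h.timeDeriv_zero (ha.trans hat).le, h.spaceDeriv_zero_of_eqOn ha.le hf hat]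
      using hconst.symm
  · have hs' := Ico_subset_Icc_self hs
    refine ((hderiv hs').mono_of_mem_nhdsWithin (Icc_mem_nhdsGE_of_mem hs)).congr_deriv ?_
    have has : a ≤ a + c0 * s := le_add_of_nonneg_right (mul_nonneg hc0.le hs.1)
    simp only [γ, h.timeDeriv_timeDeriv (sub_pos.2 hs.2) (ha.trans_le has), hc _ has,
      spaceDeriv_timeDeriv_eq_timeDeriv_spaceDeriv h.1 (hγ_maps hs').1 (hγ_maps hs').2]
    ring

theorem spaceDeriv_eq_of_eq {c₂ f₂ : ℝ → ℝ} {u₂ : ℝ → ℝ → ℝ} (h : IsWaveSolution c f u)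
    (h₂ : IsWaveSolution c₂ f₂ u₂) (hc0 : 0 < c0) (ha : 0 < a) (hc : ∀ y ∈ Ici a, c y = c0)
    (hc₂ : ∀ y ∈ Ici a, c₂ y = c0) (hf : ∀ y ∈ Ici a, f y = 0) (hf₂ : ∀ y ∈ Ici a, f₂ y = 0)
    (heq : ∀ s ∈ Ici (0 : ℝ), u s a = u₂ s a) (ht : 0 < t) :
    spaceDeriv u t a = spaceDeriv u₂ t a := by
  have htime : timeDeriv u t a = timeDeriv u₂ t a := derivWithin_congr heq (heq t ht.le)
  have hout := h.timeDeriv_add_mul_spaceDeriv_eq_zero hc0 ha hc hf ht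
  have hout₂ := h₂.timeDeriv_add_mul_spaceDeriv_eq_zero hc0 ha hc₂ hf₂ ht
  refine mul_left_cancel₀ hc0.ne' ?_
  linarith

end IsWaveSolution

end WaveEquation

section FrequencyDomain

variable {c f m E : ℝ → ℝ} {u w : ℝ → ℝ → ℝ} {c0 t x a b : ℝ}

theorem hasDerivWithinAt_of_eq_add_intervalIntegral {Y F : ℝ → ℝ} (hF : ContinuousOn F (Icc a b))
    (hY : ∀ x ∈ Icc a b, Y x = Y a + ∫ y in a..x, F y) (hx : x ∈ Icc a b) :
    HasDerivWithinAt Y (F x) (Icc a b) x := by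
  have : Fact (x ∈ Icc a b) := ⟨hx⟩
  refine HasDerivWithinAt.congr (HasDerivWithinAt.const_add (Y a) ?_) hY (hY x hx)
  exact intervalIntegral.integral_hasDerivWithinAt_right
    ((hF.mono (Icc_subset_Icc_right hx.2)).intervalIntegrable_of_Icc hx.1)
    (hF.stronglyMeasurableAtFilter_nhdsWithin measurableSet_Icc x) (hF x hx)

theorem continuousOn_mul_uncurry (hm : ContinuousOn m (Icc 0 x))
    (hw : ContinuousOn (Function.uncurry w) quarterPlane) :
    ContinuousOn (Function.uncurry fun t y => m y * w t y) (Ici 0 ×ˢ Icc 0 x) :=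
  (hm.comp continuousOn_snd fun _ hp => hp.2).mul
    (hw.mono (prod_mono_right Icc_subset_Ici_self))

theorem hasDerivAt_weightedIntegral (hm : ContinuousOn m (Icc 0 x))
    (hw : ContDiffOn ℝ 1 (Function.uncurry w) quarterPlane) (hx : 0 ≤ x) (ht : 0 < t) :
    HasDerivAt (fun s => ∫ y in 0..x, m y * w s y) (∫ y in 0..x, m y * timeDeriv w t y) t := by
  have hw' : ContinuousOn (Function.uncurry (timeDeriv w)) quarterPlane :=
    (contDiffOn_timeDeriv (n := 0) (by simpa using hw)).continuousOn
  have hrestrict {k : ℝ → ℝ → ℝ} (hk : ContinuousOn (Function.uncurry k) quarterPlane) :=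
    (continuousOn_mul_uncurry hm hk).mono (prod_mono_left Ioi_subset_Ici_self)
  refine hasDerivAt_intervalIntegral_of_continuousOn hx (Ioi_mem_nhds ht)
    (hrestrict hw.continuousOn) (hrestrict hw') fun s hs y hy => ?_
  exact ((hasDerivWithinAt_timeDeriv (hw.differentiableOn one_ne_zero)
    (Ioi_subset_Ici_self hs) hy.1).hasDerivAt (Ici_mem_nhds hs)).const_mul (m y)

theorem IsDominatedOn.abs_intervalIntegral_le (h : IsDominatedOn w E (Icc a b)) (hab : a ≤ b)
    (ht : 0 ≤ t) : |∫ y in a..b, w t y| ≤ E t * (b - a) := by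
  rw [← abs_of_nonneg (sub_nonneg.2 hab)]
  exact intervalIntegral.norm_integral_le_of_norm_le_const (f := w t) (C := E t) fun y hy =>
    h.abs_le t ht y (Ioc_subset_Icc_self (uIoc_of_le hab ▸ hy))

theorem IsDominatedOn.integrableOn_intervalIntegral (h : IsDominatedOn w E (Icc a b))
    (hab : a ≤ b) : IntegrableOn (fun t => ∫ y in a..b, w t y) (Ioi 0) :=
  (h.integrableOn.mul_const (b - a)).mono'
    (((continuousOn_intervalIntegral_of_continuousOn hab h.continuousOn).mono
      Ioi_subset_Ici_self).aestronglyMeasurable measurableSet_Ioi)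
    ((ae_restrict_iff' measurableSet_Ioi).2
      (ae_of_all _ fun _ ht => h.abs_intervalIntegral_le hab (Ioi_subset_Ici_self ht)))

theorem IsDominatedOn.tendsto_intervalIntegral (h : IsDominatedOn w E (Icc a b)) (hab : a ≤ b)
    (hE : Tendsto E atTop (𝓝 0)) : Tendsto (fun t => ∫ y in a..b, w t y) atTop (𝓝 0) := by
  refine squeeze_zero_norm' ?_ (by simpa only [zero_mul] using hE.mul_const (b - a))
  filter_upwards [eventually_ge_atTop 0] with t ht using h.abs_intervalIntegral_le hab ht

/-- `u` and `∂ₓu` are dominated, uniformly over the boundary region `[0, 1]`, by an integrable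
function of time tending to zero: the form of `DecaysExp` in which the rate of decay is left
open. -/
def DecaysIntegrably (u : ℝ → ℝ → ℝ) : Prop :=
  ∃ E : ℝ → ℝ, IntegrableOn E (Ioi 0) ∧ Tendsto E atTop (𝓝 0) ∧
    ∀ t ∈ Ici (0 : ℝ), ∀ x ∈ Icc (0 : ℝ) 1, |u t x| + |spaceDeriv u t x| ≤ E t

theorem DecaysExp.decaysIntegrably (hu : DecaysExp u) : DecaysIntegrably u := by
  obtain ⟨C, -, κ, hκ, hbound⟩ := hu
  refine ⟨fun t => C * Real.exp (-κ * t), (exp_neg_integrableOn_Ioi 0 hκ).const_mul C, ?_, hbound⟩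
  have hexp : Tendsto (fun t => Real.exp (-κ * t)) atTop (𝓝 0) :=
    Real.tendsto_exp_atBot.comp (tendsto_id.const_mul_atTop_of_neg (neg_lt_zero.2 hκ))
  simpa only [mul_zero] using hexp.const_mul C

namespace IsWaveSolution

theorem exists_isDominatedOn (h : IsWaveSolution c f u) (hu : DecaysIntegrably u) :
    ∃ E, Tendsto E atTop (𝓝 0) ∧ IsDominatedOn u E (Icc 0 1) ∧
      IsDominatedOn (spaceDeriv u) E (Icc 0 1) := by
  obtain ⟨E, hE, hE_lim, hbound⟩ := hu
  have hsub : (Ici 0 ×ˢ Icc 0 1 : Set (ℝ × ℝ)) ⊆ quarterPlane :=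
    prod_mono_right Icc_subset_Ici_self
  exact ⟨E, hE_lim,
    ⟨h.1.continuousOn.mono hsub, fun t ht y hy =>
      (le_add_of_nonneg_right (abs_nonneg _)).trans (hbound t ht y hy), hE⟩,
    ⟨h.contDiffOn_spaceDeriv.continuousOn.mono hsub, fun t ht y hy =>
      (le_add_of_nonneg_left (abs_nonneg _)).trans (hbound t ht y hy), hE⟩⟩

theorem intervalIntegral_inv_sq_mul_timeDeriv_timeDeriv (h : IsWaveSolution c f u)
    (hc : IsContinuousWaveSpeed c0 c) (ht : 0 < t) (hx : 0 ≤ x) :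
    ∫ y in 0..x, (c y ^ 2)⁻¹ * timeDeriv (timeDeriv u) t y =
      spaceDeriv u t x - spaceDeriv u t 0 := by
  rw [← intervalIntegral_spaceDeriv h.contDiffOn_spaceDeriv ht.le hx]
  refine intervalIntegral.integral_congr_Ioo_of_le hx fun y hy => ?_
  have hcy := pow_pos (hc.pos y hy.1.le) 2
  simp only [h.timeDeriv_timeDeriv ht hy.1, inv_mul_cancel_left₀ hcy.ne']

theorem cosTransform_eq_intervalIntegral (h : IsWaveSolution c f u) (hu : DecaysIntegrably u)
    (ξ : ℝ) (hx : x ∈ Icc (0 : ℝ) 1) :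
    cosTransform (fun t => u t x) ξ =
      ∫ y in 0..x, cosTransform (fun t => spaceDeriv u t y) ξ := by
  obtain ⟨E, -, -, hE⟩ := h.exists_isDominatedOn hu
  rw [← (hE.mono (Icc_subset_Icc_right hx.2)).cosTransform_intervalIntegral hx.1]
  refine cosTransform_congr (fun t ht => ?_) ξ
  have ht' := Ioi_subset_Ici_self ht
  simp only [intervalIntegral_spaceDeriv (h.1.of_le one_le_two) ht' hx.1, h.2.2.2.2 t ht', sub_zero]

theorem cosTransform_spaceDeriv_eq_add_intervalIntegral (h : IsWaveSolution c f u)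
    (hc : IsContinuousWaveSpeed c0 c) (hu : DecaysIntegrably u) (ξ : ℝ) (hx : x ∈ Icc (0 : ℝ) 1) :
    cosTransform (fun t => spaceDeriv u t x) ξ = cosTransform (fun t => spaceDeriv u t 0) ξ +
      ∫ y in 0..x, helmholtzCoeff c ξ y * cosTransform (fun t => u t y) ξ := by
  obtain ⟨E, hE, hEu, hEux⟩ := h.exists_isDominatedOn hu
  have hm : ContinuousOn (fun y => (c y ^ 2)⁻¹) (Icc 0 x) :=
    hc.continuousOn_inv_sq.mono Icc_subset_Ici_self
  obtain ⟨M, hM⟩ := isCompact_Icc.exists_bound_of_continuousOn hm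
  have hdom := (hEu.mono (Icc_subset_Icc_right hx.2)).mul_right hm hM
  have hintX := hEux.integrableOn_time hx
  have hint0 := hEux.integrableOn_time (left_mem_Icc.2 zero_le_one)
  have hcont {w : ℝ → ℝ → ℝ} (hw : ContinuousOn (Function.uncurry w) quarterPlane) :=
    continuousOn_intervalIntegral_of_continuousOn hx.1 (continuousOn_mul_uncurry hm hw) 0
      self_mem_Ici
  have hrest : ∫ y in 0..x, (c y ^ 2)⁻¹ * timeDeriv u 0 y = 0 := by
    refine intervalIntegral.integral_zero_ae (ae_of_all _ fun y hy => ?_)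
    rw [h.timeDeriv_zero (uIoc_of_le hx.1 ▸ hy).1.le, mul_zero]
  have hparts := cosTransform_deriv_deriv (hcont h.1.continuousOn)
    (hcont h.contDiffOn_timeDeriv.continuousOn)
    (fun t ht => hasDerivAt_weightedIntegral hm (h.1.of_le one_le_two) hx.1 ht)
    (fun t ht => (hasDerivAt_weightedIntegral hm h.contDiffOn_timeDeriv hx.1 ht).congr_deriv
      (h.intervalIntegral_inv_sq_mul_timeDeriv_timeDeriv hc ht hx.1))
    hrest
    (hdom.tendsto_intervalIntegral hx.1 (by simpa only [mul_zero] using hE.const_mul M))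
    (hdom.integrableOn_intervalIntegral hx.1) (hintX.sub hint0) ξ
  rw [cosTransform_sub hintX hint0, hdom.cosTransform_intervalIntegral hx.1,
    ← intervalIntegral.integral_const_mul] at hparts
  simp only [helmholtzCoeff, mul_assoc, ← cosTransform_const_mul]
  simp only [← cosTransform_const_mul] at hparts
  linarith

theorem isLinearODESolution_cosTransform (h : IsWaveSolution c f u)
    (hc : IsContinuousWaveSpeed c0 c) (hu : DecaysIntegrably u) (ξ : ℝ) :
    IsLinearODESolution (helmholtzCoeff c ξ) (fun x => cosTransform (fun t => u t x) ξ)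
      (fun x => cosTransform (fun t => spaceDeriv u t x) ξ) (Icc 0 1) := by
  obtain ⟨E, -, hEu, hEux⟩ := h.exists_isDominatedOn hu
  refine ⟨fun x hx => hasDerivWithinAt_of_eq_add_intervalIntegral
    (hEux.continuousOn_cosTransform ξ) (fun x hx => ?_) hx,
    fun x hx => hasDerivWithinAt_of_eq_add_intervalIntegral
    (((hc.continuousOn_helmholtzCoeff ξ).mono Icc_subset_Ici_self).mul
      (hEu.continuousOn_cosTransform ξ)) (fun x hx =>
        h.cosTransform_spaceDeriv_eq_add_intervalIntegral hc hu ξ hx) hx⟩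
  rw [h.cosTransform_eq_intervalIntegral hu ξ (left_mem_Icc.2 zero_le_one),
    intervalIntegral.integral_same, zero_add, h.cosTransform_eq_intervalIntegral hu ξ hx]

end IsWaveSolution

end FrequencyDomain

section RegularSolution

variable {c c₁ c₂ f : ℝ → ℝ} {u : ℝ → ℝ → ℝ} {y y' : ℝ → ℝ} {ψ ψ' ψ₁ ψ₁' ψ₂ ψ₂' : ℝ → ℝ → ℝ}
  {v : ℂ → ℝ → ℂ} {c0 ξ ξ₀ x : ℝ}

/-- `ψ ξ` is, for every real frequency `ξ`, the real solution of `-c² y'' = ξ² y` on `[0, ∞)` with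
`y(0) = 0` and `y'(0) = 1`, and `ψ' ξ` is its derivative: the restriction of `v_c` to real
frequencies. -/
structure IsRegularSolution (c : ℝ → ℝ) (ψ ψ' : ℝ → ℝ → ℝ) : Prop where
  isLinearODESolution : ∀ ξ, IsLinearODESolution (helmholtzCoeff c ξ) (ψ ξ) (ψ' ξ) (Ici 0)
  apply_zero : ∀ ξ, ψ ξ 0 = 0
  deriv_apply_zero : ∀ ξ, ψ' ξ 0 = 1

theorem exists_ne_zero_eq_mul_of_mul_eq_mul {K : Type*} [Field K] {p r : K × K} (hp : p ≠ 0)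
    (hr : r ≠ 0) (h : p.1 * r.2 = p.2 * r.1) : ∃ ρ ≠ 0, r.1 = ρ * p.1 ∧ r.2 = ρ * p.2 := by
  obtain ⟨ρ, hρ⟩ : ∃ ρ, r = ρ • p := by
    by_cases hp₁ : p.1 = 0
    · have hp₂ : p.2 ≠ 0 := fun hp₂ => hp (Prod.ext hp₁ hp₂)
      refine ⟨r.2 / p.2, Prod.ext ?_ (div_mul_cancel₀ _ hp₂).symm⟩
      simpa [hp₁, hp₂] using h
    · refine ⟨r.1 / p.1, Prod.ext (div_mul_cancel₀ _ hp₁).symm ?_⟩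
      rw [Prod.smul_snd, smul_eq_mul, div_mul_eq_mul_div, eq_div_iff hp₁]
      linear_combination h
  exact ⟨ρ, fun hρ0 => hr (by rw [hρ, hρ0, zero_smul]), congrArg Prod.fst hρ, congrArg Prod.snd hρ⟩

namespace IsRegularSolution

theorem tendsto_phase (hψ : IsRegularSolution c ψ ψ') (hc : IsContinuousWaveSpeed c0 c)
    (hx : 0 ≤ x) :
    Tendsto (fun ξ => (ψ ξ x, ψ' ξ x)) (𝓝 ξ₀) (𝓝 (ψ ξ₀ x, ψ' ξ₀ x)) :=
  IsLinearODESolution.tendsto_phase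
    ((hc.continuousOn_helmholtzCoeff ξ₀).mono Icc_subset_Ici_self)
    (hc.tendstoUniformlyOn_helmholtzCoeff ξ₀ x)
    (fun ξ => (hψ.isLinearODESolution ξ).mono Icc_subset_Ici_self)
    ((hψ.isLinearODESolution ξ₀).mono Icc_subset_Ici_self)
    (fun ξ => (hψ.apply_zero ξ).trans (hψ.apply_zero ξ₀).symm)
    (fun ξ => (hψ.deriv_apply_zero ξ).trans (hψ.deriv_apply_zero ξ₀).symm) ⟨hx, le_rfl⟩

theorem phase_ne_zero (hψ : IsRegularSolution c ψ ψ') (hc : IsContinuousWaveSpeed c0 c)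
    (hx : 0 ≤ x) : (ψ ξ x, ψ' ξ x) ≠ 0 := by
  intro hzero
  have heq := IsLinearODESolution.eqOn_phase_of_eq_right
    ((hc.continuousOn_helmholtzCoeff ξ).mono Icc_subset_Ici_self)
    ((hψ.isLinearODESolution ξ).mono Icc_subset_Ici_self) IsLinearODESolution.zero
    (congrArg Prod.fst hzero) (congrArg Prod.snd hzero) (left_mem_Icc.2 hx)
  exact one_ne_zero ((hψ.deriv_apply_zero ξ).symm.trans (congrArg Prod.snd heq))

theorem eqOn_phase_of_apply_zero (hψ : IsRegularSolution c ψ ψ')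
    (hc : IsContinuousWaveSpeed c0 c) {b : ℝ}
    (hy : IsLinearODESolution (helmholtzCoeff c ξ) y y' (Icc 0 b)) (hy0 : y 0 = 0) :
    EqOn (fun x => (y x, y' x)) (fun x => (y' 0 * ψ ξ x, y' 0 * ψ' ξ x)) (Icc 0 b) :=
  hy.eqOn_phase_of_eq_left ((hc.continuousOn_helmholtzCoeff ξ).mono Icc_subset_Ici_self)
    (((hψ.isLinearODESolution ξ).mono Icc_subset_Ici_self).const_smul (y' 0))
    (by simp [hy0, hψ.apply_zero]) (by simp [hψ.deriv_apply_zero])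

theorem eq_mul_of_eq_mul_at_one (hψ₁ : IsRegularSolution c₁ ψ₁ ψ₁')
    (hψ₂ : IsRegularSolution c₂ ψ₂ ψ₂') (hc₁ : IsContinuousWaveSpeed c0 c₁)
    (hc₂ : IsContinuousWaveSpeed c0 c₂) {ρ : ℝ} (heq : ψ₂ ξ 1 = ρ * ψ₁ ξ 1)
    (heq' : ψ₂' ξ 1 = ρ * ψ₁' ξ 1) (hx : 1 ≤ x) : ψ₂ ξ x = ρ * ψ₁ ξ x := by
  have hsub : Icc 1 x ⊆ Ici 0 := Icc_subset_Ici_self.trans (Ici_subset_Ici.2 zero_le_one)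
  have hcoeff : EqOn (helmholtzCoeff c₁ ξ) (helmholtzCoeff c₂ ξ) (Icc 1 x) := fun y hy => by
    rw [helmholtzCoeff, helmholtzCoeff, hc₁.eq_const y hy.1, hc₂.eq_const y hy.1]
  have hphase := ((hψ₂.isLinearODESolution ξ).mono hsub).eqOn_phase_of_eq_left
    ((hc₂.continuousOn_helmholtzCoeff ξ).mono hsub)
    ((((hψ₁.isLinearODESolution ξ).mono hsub).congr_coeff hcoeff).const_smul ρ) heq heq'
  exact congrArg Prod.fst (hphase (right_mem_Icc.2 hx))

theorem exists_ne_zero_eq_mul (hψ₁ : IsRegularSolution c₁ ψ₁ ψ₁')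
    (hψ₂ : IsRegularSolution c₂ ψ₂ ψ₂') (hc₁ : IsContinuousWaveSpeed c0 c₁)
    (hc₂ : IsContinuousWaveSpeed c0 c₂) (hwronskian : ψ₁ ξ 1 * ψ₂' ξ 1 = ψ₁' ξ 1 * ψ₂ ξ 1) :
    ∃ ρ ≠ 0, ∀ x ∈ Ici (1 : ℝ), ψ₂ ξ x = ρ * ψ₁ ξ x := by
  obtain ⟨ρ, hρ0, hρ, hρ'⟩ := exists_ne_zero_eq_mul_of_mul_eq_mul
    (hψ₁.phase_ne_zero hc₁ zero_le_one) (hψ₂.phase_ne_zero hc₂ zero_le_one) hwronskian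
  exact ⟨ρ, hρ0, fun x hx => hψ₁.eq_mul_of_eq_mul_at_one hψ₂ hc₁ hc₂ hρ hρ' hx⟩

end IsRegularSolution

theorem IsFreqSolution.isLinearODESolution (hv : IsFreqSolution c v)
    (hc : IsContinuousWaveSpeed c0 c) (ξ : ℝ) :
    IsLinearODESolution (helmholtzCoeff c ξ) (v ξ) (deriv (v ξ)) (Ici 0) := by
  obtain ⟨hdiff, heq, -, -⟩ := hv ξ
  refine ⟨fun x _ => (hdiff.differentiable two_ne_zero x).hasDerivAt.hasDerivWithinAt,
    fun x hx => (hdiff.differentiable_deriv_two x).hasDerivAt.hasDerivWithinAt.congr_deriv ?_⟩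
  have hcx : (c x : ℂ) ≠ 0 := Complex.ofReal_ne_zero.2 (hc.pos x hx).ne'
  rw [helmholtzCoeff, Complex.real_smul]
  push_cast
  field_simp
  linear_combination -heq x hx

theorem IsFreqSolution.isRegularSolution_re (hv : IsFreqSolution c v)
    (hc : IsContinuousWaveSpeed c0 c) :
    IsRegularSolution c (fun ξ x => (v ξ x).re) (fun ξ x => (deriv (v ξ) x).re) where
  isLinearODESolution ξ := (hv.isLinearODESolution hc ξ).clm_comp Complex.reCLM
  apply_zero ξ := by rw [(hv ξ).2.2.1, Complex.zero_re]
  deriv_apply_zero ξ := by rw [(hv ξ).2.2.2, Complex.one_re]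

theorem IsFreqSolution.ofReal_re (hv : IsFreqSolution c v) (hc : IsContinuousWaveSpeed c0 c)
    (ξ : ℝ) (hx : 0 ≤ x) : ((v ξ x).re : ℂ) = v ξ x := by
  have him := IsLinearODESolution.eqOn_phase_of_eq_left
    ((hc.continuousOn_helmholtzCoeff ξ).mono Icc_subset_Ici_self)
    (((hv.isLinearODESolution hc ξ).clm_comp Complex.imCLM).mono
      (Icc_subset_Ici_self : Icc 0 x ⊆ _)) IsLinearODESolution.zero
    (by simp [(hv ξ).2.2.1]) (by simp [(hv ξ).2.2.2]) (right_mem_Icc.2 hx)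
  exact Complex.ext rfl (congrArg Prod.fst him).symm

/-- The cosine transform of `∂ₓu(·, 0)`: the factor by which the cosine transform in time of a
decaying wave `u` differs from the regular solution on the boundary region. -/
noncomputable def boundaryAmplitude (u : ℝ → ℝ → ℝ) : ℝ → ℝ :=
  cosTransform fun t => spaceDeriv u t 0

namespace IsWaveSolution

theorem cosTransform_eq_boundaryAmplitude_mul (h : IsWaveSolution c f u)
    (hc : IsContinuousWaveSpeed c0 c) (hu : DecaysIntegrably u) (hψ : IsRegularSolution c ψ ψ')
    (ξ : ℝ) :
    EqOn (fun x => (cosTransform (fun t => u t x) ξ, cosTransform (fun t => spaceDeriv u t x) ξ))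
      (fun x => (boundaryAmplitude u ξ * ψ ξ x, boundaryAmplitude u ξ * ψ' ξ x)) (Icc 0 1) := by
  refine hψ.eqOn_phase_of_apply_zero hc (h.isLinearODESolution_cosTransform hc hu ξ) ?_
  rw [h.cosTransform_eq_intervalIntegral hu ξ (left_mem_Icc.2 zero_le_one),
    intervalIntegral.integral_same]

theorem frequently_boundaryAmplitude_ne_zero (h : IsWaveSolution c f u)
    (hc : IsContinuousWaveSpeed c0 c) (hu : DecaysExp u) (hψ : IsRegularSolution c ψ ψ')
    (hf : ∃ x ∈ Icc (0 : ℝ) 1, f x ≠ 0) (ξ₀ : ℝ) :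
    ∃ᶠ ξ in 𝓝 ξ₀, boundaryAmplitude u ξ ≠ 0 := by
  obtain ⟨x, hx, hfx⟩ := hf
  by_contra hzero
  simp only [not_frequently, not_not] at hzero
  have hcos : ∀ᶠ ξ in 𝓝 ξ₀, cosTransform (fun t => u t x) ξ = 0 := by
    filter_upwards [hzero] with ξ hξ
    have hphase := h.cosTransform_eq_boundaryAmplitude_mul hc hu.decaysIntegrably hψ ξ hx
    simpa only [hξ, zero_mul] using congrArg Prod.fst hphase
  obtain ⟨C, -, κ, hκ, hbound⟩ := hu
  have hux : EqOn (fun t => u t x) 0 (Ici 0) :=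
    eqOn_zero_of_frequently_cosTransform_eq_zero hκ
      (h.1.continuousOn.uncurry_right x hx.1)
      (fun t ht => (le_add_of_nonneg_right (abs_nonneg _)).trans (hbound t ht x hx))
      (hcos.filter_mono nhdsWithin_le_nhds).frequently
  exact hfx ((h.2.2.1 x hx.1).symm.trans (hux self_mem_Ici))

variable {f₁ f₂ : ℝ → ℝ} {u₁ u₂ : ℝ → ℝ → ℝ}

theorem boundaryAmplitude_mul_eq_boundaryAmplitude_mul (h₁ : IsWaveSolution c₁ f₁ u₁)
    (h₂ : IsWaveSolution c₂ f₂ u₂) (hc₁ : IsContinuousWaveSpeed c0 c₁)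
    (hc₂ : IsContinuousWaveSpeed c0 c₂) (hf₁ : ∀ x ∈ Ici (1 : ℝ), f₁ x = 0)
    (hf₂ : ∀ x ∈ Ici (1 : ℝ), f₂ x = 0) (hu₁ : DecaysIntegrably u₁) (hu₂ : DecaysIntegrably u₂)
    (heq : ∀ t ∈ Ici (0 : ℝ), u₁ t 1 = u₂ t 1) (hψ₁ : IsRegularSolution c₁ ψ₁ ψ₁')
    (hψ₂ : IsRegularSolution c₂ ψ₂ ψ₂') (ξ : ℝ) :
    boundaryAmplitude u₁ ξ * ψ₁ ξ 1 = boundaryAmplitude u₂ ξ * ψ₂ ξ 1 ∧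
      boundaryAmplitude u₁ ξ * ψ₁' ξ 1 = boundaryAmplitude u₂ ξ * ψ₂' ξ 1 := by
  have hone : (1 : ℝ) ∈ Icc 0 1 := right_mem_Icc.2 zero_le_one
  have hphase₁ := h₁.cosTransform_eq_boundaryAmplitude_mul hc₁ hu₁ hψ₁ ξ hone
  have hphase₂ := h₂.cosTransform_eq_boundaryAmplitude_mul hc₂ hu₂ hψ₂ ξ hone
  have hvalue : cosTransform (fun t => u₁ t 1) ξ = cosTransform (fun t => u₂ t 1) ξ :=
    cosTransform_congr (fun t ht => heq t (Ioi_subset_Ici_self ht)) ξ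
  have hslope : cosTransform (fun t => spaceDeriv u₁ t 1) ξ =
      cosTransform (fun t => spaceDeriv u₂ t 1) ξ :=
    cosTransform_congr (fun t ht => h₁.spaceDeriv_eq_of_eq h₂ hc₁.const_pos one_pos hc₁.eq_const
      hc₂.eq_const hf₁ hf₂ heq ht) ξ
  exact Prod.ext_iff.1 (hphase₁.symm.trans ((Prod.ext hvalue hslope).trans hphase₂))

/-- Off the zeros of the boundary amplitude of `u₁` the Wronskian at `x = 1` vanishes because the
data there are proportional; since these zeros have empty interior, it vanishes everywhere by
continuity. -/
theorem regularSolution_mul_deriv_eq_deriv_mul (h₁ : IsWaveSolution c₁ f₁ u₁)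
    (h₂ : IsWaveSolution c₂ f₂ u₂) (hc₁ : IsContinuousWaveSpeed c0 c₁)
    (hc₂ : IsContinuousWaveSpeed c0 c₂) (hf₁0 : ∃ x ∈ Ici (0 : ℝ), f₁ x ≠ 0)
    (hf₁ : ∀ x ∈ Ici (1 : ℝ), f₁ x = 0) (hf₂ : ∀ x ∈ Ici (1 : ℝ), f₂ x = 0)
    (hu₁ : DecaysExp u₁) (hu₂ : DecaysIntegrably u₂) (heq : ∀ t ∈ Ici (0 : ℝ), u₁ t 1 = u₂ t 1)
    (hψ₁ : IsRegularSolution c₁ ψ₁ ψ₁') (hψ₂ : IsRegularSolution c₂ ψ₂ ψ₂') (ξ : ℝ) :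
    ψ₁ ξ 1 * ψ₂' ξ 1 = ψ₁' ξ 1 * ψ₂ ξ 1 := by
  have hcont₁ : Continuous fun ξ => (ψ₁ ξ 1, ψ₁' ξ 1) :=
    continuous_iff_continuousAt.2 fun _ => hψ₁.tendsto_phase hc₁ zero_le_one
  have hcont₂ : Continuous fun ξ => (ψ₂ ξ 1, ψ₂' ξ 1) :=
    continuous_iff_continuousAt.2 fun _ => hψ₂.tendsto_phase hc₂ zero_le_one
  have hclosed : IsClosed {ξ | ψ₁ ξ 1 * ψ₂' ξ 1 = ψ₁' ξ 1 * ψ₂ ξ 1} :=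
    isClosed_eq (hcont₁.fst.mul hcont₂.snd) (hcont₁.snd.mul hcont₂.fst)
  have hsupp : ∃ x ∈ Icc (0 : ℝ) 1, f₁ x ≠ 0 := by
    obtain ⟨x, hx, hfx⟩ := hf₁0
    exact ⟨x, ⟨hx, le_of_not_ge fun hx1 => hfx (hf₁ x hx1)⟩, hfx⟩
  refine hclosed.closure_subset (mem_closure_iff_frequently.2
    ((h₁.frequently_boundaryAmplitude_ne_zero hc₁ hu₁ hψ₁ hsupp ξ).mono fun η hη => ?_))
  obtain ⟨hvalue, hslope⟩ := h₁.boundaryAmplitude_mul_eq_boundaryAmplitude_mul h₂ hc₁ hc₂ hf₁ hf₂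
    hu₁.decaysIntegrably hu₂ heq hψ₁ hψ₂ η
  refine mul_left_cancel₀ hη ?_
  linear_combination ψ₂' η 1 * hvalue - ψ₂ η 1 * hslope

end IsWaveSolution

end RegularSolution

theorem statement4_general {c0 : ℝ} {c₁ c₂ f₁ f₂ : ℝ → ℝ} {u₁ u₂ : ℝ → ℝ → ℝ}
    {v₁ v₂ : ℂ → ℝ → ℂ} (hc₁ : IsContinuousWaveSpeed c0 c₁) (hc₂ : IsContinuousWaveSpeed c0 c₂)
    (hf₁0 : ∃ x ∈ Ici (0 : ℝ), f₁ x ≠ 0) (hf₁ : ∀ x ∈ Ici (1 : ℝ), f₁ x = 0)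
    (hf₂ : ∀ x ∈ Ici (1 : ℝ), f₂ x = 0) (hu₁ : IsWaveSolution c₁ f₁ u₁)
    (hu₂ : IsWaveSolution c₂ f₂ u₂) (hd₁ : DecaysExp u₁) (hd₂ : DecaysIntegrably u₂)
    (hmeas : ∀ t ∈ Ici (0 : ℝ), u₁ t 1 = u₂ t 1) (hv₁ : IsFreqSolution c₁ v₁)
    (hv₂ : IsFreqSolution c₂ v₂) :
    ∃ ρ : ℝ → ℝ, (∀ ξ : ℝ, ρ ξ ≠ 0) ∧
      ∀ ξ : ℝ, ∀ x ∈ Ici (1 : ℝ), v₂ (ξ : ℂ) x = (ρ ξ : ℂ) * v₁ (ξ : ℂ) x := by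
  have hψ₁ := hv₁.isRegularSolution_re hc₁
  have hψ₂ := hv₂.isRegularSolution_re hc₂
  have hwronskian := hu₁.regularSolution_mul_deriv_eq_deriv_mul hu₂ hc₁ hc₂ hf₁0 hf₁ hf₂ hd₁ hd₂
    hmeas hψ₁ hψ₂
  choose ρ hρ0 hρ using fun ξ => hψ₁.exists_ne_zero_eq_mul hψ₂ hc₁ hc₂ (hwronskian ξ)
  refine ⟨ρ, hρ0, fun ξ x hx => ?_⟩
  have hx0 : 0 ≤ x := zero_le_one.trans hx
  rw [← hv₂.ofReal_re hc₂ ξ hx0, ← hv₁.ofReal_re hc₁ ξ hx0, hρ ξ x hx, Complex.ofReal_mul]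

/-- equal boundary measurements imply the frequency-domain solutions of the
two media are proportional, for `x ≥ 1`, with a nowhere-vanishing factor `ρ(ξ)`. -/
theorem statement4
    (c0 : ℝ) (hc0 : 0 < c0)
    (c₁ c₂ f₁ f₂ : ℝ → ℝ) (u₁ u₂ : ℝ → ℝ → ℝ)
    (hc₁ : IsWaveSpeed c0 c₁) (hc₂ : IsWaveSpeed c0 c₂)
    (hf₁C : ContDiffOn ℝ 2 f₁ (Ici 0)) (hf₂C : ContDiffOn ℝ 2 f₂ (Ici 0))
    (hf₁0 : ∃ x ∈ Ici (0:ℝ), f₁ x ≠ 0) (hf₂0 : ∃ x ∈ Ici (0:ℝ), f₂ x ≠ 0)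
    (hs₁ : ∀ x ∈ Ici (0:ℝ), x ∉ Ioo (0:ℝ) 1 → f₁ x = 0)
    (hs₂ : ∀ x ∈ Ici (0:ℝ), x ∉ Ioo (0:ℝ) 1 → f₂ x = 0)
    (hu₁ : IsWaveSolution c₁ f₁ u₁) (hu₂ : IsWaveSolution c₂ f₂ u₂)
    (hd₁ : DecaysExp u₁) (hd₂ : DecaysExp u₂)
    (hmeas : ∀ t ∈ Ici (0:ℝ), u₁ t 1 = u₂ t 1)
    (v₁ v₂ : ℂ → ℝ → ℂ)
    (hv₁ : IsFreqSolution c₁ v₁) (hv₂ : IsFreqSolution c₂ v₂) :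
    ∃ ρ : ℝ → ℝ, (∀ ξ : ℝ, ρ ξ ≠ 0) ∧
      ∀ ξ : ℝ, ∀ x ∈ Ici (1:ℝ), v₂ (ξ:ℂ) x = (ρ ξ : ℂ) * v₁ (ξ:ℂ) x := by
  have hright (x : ℝ) (hx : x ∈ Ici 1) : x ∈ Ici 0 ∧ x ∉ Ioo 0 1 :=
    ⟨zero_le_one.trans hx, fun h => h.2.not_ge hx⟩
  exact statement4_general hc₁.isContinuousWaveSpeed hc₂.isContinuousWaveSpeed hf₁0
    (fun x hx => hs₁ x (hright x hx).1 (hright x hx).2)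
    (fun x hx => hs₂ x (hright x hx).1 (hright x hx).2) hu₁ hu₂ hd₁ hd₂.decaysIntegrably
    hmeas hv₁ hv₂
end

section
/- Let ε ∈ (0,1), let V ∈ C([0,1]) with Dirichlet eigenpairs (λ_k, φ_k), k ≥ 1, and assume λ_k = (kπ)² + O(1) as k → ∞. Let h ∈ C([0,1]) be not identically zero with supp h ⊂ [0,ε]. For λ ∈ ℝ define d(λ) = #{k ∈ ℕ : 0 < λ_k ≤ λ and ∫₀¹ h(x) φ_k(x) dx = 0}. Then limsup_{λ→∞} d(λ)/√λ ≤ ε/π. -/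
open Set

/-- `(μ, ψ)` is a Dirichlet eigenpair of `-d²/dx² + V` on `(0,1)`. -/
def IsDirichletEigenpair (V : ℝ → ℝ) (μ : ℝ) (ψ : ℝ → ℝ) : Prop :=
  ContDiffOn ℝ 2 ψ (Icc 0 1) ∧ (∃ x ∈ Icc (0:ℝ) 1, ψ x ≠ 0) ∧
  (∀ x ∈ Ioo (0:ℝ) 1,
    -(derivWithin (derivWithin ψ (Icc 0 1)) (Icc 0 1) x) + V x * ψ x = μ * ψ x) ∧
  ψ 0 = 0 ∧ ψ 1 = 0

/-- `(lam, phi)` enumerates the Dirichlet eigenvalues of `-d²/dx² + V` on `(0,1)` in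
strictly increasing order, with `L²`-normalized eigenfunctions. -/
def IsDirichletSystem (V : ℝ → ℝ) (lam : ℕ → ℝ) (phi : ℕ → ℝ → ℝ) : Prop :=
  StrictMono lam ∧ Filter.Tendsto lam Filter.atTop Filter.atTop ∧
  (∀ k, IsDirichletEigenpair V (lam k) (phi k)) ∧
  (∀ k, ∫ x in (0:ℝ)..1, (phi k x)^2 = 1) ∧
  (∀ μ ψ, IsDirichletEigenpair V μ ψ → ∃ k, μ = lam k)

/-!
The solution of `-y'' + V y = μ y` with `y(0) = 0` is, up to a constant, the image of `sin (√μ x)`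
under a Volterra operator `1 + K` whose kernel does not depend on `μ`. Hence `∫₀¹ h φ = 0` says that
`√μ` is a zero of the sine transform `F` of `g = (1 + K)ᵀ h`. As `(1 + K)ᵀ` integrates from `t` to
`1` and is injective, `g` is nonzero and vanishes beyond `ε`; let `b ≤ ε` be the right endpoint of
its support. Then `F` is entire with `‖F z‖ ≤ M e^{b |Im z|}`, and what remains is that such an `F`
has at most `(b / π + o(1)) R` zeros in `[0, R]`.

Jensen's formula on a disc that meets the real line in a short interval `[a - X, a + X]` bounds the
number of zeros in it, each weighted by the parabola `X² - (x - a)²`, in terms of the growth deficit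
`log M + b |Im c| - log ‖F c‖` at the centre `c` of the disc. Integrating over `a` turns the
weighted count into a count. When `c` runs along the lower half of a large circle, the integrated
deficit is controlled by the deficit at the centre of that circle, again by Jensen. So it suffices
to find one point near `i L` where the deficit is `o(L)`. Such a point exists because `b` is the
exact endpoint of the support: otherwise Cauchy's estimates for high derivatives of the Laplace
transform of `g (b - ·)` would force `g (b - a) = 0` for all small `a > 0`.
-/

/-! ### Jensen's inequality and exponential type -/

lemma one_le_divisor_of_apply_eq_zero {f : ℂ → ℂ} {U : Set ℂ} {u : ℂ} (hf : AnalyticOnNhd ℂ f U)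
    (hu : u ∈ U) (hord : analyticOrderAt f u ≠ ⊤) (h0 : f u = 0) :
    1 ≤ MeromorphicOn.divisor f U u := by
  have hne : analyticOrderAt f u ≠ 0 := (hf u hu).analyticOrderAt_ne_zero.2 h0
  rw [MeromorphicOn.AnalyticOnNhd.divisor_apply hf hu]
  lift analyticOrderAt f u to ℕ using hord with n
  have hn : 1 ≤ n := Nat.one_le_iff_ne_zero.2 (by exact_mod_cast hne)
  simpa using hn

lemma sum_log_div_add_log_norm_le_circleAverage {f : ℂ → ℂ} {c : ℂ} {r : ℝ} (hr : 0 < r)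
    (hf : AnalyticOnNhd ℂ f (Metric.closedBall c r)) (hc : f c ≠ 0)
    (T : Finset ℂ) (hT : ∀ u ∈ T, f u = 0 ∧ ‖u - c‖ ≤ r) :
    ∑ u ∈ T, Real.log (r / ‖u - c‖) + Real.log ‖f c‖ ≤
      Real.circleAverage (fun z ↦ Real.log ‖f z‖) c r := by
  have hcmem : c ∈ Metric.closedBall c r := Metric.mem_closedBall_self hr.le
  have hord : ∀ u ∈ Metric.closedBall c r, analyticOrderAt f u ≠ ⊤ := fun u hu ↦
    hf.analyticOrderAt_ne_top_of_isPreconnected (convex_closedBall c r).isPreconnected hcmem hu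
      (by simp [(hf c hcmem).analyticOrderAt_eq_zero.2 hc])
  have hlog : ∀ u ∈ Metric.closedBall c r, 0 ≤ Real.log (r * ‖c - u‖⁻¹) := by
    intro u hu
    rcases eq_or_ne u c with rfl | huc
    · simp
    · have hpos : 0 < ‖c - u‖ := norm_pos_iff.2 (sub_ne_zero.2 huc.symm)
      refine Real.log_nonneg ?_
      rwa [← div_eq_mul_inv, one_le_div₀ hpos, ← dist_eq_norm, ← Metric.mem_closedBall']
  have hJensen := AnalyticOnNhd.circleAverage_log_norm (f := f) (c := c) hr.ne'
    (by rwa [abs_of_pos hr]) hc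
  rw [abs_of_pos hr] at hJensen
  rw [hJensen, ← finsum_mem_coe_finset]
  gcongr
  refine finsum_le_finsum' ?_ ?_ fun u ↦ ?_
  · refine T.finite_toSet.subset fun u ↦ ?_
    contrapose
    exact fun hu ↦ by simp [Finset.mem_coe.not.1 hu]
  · exact (MeromorphicOn.divisor f (Metric.closedBall c r)).finiteSupport
      (isCompact_closedBall c r) |>.subset fun _ _ ↦ by simp_all
  · by_cases huT : u ∈ T
    · obtain ⟨h0, hle⟩ := hT u huT
      have hu : u ∈ Metric.closedBall c r := mem_closedBall_iff_norm.2 hle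
      have h1 : (1 : ℝ) ≤ MeromorphicOn.divisor f (Metric.closedBall c r) u := mod_cast
        one_le_divisor_of_apply_eq_zero hf hu (hord u hu) h0
      simpa [huT, norm_sub_rev, div_eq_mul_inv] using le_mul_of_one_le_left (hlog u hu) h1
    · by_cases hu : u ∈ Metric.closedBall c r
      · simpa [huT] using mul_nonneg
          (mod_cast MeromorphicOn.AnalyticOnNhd.divisor_nonneg hf u) (hlog u hu)
      · simp [huT, hu]

/-- `f` is entire, of exponential type at most `τ`, and bounded by `M` on the real line, in the
form of the bound `‖f z‖ ≤ M e^{τ |Im z|}`. The normalization `1 ≤ M` makes the logarithm of the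
bound nonnegative, so that it also dominates the value `Real.log 0 = 0` at the zeros of `f`. -/
structure IsBoundedExponentialType (f : ℂ → ℂ) (M τ : ℝ) : Prop where
  differentiable : Differentiable ℂ f
  one_le : 1 ≤ M
  type_nonneg : 0 ≤ τ
  norm_le : ∀ z, ‖f z‖ ≤ M * Real.exp (τ * |z.im|)

/-- The amount by which `log ‖f z‖` falls short of the bound `log M + τ |Im z|` of
`IsBoundedExponentialType`. -/
noncomputable def growthDeficit (f : ℂ → ℂ) (M τ : ℝ) (z : ℂ) : ℝ :=
  Real.log M + τ * |z.im| - Real.log ‖f z‖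

namespace IsBoundedExponentialType

variable {f : ℂ → ℂ} {M τ : ℝ}

lemma growthDeficit_nonneg (hf : IsBoundedExponentialType f M τ) (z : ℂ) :
    0 ≤ growthDeficit f M τ z := by
  have hM := hf.one_le
  have hτ := hf.type_nonneg
  unfold growthDeficit
  rcases eq_or_ne (f z) 0 with h0 | h0
  · have := Real.log_nonneg hM
    simp only [h0, norm_zero, Real.log_zero, sub_zero]
    positivity
  · have hlog := Real.log_le_log (norm_pos_iff.2 h0) (hf.norm_le z)
    rw [Real.log_mul (by positivity) (by positivity), Real.log_exp] at hlog
    linarith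

lemma circleIntegrable_log_norm (hf : IsBoundedExponentialType f M τ) (c : ℂ) (r : ℝ) :
    CircleIntegrable (fun z ↦ Real.log ‖f z‖) c r :=
  MeromorphicOn.circleIntegrable_log_norm fun z _ ↦ (hf.differentiable.analyticAt z).meromorphicAt

lemma circleIntegrable_growthDeficit (hf : IsBoundedExponentialType f M τ) (c : ℂ) (r : ℝ) :
    CircleIntegrable (growthDeficit f M τ) c r :=
  CircleIntegrable.sub (ContinuousOn.circleIntegrable' (by fun_prop))
    (hf.circleIntegrable_log_norm c r)

lemma circleAverage_growthDeficit (hf : IsBoundedExponentialType f M τ) (c : ℂ) (r : ℝ) :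
    Real.circleAverage (growthDeficit f M τ) c r =
      Real.log M + τ * Real.circleAverage (fun z ↦ |z.im|) c r -
        Real.circleAverage (fun z ↦ Real.log ‖f z‖) c r := by
  have him : CircleIntegrable (fun z : ℂ ↦ τ * |z.im|) c r :=
    ContinuousOn.circleIntegrable' (by fun_prop)
  have hconst : CircleIntegrable (fun _ : ℂ ↦ Real.log M) c r := circleIntegrable_const _ _ _
  have hsum : CircleIntegrable (fun z : ℂ ↦ Real.log M + τ * |z.im|) c r := hconst.add him
  have hsmul := Real.circleAverage_fun_smul (a := τ) (f := fun z : ℂ ↦ |z.im|) (c := c) (R := r)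
  simp only [smul_eq_mul] at hsmul
  unfold growthDeficit
  rw [Real.circleAverage_fun_sub hsum (hf.circleIntegrable_log_norm c r),
    Real.circleAverage_fun_add hconst him, Real.circleAverage_const, hsmul]

lemma sum_log_div_add_circleAverage_growthDeficit_le (hf : IsBoundedExponentialType f M τ)
    {c : ℂ} {r : ℝ} (hr : 0 < r) (hc : f c ≠ 0) (T : Finset ℂ)
    (hT : ∀ u ∈ T, f u = 0 ∧ ‖u - c‖ ≤ r) :
    ∑ u ∈ T, Real.log (r / ‖u - c‖) + Real.circleAverage (growthDeficit f M τ) c r ≤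
      growthDeficit f M τ c + τ * (Real.circleAverage (fun z ↦ |z.im|) c r - |c.im|) := by
  have hJensen := sum_log_div_add_log_norm_le_circleAverage hr
    (fun z _ ↦ hf.differentiable.analyticAt z) hc T hT
  rw [hf.circleAverage_growthDeficit, growthDeficit]
  linarith

lemma circleAverage_growthDeficit_le (hf : IsBoundedExponentialType f M τ) {c : ℂ} {r : ℝ}
    (hr : 0 < r) (hrc : r ≤ c.im) (hc : f c ≠ 0) :
    Real.circleAverage (growthDeficit f M τ) c r ≤ growthDeficit f M τ c := by
  have habs : Real.circleAverage (fun z : ℂ ↦ |z.im|) c r = |c.im| := by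
    have him : EqOn (fun z : ℂ ↦ |z.im|) Complex.im (Metric.sphere c |r|) := by
      intro z hz
      have hz' := (Complex.abs_im_le_norm (z - c)).trans_eq (mem_sphere_iff_norm.1 hz)
      rw [abs_of_pos hr, Complex.sub_im] at hz'
      exact abs_of_nonneg (by linarith [(abs_le.1 hz').1])
    rw [Real.circleAverage_congr_sphere him, abs_of_pos (hr.trans_le hrc)]
    exact InnerProductSpace.HarmonicOnNhd.circleAverage_eq fun z _ ↦
      (analyticAt_id (𝕜 := ℂ) (z := z)).harmonicAt_im
  have h := hf.sum_log_div_add_circleAverage_growthDeficit_le hr hc ∅ (by simp)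
  rwa [habs, sub_self, mul_zero, add_zero, Finset.sum_empty, zero_add] at h

end IsBoundedExponentialType

/-! ### Zeros seen through a parabolic window -/

lemma sub_cube_div_three_le_arctan {u : ℝ} (hu : 0 ≤ u) : u - u ^ 3 / 3 ≤ Real.arctan u := by
  have hderiv (x : ℝ) :
      HasDerivAt (fun x ↦ Real.arctan x - (x - x ^ 3 / 3)) (x ^ 4 / (1 + x ^ 2)) x := by
    refine ((Real.hasDerivAt_arctan x).fun_sub
      ((hasDerivAt_id' x).fun_sub ((hasDerivAt_pow 3 x).div_const 3))).congr_deriv ?_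
    field_simp
    ring
  have hmono : Monotone fun x ↦ Real.arctan x - (x - x ^ 3 / 3) :=
    monotone_of_deriv_nonneg (fun x ↦ (hderiv x).differentiableAt) fun x ↦ by
      rw [(hderiv x).deriv]
      positivity
  simpa using hmono hu

lemma integral_max_zero_cos_sub_cos {α : ℝ} (hα₀ : 0 ≤ α) (hα : α ≤ Real.pi) :
    ∫ φ in -Real.pi..Real.pi, max 0 (Real.cos φ - Real.cos α) =
      2 * (Real.sin α - α * Real.cos α) := by
  have habs {φ : ℝ} (hφ : φ ∈ Ioc (-Real.pi) Real.pi) : |φ| ≤ Real.pi := abs_le.2 ⟨hφ.1.le, hφ.2⟩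
  calc ∫ φ in -Real.pi..Real.pi, max 0 (Real.cos φ - Real.cos α)
      = ∫ φ in -α..α, max 0 (Real.cos φ - Real.cos α) := by
        rw [intervalIntegral.integral_of_le (by linarith [Real.pi_pos]),
          intervalIntegral.integral_of_le (by linarith)]
        refine MeasureTheory.setIntegral_eq_of_subset_of_forall_sdiff_eq_zero measurableSet_Ioc
          (Ioc_subset_Ioc (by linarith) hα) fun φ ⟨hφ, hφα⟩ ↦ ?_
        have hle : α ≤ |φ| := by
          by_contra! hlt
          exact hφα ⟨(abs_lt.1 hlt).1, (abs_lt.1 hlt).2.le⟩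
        have hcos := Real.cos_le_cos_of_nonneg_of_le_pi hα₀ (habs hφ) hle
        rw [Real.cos_abs] at hcos
        exact max_eq_left (by linarith)
    _ = ∫ φ in -α..α, (Real.cos φ - Real.cos α) := by
        refine intervalIntegral.integral_congr fun φ hφ ↦ max_eq_right ?_
        rw [uIcc_of_le (by linarith)] at hφ
        have hcos := Real.cos_le_cos_of_nonneg_of_le_pi (abs_nonneg φ) hα (abs_le.2 hφ)
        rw [Real.cos_abs] at hcos
        linarith
    _ = 2 * (Real.sin α - α * Real.cos α) := by
        rw [intervalIntegral.integral_sub (by simp) (by simp), integral_cos,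
          intervalIntegral.integral_const, Real.sin_neg, smul_eq_mul]
        ring

lemma circleMap_im (c : ℂ) (r θ : ℝ) : (circleMap c r θ).im = c.im + r * Real.sin θ := by
  simp [circleMap, Complex.exp_ofReal_mul_I_im]

lemma circleAverage_abs_im_eq {c : ℂ} {r α : ℝ} (hα₀ : 0 ≤ α) (hα : α ≤ Real.pi) (hr : 0 ≤ r)
    (hc : c.im = r * Real.cos α) :
    Real.circleAverage (fun z ↦ |z.im|) c r =
      c.im + 2 / Real.pi * (r * (Real.sin α - α * Real.cos α)) := by
  have hshift : Real.circleAverage (fun z ↦ |z.im|) c r =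
      (2 * Real.pi)⁻¹ * ∫ φ in -Real.pi..Real.pi, |c.im - r * Real.cos φ| := by
    have hperiod : Function.Periodic (fun φ ↦ |c.im - r * Real.cos φ|) (2 * Real.pi) :=
      fun φ ↦ by simp [Real.cos_add_two_pi]
    have h := hperiod.intervalIntegral_add_eq 0 (-Real.pi)
    rw [zero_add, show -Real.pi + 2 * Real.pi = Real.pi by ring] at h
    rw [Real.circleAverage_eq_integral_add (-(Real.pi / 2)), ← h, smul_eq_mul]
    simp_rw [circleMap_im, ← sub_eq_add_neg, Real.sin_sub_pi_div_two, mul_neg, ← sub_eq_add_neg]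
  have hsplit (φ : ℝ) : |c.im - r * Real.cos φ| =
      (c.im - r * Real.cos φ) + 2 * r * max 0 (Real.cos φ - Real.cos α) := by
    rcases le_total (Real.cos φ) (Real.cos α) with h | h
    · rw [abs_of_nonneg (by rw [hc]; nlinarith), max_eq_left (by linarith)]
      ring
    · rw [abs_of_nonpos (by rw [hc]; nlinarith), max_eq_right (by linarith), hc]
      ring
  have := Real.pi_pos
  rw [hshift]
  simp_rw [hsplit]
  rw [intervalIntegral.integral_add (Continuous.intervalIntegrable (by fun_prop) _ _)
      (Continuous.intervalIntegrable (by fun_prop) _ _),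
    intervalIntegral.integral_sub (by simp) (Continuous.intervalIntegrable (by fun_prop) _ _),
    intervalIntegral.integral_const, intervalIntegral.integral_const_mul, integral_cos,
    intervalIntegral.integral_const_mul, integral_max_zero_cos_sub_cos hα₀ hα]
  simp only [smul_eq_mul, Real.sin_neg, Real.sin_pi]
  field_simp
  ring

lemma circleAverage_abs_im_le {c : ℂ} {X : ℝ} (hc : 0 < c.im) (hX : 0 ≤ X) :
    Real.circleAverage (fun z ↦ |z.im|) c √(X ^ 2 + c.im ^ 2) ≤
      c.im + 2 * X ^ 3 / (3 * Real.pi * c.im ^ 2) := by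
  have := Real.pi_pos
  set r := √(X ^ 2 + c.im ^ 2)
  have hsqrt : √(1 + (X / c.im) ^ 2) = r / c.im := by
    rw [show 1 + (X / c.im) ^ 2 = (X ^ 2 + c.im ^ 2) / c.im ^ 2 by field_simp; ring,
      Real.sqrt_div (by positivity), Real.sqrt_sq hc.le]
  have hr : 0 < r := Real.sqrt_pos.2 (by positivity)
  set α := Real.arctan (X / c.im)
  have hcos : r * Real.cos α = c.im := by
    rw [Real.cos_arctan, hsqrt]
    field_simp
  have hsin : r * Real.sin α = X := by
    rw [Real.sin_arctan, hsqrt]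
    field_simp
  have harctan := sub_cube_div_three_le_arctan (u := X / c.im) (by positivity)
  rw [circleAverage_abs_im_eq (Real.arctan_nonneg.2 (by positivity))
    (by linarith [Real.arctan_lt_pi_div_two (X / c.im)]) hr.le hcos.symm]
  calc c.im + 2 / Real.pi * (r * (Real.sin α - α * Real.cos α))
      = c.im + 2 / Real.pi * (X - c.im * α) := by
        linear_combination 2 / Real.pi * (hsin - α * hcos)
    _ ≤ c.im + 2 / Real.pi * (X - c.im * (X / c.im - (X / c.im) ^ 3 / 3)) := by gcongr
    _ = c.im + 2 * X ^ 3 / (3 * Real.pi * c.im ^ 2) := by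
        field_simp
        ring

lemma sq_sub_sq_div_le_log_div {r d : ℝ} (hr : 0 < r) (hd : 0 < d) :
    (r ^ 2 - d ^ 2) / (2 * r ^ 2) ≤ Real.log (r / d) := by
  have hlog := Real.one_sub_inv_le_log_of_pos (x := (r / d) ^ 2) (by positivity)
  rw [Real.log_pow, Nat.cast_ofNat] at hlog
  calc (r ^ 2 - d ^ 2) / (2 * r ^ 2) = (1 - ((r / d) ^ 2)⁻¹) / 2 := by field_simp
    _ ≤ Real.log (r / d) := by linarith

lemma norm_ofReal_sub_sq (x : ℝ) (c : ℂ) : ‖(x : ℂ) - c‖ ^ 2 = (x - c.re) ^ 2 + c.im ^ 2 := by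
  rw [← Complex.normSq_eq_norm_sq, Complex.normSq_apply]
  simp only [Complex.sub_re, Complex.ofReal_re, Complex.sub_im, Complex.ofReal_im]
  ring

lemma sum_max_zero_sq_sub_sq_div_le {c : ℂ} {X r : ℝ} (him : 0 < c.im) (hX : 0 ≤ X) (hr : 0 < r)
    (hr2 : r ^ 2 = X ^ 2 + c.im ^ 2) (T : Finset ℝ) :
    (∑ x ∈ T, max 0 (X ^ 2 - (x - c.re) ^ 2)) / (2 * r ^ 2) ≤
      ∑ x ∈ T with |x - c.re| ≤ X, Real.log (r / ‖(x : ℂ) - c‖) := by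
  rw [Finset.sum_div, ← Finset.sum_filter_of_ne (p := fun x ↦ |x - c.re| ≤ X)]
  · refine Finset.sum_le_sum fun x hx ↦ ?_
    have hxX : (x - c.re) ^ 2 ≤ X ^ 2 :=
      sq_le_sq.2 ((Finset.mem_filter.1 hx).2.trans (le_abs_self X))
    have hpos : 0 < ‖(x : ℂ) - c‖ := by
      refine norm_pos_iff.2 (sub_ne_zero.2 ?_)
      rintro rfl
      simp at him
    have hdiff : X ^ 2 - (x - c.re) ^ 2 = r ^ 2 - ‖(x : ℂ) - c‖ ^ 2 := by
      rw [hr2, norm_ofReal_sub_sq]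
      ring
    rw [max_eq_right (sub_nonneg.2 hxX), hdiff]
    exact sq_sub_sq_div_le_log_div hr hpos
  · intro x _ hne
    by_contra! hlt
    have := sq_le_sq.2 ((abs_of_nonneg hX).trans_le hlt.le)
    exact hne (by rw [max_eq_left (by linarith), zero_div])

lemma IsBoundedExponentialType.sum_max_zero_sq_sub_sq_le {f : ℂ → ℂ} {M τ : ℝ}
    (hf : IsBoundedExponentialType f M τ) {c : ℂ} {X : ℝ} (him : 0 < c.im) (hX : 0 ≤ X)
    (hc : f c ≠ 0) (T : Finset ℝ) (hT : ∀ x ∈ T, f x = 0) :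
    ∑ x ∈ T, max 0 (X ^ 2 - (x - c.re) ^ 2) ≤
      (1 + X ^ 2 / c.im ^ 2) * (4 * τ / (3 * Real.pi)) * X ^ 3 +
        2 * (X ^ 2 + c.im ^ 2) * growthDeficit f M τ c := by
  set r := √(X ^ 2 + c.im ^ 2)
  have hr : 0 < r := Real.sqrt_pos.2 (by positivity)
  have hr2 : r ^ 2 = X ^ 2 + c.im ^ 2 := Real.sq_sqrt (by positivity)
  have hsum := sum_max_zero_sq_sub_sq_div_le him hX hr hr2 T
  have hJensen := hf.sum_log_div_add_circleAverage_growthDeficit_le hr hc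
    ((T.filter fun x ↦ |x - c.re| ≤ X).map ⟨(↑), Complex.ofReal_injective⟩) (by
      simp only [Finset.mem_map, Finset.mem_filter, Function.Embedding.coeFn_mk]
      rintro _ ⟨x, ⟨hx, hxX⟩, rfl⟩
      refine ⟨hT x hx, Real.le_sqrt_of_sq_le ?_⟩
      rw [norm_ofReal_sub_sq]
      linarith [sq_le_sq.2 (hxX.trans (le_abs_self X))])
  rw [Finset.sum_map, abs_of_pos him] at hJensen
  simp only [Function.Embedding.coeFn_mk] at hJensen
  have havg : 0 ≤ Real.circleAverage (growthDeficit f M τ) c r :=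
    Real.circleAverage_nonneg_of_nonneg fun z _ ↦ hf.growthDeficit_nonneg z
  have him_avg := mul_le_mul_of_nonneg_left (circleAverage_abs_im_le him hX) hf.type_nonneg
  calc ∑ x ∈ T, max 0 (X ^ 2 - (x - c.re) ^ 2)
      ≤ (growthDeficit f M τ c + τ * (2 * X ^ 3 / (3 * Real.pi * c.im ^ 2))) * (2 * r ^ 2) := by
        rw [← div_le_iff₀ (by positivity)]
        linarith
    _ = _ := by
        have := Real.pi_pos
        rw [hr2]
        field_simp
        ring

lemma ae_apply_circleMap_ne_zero {f : ℂ → ℂ} (hf : Differentiable ℂ f) {c : ℂ} {ρ : ℝ}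
    (hρ : ρ ≠ 0) (hc : f c ≠ 0) : ∀ᵐ θ : ℝ, f (circleMap c ρ θ) ≠ 0 := by
  have han : AnalyticOnNhd ℂ f univ := fun z _ ↦ hf.analyticAt z
  rcases han.eqOn_zero_or_eventually_ne_zero_of_preconnected isPreconnected_univ with h | h
  · exact absurd (h (mem_univ c)) hc
  · have hcodisc := circleMap_preimage_codiscrete (c := c) hρ
      (Filter.codiscreteWithin_mono (subset_univ _) h)
    have hae := ae_restrict_le_codiscreteWithin
      (μ := (MeasureTheory.volume : MeasureTheory.Measure ℝ)) MeasurableSet.univ hcodisc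
    rwa [MeasureTheory.Measure.restrict_univ] at hae

lemma exists_integral_eq_integral_lower_semicircle {a ρ p q : ℝ} (hp : a - ρ ≤ p) (hpq : p ≤ q)
    (hq : q ≤ a + ρ) :
    ∃ θ₁ θ₂, Real.pi ≤ θ₁ ∧ θ₁ ≤ θ₂ ∧ θ₂ ≤ 2 * Real.pi ∧ ∀ G : ℝ → ℝ, Continuous G →
      ∫ x in p..q, G x = ∫ θ in θ₁..θ₂, G (a + ρ * Real.cos θ) * -(ρ * Real.sin θ) := by
  have := Real.pi_pos
  have hcont (s : Set ℝ) : ContinuousOn (fun θ ↦ a + ρ * Real.cos θ) s := by fun_prop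
  obtain ⟨θ₁, hθ₁, rfl⟩ := intermediate_value_Icc (by linarith) (hcont (Icc Real.pi (2 * Real.pi)))
    (show p ∈ _ by simp only [Real.cos_pi, Real.cos_two_pi]; constructor <;> linarith)
  obtain ⟨θ₂, hθ₂, rfl⟩ := intermediate_value_Icc hθ₁.2 (hcont (Icc θ₁ (2 * Real.pi)))
    (show q ∈ _ by rw [Real.cos_two_pi]; constructor <;> linarith)
  refine ⟨θ₁, θ₂, hθ₁.1, hθ₂.1, hθ₂.2, fun G hG ↦ Eq.symm ?_⟩
  refine intervalIntegral.integral_comp_mul_deriv (fun θ _ ↦ ?_) (by fun_prop) hG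
  simpa using ((Real.hasDerivAt_cos θ).const_mul ρ).const_add a

lemma sin_nonpos_of_mem_Icc_pi_two_pi {θ : ℝ} (hθ : θ ∈ Icc Real.pi (2 * Real.pi)) :
    Real.sin θ ≤ 0 := by
  have h := Real.sin_nonneg_of_nonneg_of_le_pi (x := θ - Real.pi) (by linarith [hθ.1])
    (by linarith [hθ.2])
  rwa [Real.sin_sub_pi, neg_nonneg] at h

lemma mul_neg_mul_le_of_le_add {g A E ρ s : ℝ} (hρ : 0 ≤ ρ) (hs₁ : -1 ≤ s) (hs₀ : s ≤ 0)
    (hE : 0 ≤ E) (hg : g ≤ A + E) : g * -(ρ * s) ≤ A * -(ρ * s) + ρ * E := by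
  calc g * -(ρ * s) ≤ (A + E) * -(ρ * s) := by
        have : 0 ≤ -(ρ * s) := neg_nonneg.2 (mul_nonpos_of_nonneg_of_nonpos hρ hs₀)
        gcongr
    _ = A * -(ρ * s) + ρ * E * -s := by ring
    _ ≤ A * -(ρ * s) + ρ * E :=
        add_le_add_right (mul_le_of_le_one_right (mul_nonneg hρ hE) (by linarith)) _

namespace IsBoundedExponentialType

variable {f : ℂ → ℂ} {M τ : ℝ}

lemma integral_growthDeficit_circleMap_le (hf : IsBoundedExponentialType f M τ) {c : ℂ} {ρ : ℝ}
    (hρ : 0 < ρ) (hρc : ρ ≤ c.im) (hc : f c ≠ 0) {θ₁ θ₂ : ℝ} (h₁ : 0 ≤ θ₁) (h₁₂ : θ₁ ≤ θ₂)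
    (h₂ : θ₂ ≤ 2 * Real.pi) :
    ∫ θ in θ₁..θ₂, growthDeficit f M τ (circleMap c ρ θ) ≤
      2 * Real.pi * growthDeficit f M τ c := by
  have hmean := hf.circleAverage_growthDeficit_le hρ hρc hc
  rw [Real.circleAverage_def, smul_eq_mul, inv_mul_le_iff₀ Real.two_pi_pos] at hmean
  refine le_trans ?_ hmean
  exact intervalIntegral.integral_mono_interval h₁ h₁₂ h₂
    (Filter.Eventually.of_forall fun θ ↦ hf.growthDeficit_nonneg _)
    (hf.circleIntegrable_growthDeficit c ρ)

lemma integral_le_of_le_growthDeficit_lower_semicircle (hf : IsBoundedExponentialType f M τ)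
    {c : ℂ} {ρ p q A B : ℝ} (hρ : 0 < ρ) (hρc : ρ ≤ c.im) (hc : f c ≠ 0) (hp : c.re - ρ ≤ p)
    (hpq : p ≤ q) (hq : q ≤ c.re + ρ) (hB : 0 ≤ B) {G : ℝ → ℝ} (hG : Continuous G)
    (hle : ∀ z ∈ Metric.sphere c ρ, z.im ≤ c.im → f z ≠ 0 →
      G z.re ≤ A + B * growthDeficit f M τ z) :
    ∫ x in p..q, G x ≤ A * (q - p) + B * ρ * (2 * Real.pi * growthDeficit f M τ c) := by
  have := Real.pi_pos
  obtain ⟨θ₁, θ₂, h₁, h₁₂, h₂, hsubst⟩ := exists_integral_eq_integral_lower_semicircle hp hpq hq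
  set D : ℝ → ℝ := fun θ ↦ growthDeficit f M τ (circleMap c ρ θ)
  have hD : IntervalIntegrable D MeasureTheory.volume θ₁ θ₂ :=
    (hf.circleIntegrable_growthDeficit c ρ).mono_set (by
      rw [uIcc_of_le h₁₂, uIcc_of_le (by linarith)]
      exact Icc_subset_Icc (by linarith) h₂)
  have hlen := hsubst (fun _ ↦ A) continuous_const
  have hpoint : ∀ᵐ θ ∂MeasureTheory.volume.restrict (Icc θ₁ θ₂),
      G (c.re + ρ * Real.cos θ) * -(ρ * Real.sin θ) ≤ A * -(ρ * Real.sin θ) + B * ρ * D θ := by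
    filter_upwards [MeasureTheory.ae_restrict_of_ae
      (ae_apply_circleMap_ne_zero hf.differentiable hρ.ne' hc),
      MeasureTheory.ae_restrict_mem measurableSet_Icc] with θ hne hθ
    have hθ' : θ ∈ Icc Real.pi (2 * Real.pi) := Icc_subset_Icc h₁ h₂ hθ
    have hre : (circleMap c ρ θ).re = c.re + ρ * Real.cos θ := by
      simp [circleMap, Complex.exp_ofReal_mul_I_re]
    have hbound := hle _ (circleMap_mem_sphere c hρ.le θ)
      (by rw [circleMap_im]; nlinarith [sin_nonpos_of_mem_Icc_pi_two_pi hθ']) hne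
    rw [hre] at hbound
    have hBD : 0 ≤ B * D θ := mul_nonneg hB (hf.growthDeficit_nonneg _)
    linarith [mul_neg_mul_le_of_le_add hρ.le (Real.neg_one_le_sin θ)
      (sin_nonpos_of_mem_Icc_pi_two_pi hθ') hBD hbound]
  calc ∫ x in p..q, G x
      = ∫ θ in θ₁..θ₂, G (c.re + ρ * Real.cos θ) * -(ρ * Real.sin θ) := hsubst G hG
    _ ≤ ∫ θ in θ₁..θ₂, (A * -(ρ * Real.sin θ) + B * ρ * D θ) :=
        intervalIntegral.integral_mono_ae_restrict h₁₂
          (Continuous.intervalIntegrable (by fun_prop) _ _)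
          ((Continuous.intervalIntegrable (by fun_prop) _ _).add (hD.const_mul _)) hpoint
    _ = A * (q - p) + B * ρ * ∫ θ in θ₁..θ₂, D θ := by
        rw [intervalIntegral.integral_add (Continuous.intervalIntegrable (by fun_prop) _ _)
          (hD.const_mul _), ← hlen, intervalIntegral.integral_const,
          intervalIntegral.integral_const_mul, smul_eq_mul, mul_comm A]
    _ ≤ A * (q - p) + B * ρ * (2 * Real.pi * growthDeficit f M τ c) := by
        gcongr
        exact hf.integral_growthDeficit_circleMap_le hρ hρc hc (by linarith) h₁₂ h₂

end IsBoundedExponentialType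

lemma le_integral_max_zero_sq_sub_sq {x X R : ℝ} (hX : 0 ≤ X) (hx : x ∈ Icc 0 R) :
    4 / 3 * X ^ 3 ≤ ∫ a in -X..R + X, max 0 (X ^ 2 - (x - a) ^ 2) := by
  have hint (a b : ℝ) :
      IntervalIntegrable (fun a ↦ max 0 (X ^ 2 - (x - a) ^ 2)) MeasureTheory.volume a b :=
    Continuous.intervalIntegrable (by fun_prop) _ _
  calc 4 / 3 * X ^ 3 = ∫ a in x - X..x + X, (X ^ 2 - (x - a) ^ 2) := by
        rw [intervalIntegral.integral_sub (by simp)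
            (Continuous.intervalIntegrable (by fun_prop) _ _),
          intervalIntegral.integral_comp_sub_left fun a ↦ a ^ 2, integral_pow,
          intervalIntegral.integral_const, smul_eq_mul]
        push_cast
        ring
    _ ≤ ∫ a in x - X..x + X, max 0 (X ^ 2 - (x - a) ^ 2) :=
        intervalIntegral.integral_mono_on (by linarith)
          (Continuous.intervalIntegrable (by fun_prop) _ _) (hint _ _) fun _ _ ↦ le_max_right _ _
    _ ≤ ∫ a in -X..R + X, max 0 (X ^ 2 - (x - a) ^ 2) :=
        intervalIntegral.integral_mono_interval (by linarith [hx.1]) (by linarith)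
          (by linarith [hx.2]) (Filter.Eventually.of_forall fun _ ↦ le_max_left _ _) (hint _ _)

namespace IsBoundedExponentialType

variable {f : ℂ → ℂ} {M τ : ℝ}

lemma card_zeros_mul_le (hf : IsBoundedExponentialType f M τ) {c : ℂ} {X R ρ : ℝ} (hX : 0 ≤ X)
    (hR : 0 ≤ R) (hρ : 0 < ρ) (hρc : ρ < c.im) (hleft : c.re - ρ ≤ -X) (hright : R + X ≤ c.re + ρ)
    (hc : f c ≠ 0) (T : Finset ℝ) (hT : ∀ x ∈ T, f x = 0 ∧ x ∈ Icc 0 R) :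
    T.card * (4 / 3 * X ^ 3) ≤
      (1 + X ^ 2 / (c.im - ρ) ^ 2) * (4 * τ / (3 * Real.pi)) * X ^ 3 * (R + 2 * X) +
        2 * (X ^ 2 + c.im ^ 2) * ρ * (2 * Real.pi * growthDeficit f M τ c) := by
  have := Real.pi_pos
  have hτ := hf.type_nonneg
  have hmass : T.card * (4 / 3 * X ^ 3) ≤
      ∫ a in -X..R + X, ∑ x ∈ T, max 0 (X ^ 2 - (x - a) ^ 2) := by
    rw [intervalIntegral.integral_finsetSum
      fun x _ ↦ Continuous.intervalIntegrable (by fun_prop) _ _, ← nsmul_eq_mul]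
    exact Finset.card_nsmul_le_sum _ _ _ fun x hx ↦
      le_integral_max_zero_sq_sub_sq hX (hT x hx).2
  have hwindow : ∀ z ∈ Metric.sphere c ρ, z.im ≤ c.im → f z ≠ 0 →
      ∑ x ∈ T, max 0 (X ^ 2 - (x - z.re) ^ 2) ≤
        (1 + X ^ 2 / (c.im - ρ) ^ 2) * (4 * τ / (3 * Real.pi)) * X ^ 3 +
          2 * (X ^ 2 + c.im ^ 2) * growthDeficit f M τ z := by
    intro z hz hzc hfz
    have him : c.im - ρ ≤ z.im := by
      have := (Complex.abs_im_le_norm (z - c)).trans_eq (mem_sphere_iff_norm.1 hz)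
      rw [Complex.sub_im] at this
      linarith [(abs_le.1 this).1]
    have : 0 < c.im - ρ := by linarith
    have hz₀ : 0 < z.im := by linarith
    have hD := hf.growthDeficit_nonneg z
    refine (hf.sum_max_zero_sq_sub_sq_le hz₀ hX hfz T fun x hx ↦ (hT x hx).1).trans ?_
    gcongr
  have hint := hf.integral_le_of_le_growthDeficit_lower_semicircle hρ hρc.le hc hleft
    (by linarith) hright (by positivity)
    (G := fun a ↦ ∑ x ∈ T, max 0 (X ^ 2 - (x - a) ^ 2)) (by fun_prop) hwindow
  calc _ ≤ _ := hmass.trans hint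
    _ = _ := by ring

end IsBoundedExponentialType

/-- `‖f z‖` reaches `e^{τ Im z}`, up to subexponential factors, at points whose relative distance to
the positive imaginary axis is arbitrarily small. This is the only lower bound on `f` that the zero
count needs. -/
def ReachesTypeNearImaginaryAxis (f : ℂ → ℂ) (τ : ℝ) : Prop :=
  ∀ γ > 0, ∀ δ > 0, ∀ᶠ L : ℝ in Filter.atTop,
    ∃ z : ℂ, ‖z - L * Complex.I‖ ≤ γ * L ∧ Real.exp (τ * z.im - δ * L) ≤ ‖f z‖

lemma growthDeficit_le_of_exp_le {f : ℂ → ℂ} {M τ e : ℝ} {z : ℂ} (hz : 0 ≤ z.im)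
    (hf : Real.exp (τ * z.im - e) ≤ ‖f z‖) : growthDeficit f M τ z ≤ Real.log M + e := by
  have h := Real.log_le_log (Real.exp_pos _) hf
  rw [Real.log_exp] at h
  rw [growthDeficit, abs_of_nonneg hz]
  linarith

lemma window_main_term_le {κ L s τ : ℝ} (hκ₀ : 0 ≤ κ) (hκ : κ ≤ 1 / 10) (hL : 0 < L)
    (hs : L / 10 ≤ s) (hτ : 0 ≤ τ) :
    (1 + (κ * L) ^ 2 / s ^ 2) * (4 * τ / (3 * Real.pi)) * (κ * L) ^ 3 * (L / 2 + 2 * (κ * L)) ≤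
      (1 + 18 * κ) * (τ / Real.pi) * (L / 2) * (4 / 3 * (κ * L) ^ 3) := by
  have := Real.pi_pos
  have hratio : (κ * L) ^ 2 / s ^ 2 ≤ 100 * κ ^ 2 := by
    have : 0 < s := by linarith
    rw [div_le_iff₀ (by positivity)]
    calc (κ * L) ^ 2 = 100 * κ ^ 2 * (L / 10) ^ 2 := by ring
      _ ≤ 100 * κ ^ 2 * s ^ 2 := by gcongr
  calc _ ≤ (1 + 100 * κ ^ 2) * (4 * τ / (3 * Real.pi)) * (κ * L) ^ 3 * (L / 2 + 2 * (κ * L)) := by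
        gcongr
    _ = ((1 + 100 * κ ^ 2) * (1 + 4 * κ)) * ((τ / Real.pi) * (L / 2) * (4 / 3 * (κ * L) ^ 3)) := by
        field_simp
        ring
    _ ≤ (1 + 18 * κ) * ((τ / Real.pi) * (L / 2) * (4 / 3 * (κ * L) ^ 3)) := by
        gcongr
        nlinarith [sq_nonneg κ]
    _ = _ := by ring

lemma window_error_term_le {κ L y E η : ℝ} (hκ₀ : 0 ≤ κ) (hκ : κ ≤ 1 / 10) (hL : 0 < L)
    (hy₀ : 0 ≤ y) (hy : y ≤ 11 / 10 * L) (hE₀ : 0 ≤ E) (hE : E ≤ 3 / 2 * (η * κ ^ 3 / 108) * L) :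
    2 * ((κ * L) ^ 2 + y ^ 2) * (8 / 10 * L) * (2 * Real.pi * E) ≤
      η / 2 * (L / 2) * (4 / 3 * (κ * L) ^ 3) := by
  have hsq : (κ * L) ^ 2 + y ^ 2 ≤ 2 * L ^ 2 := by
    calc (κ * L) ^ 2 + y ^ 2 ≤ (1 / 10 * L) ^ 2 + (11 / 10 * L) ^ 2 := by gcongr
      _ ≤ 2 * L ^ 2 := by nlinarith [sq_nonneg L]
  calc _ ≤ 2 * (2 * L ^ 2) * (8 / 10 * L) * (2 * 3.15 * E) := by
        gcongr
        exact Real.pi_lt_d2.le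
    _ ≤ 24 * L ^ 3 * E := by
        have : 0 ≤ L ^ 3 * E := by positivity
        nlinarith
    _ ≤ 24 * L ^ 3 * (3 / 2 * (η * κ ^ 3 / 108) * L) := by gcongr
    _ = _ := by ring

/-- The window has half-width `κ L`, and its centre runs along the circle of radius `4 L / 5` about
`z`. The parabola has mass of order `(κ L)³`, so a deficit of order `κ³ L` at `z` is harmless. -/
lemma card_zeros_le_of_exp_le {f : ℂ → ℂ} {M τ : ℝ} (hf : IsBoundedExponentialType f M τ)
    {κ η L : ℝ} {z : ℂ} (hκ₀ : 0 < κ) (hκ : κ ≤ 1 / 10) (hL : 0 < L)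
    (hlogM : Real.log M ≤ η * κ ^ 3 / 108 * (L / 2)) (hz : ‖z - L * Complex.I‖ ≤ 1 / 10 * L)
    (hlow : Real.exp (τ * z.im - η * κ ^ 3 / 108 * L) ≤ ‖f z‖) (T : Finset ℝ)
    (hT : ∀ x ∈ T, f x = 0 ∧ x ∈ Icc 0 (L / 2)) :
    T.card ≤ ((1 + 18 * κ) * (τ / Real.pi) + η / 2) * (L / 2) := by
  have hre := (Complex.abs_re_le_norm (z - L * Complex.I)).trans hz
  have him := (Complex.abs_im_le_norm (z - L * Complex.I)).trans hz
  simp only [Complex.sub_re, Complex.sub_im, Complex.mul_re, Complex.mul_im, Complex.ofReal_re,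
    Complex.ofReal_im, Complex.I_re, Complex.I_im, mul_zero, mul_one, sub_zero,
    add_zero, abs_le] at hre him
  have hfz : f z ≠ 0 := norm_pos_iff.1 ((Real.exp_pos _).trans_le hlow)
  have hdeficit := growthDeficit_le_of_exp_le (M := M) (by linarith [him.1]) hlow
  have hcount := hf.card_zeros_mul_le (X := κ * L) (R := L / 2) (ρ := 8 / 10 * L) (by positivity)
    (by positivity) (by positivity) (by linarith [him.1]) (by nlinarith [hre.2])
    (by nlinarith [hre.1]) hfz T hT
  have hmain := window_main_term_le hκ₀.le hκ hL (s := z.im - 8 / 10 * L) (by linarith [him.1])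
    hf.type_nonneg
  have herror := window_error_term_le (y := z.im) (E := growthDeficit f M τ z) (η := η) hκ₀.le hκ hL
    (by linarith [him.1])
    (by linarith [him.2]) (hf.growthDeficit_nonneg z) (by linarith)
  refine le_of_mul_le_mul_right ?_ (show 0 < 4 / 3 * (κ * L) ^ 3 by positivity)
  linarith

theorem IsBoundedExponentialType.eventually_card_zeros_le {f : ℂ → ℂ} {M τ : ℝ}
    (hf : IsBoundedExponentialType f M τ) (hlow : ReachesTypeNearImaginaryAxis f τ) {η : ℝ}
    (hη : 0 < η) :
    ∀ᶠ R : ℝ in Filter.atTop, ∀ T : Finset ℝ, (∀ x ∈ T, f x = 0 ∧ x ∈ Icc 0 R) →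
      T.card ≤ (τ / Real.pi + η) * R := by
  have := Real.pi_pos
  have hτ := hf.type_nonneg
  set κ := min (1 / 10) (η / (36 * (τ / Real.pi + 1)))
  have hκ₀ : 0 < κ := lt_min (by norm_num) (by positivity)
  have hκη : κ * (36 * (τ / Real.pi + 1)) ≤ η :=
    (le_div_iff₀ (by positivity)).1 (min_le_right _ _)
  set δ := η * κ ^ 3 / 108
  have hδ : 0 < δ := by positivity
  have hdouble : Filter.Tendsto (fun R : ℝ ↦ 2 * R) Filter.atTop Filter.atTop :=
    Filter.tendsto_id.const_mul_atTop two_pos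
  filter_upwards [hdouble.eventually (hlow (1 / 10) (by norm_num) δ hδ),
    Filter.eventually_gt_atTop 0, Filter.eventually_ge_atTop (Real.log M / δ)]
    with R ⟨z, hz, hfz⟩ hR hRM T hT
  have hcard := card_zeros_le_of_exp_le hf (η := η) hκ₀ (min_le_left _ _)
    (show 0 < 2 * R by positivity) (by
      rw [mul_div_cancel_left₀ R two_ne_zero, mul_comm]
      exact (div_le_iff₀ hδ).1 hRM) hz hfz T (by simpa using hT)
  rw [mul_div_cancel_left₀ R two_ne_zero] at hcard
  refine hcard.trans (mul_le_mul_of_nonneg_right ?_ hR.le)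
  linarith

/-! ### Lower bound for a sine transform near the imaginary axis -/

/-- The Laplace transform `∫₀ᵇ q(s) e^{-ps} ds` of a function on `[0, b]`. -/
noncomputable def finiteLaplace (q : ℝ → ℂ) (b : ℝ) (p : ℂ) : ℂ :=
  ∫ s in (0 : ℝ)..b, q s * Complex.exp (-(p * s))

section FiniteLaplace

variable {q : ℝ → ℂ} (hq : Continuous q) (b : ℝ)
include hq

lemma hasDerivAt_finiteLaplace (p : ℂ) :
    HasDerivAt (finiteLaplace q b) (finiteLaplace (fun s ↦ (-s : ℂ) * q s) b p) p := by
  refine (intervalIntegral.hasDerivAt_integral_of_dominated_loc_of_deriv_le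
    (F := fun p s ↦ q s * Complex.exp (-(p * s)))
    (F' := fun p s ↦ -s * q s * Complex.exp (-(p * s)))
    (bound := fun s ↦ |s| * ‖q s‖ * Real.exp ((‖p‖ + 1) * |s|)) (Metric.ball_mem_nhds p one_pos)
    (Filter.Eventually.of_forall fun x ↦ Continuous.aestronglyMeasurable (by fun_prop))
    (Continuous.intervalIntegrable (by fun_prop) _ _)
    (Continuous.aestronglyMeasurable (by fun_prop))
    (Filter.Eventually.of_forall fun s _ x hx ↦ ?_)
    (Continuous.intervalIntegrable (by fun_prop) _ _)
    (Filter.Eventually.of_forall fun s _ x _ ↦ ?_)).2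
  · have hxp : ‖x‖ ≤ ‖p‖ + 1 := by
      have := norm_le_norm_add_norm_sub' x p
      rw [Metric.mem_ball, dist_eq_norm] at hx
      linarith
    rw [norm_mul, norm_mul, norm_neg, Complex.norm_real, Real.norm_eq_abs, Complex.norm_exp]
    gcongr
    calc (-(x * s)).re ≤ ‖-(x * (s : ℂ))‖ := Complex.re_le_norm _
      _ = ‖x‖ * |s| := by rw [norm_neg, norm_mul, Complex.norm_real, Real.norm_eq_abs]
      _ ≤ (‖p‖ + 1) * |s| := by gcongr
  · have hexp := ((((hasDerivAt_id' x).mul_const (s : ℂ)).fun_neg).cexp).const_mul (q s)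
    exact hexp.congr_deriv (by ring)

lemma differentiable_finiteLaplace : Differentiable ℂ (finiteLaplace q b) :=
  fun p ↦ (hasDerivAt_finiteLaplace hq b p).differentiableAt

lemma iteratedDeriv_finiteLaplace (n : ℕ) :
    iteratedDeriv n (finiteLaplace q b) = finiteLaplace (fun s ↦ (-s : ℂ) ^ n * q s) b := by
  induction n with
  | zero => simp only [iteratedDeriv_zero, pow_zero, one_mul]
  | succ n ih =>
    funext p
    rw [iteratedDeriv_succ, ih, (hasDerivAt_finiteLaplace (by fun_prop) b p).deriv]
    congr 1
    funext s
    ring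

variable {b} in
lemma norm_finiteLaplace_le (hb : 0 ≤ b) (p : ℂ) :
    ‖finiteLaplace q b p‖ ≤ (∫ s in (0 : ℝ)..b, ‖q s‖) * Real.exp (b * max 0 (-p.re)) := by
  rw [← intervalIntegral.integral_mul_const]
  refine intervalIntegral.norm_integral_le_of_norm_le hb
    (Filter.Eventually.of_forall fun s hs ↦ ?_) (Continuous.intervalIntegrable (by fun_prop) _ _)
  rw [norm_mul, Complex.norm_exp, Complex.neg_re, Complex.re_mul_ofReal]
  gcongr
  calc -(p.re * s) = s * -p.re := by ring
    _ ≤ s * max 0 (-p.re) := mul_le_mul_of_nonneg_left (le_max_right _ _) hs.1.le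
    _ ≤ b * max 0 (-p.re) := mul_le_mul_of_nonneg_right hs.2 (le_max_left _ _)

end FiniteLaplace

lemma finiteLaplace_comp_sub_left (q : ℝ → ℂ) (b : ℝ) (p : ℂ) :
    finiteLaplace (fun s ↦ q (b - s)) b p = Complex.exp (-(p * b)) * finiteLaplace q b (-p) := by
  have hsubst := intervalIntegral.integral_comp_sub_left (a := 0) (b := b)
    (fun t ↦ q t * Complex.exp (-(p * ((b - t : ℝ) : ℂ)))) b
  simp only [sub_sub_cancel, sub_self, sub_zero] at hsubst
  rw [finiteLaplace, hsubst, finiteLaplace, ← intervalIntegral.integral_const_mul]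
  congr 1
  funext t
  rw [mul_left_comm, ← Complex.exp_add]
  congr 2
  push_cast
  ring

/-- The weight `(s/a) e^{1 - s/a}`. It peaks at `s = a` with value `1`, and its `n`-th power is, up
to a constant, the kernel of the `n`-th derivative of a Laplace transform at the point `n / a`. -/
noncomputable def laplacePeak (a s : ℝ) : ℝ := s / a * Real.exp (1 - s / a)

lemma continuous_laplacePeak (a : ℝ) : Continuous (laplacePeak a) := by
  unfold laplacePeak
  fun_prop

lemma laplacePeak_self {a : ℝ} (ha : a ≠ 0) : laplacePeak a a = 1 := by
  rw [laplacePeak, div_self ha, sub_self, Real.exp_zero, one_mul]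

lemma laplacePeak_nonneg {a s : ℝ} (ha : 0 ≤ a) (hs : 0 ≤ s) : 0 ≤ laplacePeak a s := by
  unfold laplacePeak
  positivity

lemma laplacePeak_lt_one {a s : ℝ} (ha : a ≠ 0) (hsa : s ≠ a) : laplacePeak a s < 1 := by
  have hne : s / a - 1 ≠ 0 := sub_ne_zero.2 (by rwa [ne_eq, div_eq_one_iff_eq ha])
  have hlt := Real.add_one_lt_exp hne
  rw [sub_add_cancel] at hlt
  calc laplacePeak a s < Real.exp (s / a - 1) * Real.exp (1 - s / a) :=
        mul_lt_mul_of_pos_right hlt (Real.exp_pos _)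
    _ = 1 := by rw [← Real.exp_add, sub_add_sub_cancel, sub_self, Real.exp_zero]

lemma one_half_le_laplacePeak {a s : ℝ} (ha : 0 < a) (hs : s ∈ Icc (a / 2) a) :
    1 / 2 ≤ laplacePeak a s := by
  have hhalf : 1 / 2 ≤ s / a := by rw [le_div_iff₀ ha]; linarith [hs.1]
  have hone : s / a ≤ 1 := (div_le_one ha).2 hs.2
  exact hhalf.trans (le_mul_of_one_le_right (by linarith) (Real.one_le_exp (by linarith)))

lemma mul_pow_le_integral_laplacePeak_pow {a b : ℝ} (ha : 0 < a) (hab : a ≤ b) (n : ℕ) :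
    a / 2 * (1 / 2) ^ n ≤ ∫ s in Icc 0 b, laplacePeak a s ^ n := by
  have hint : MeasureTheory.IntegrableOn (fun s ↦ laplacePeak a s ^ n) (Icc 0 b) :=
    ((continuous_laplacePeak a).pow n).continuousOn.integrableOn_compact isCompact_Icc
  have hsub : Icc (a / 2) a ⊆ Icc 0 b := Icc_subset_Icc (by positivity) hab
  calc a / 2 * (1 / 2) ^ n = ∫ _ in Icc (a / 2) a, (1 / 2 : ℝ) ^ n := by
        rw [MeasureTheory.setIntegral_const, Real.volume_real_Icc_of_le (by linarith), smul_eq_mul]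
        ring
    _ ≤ ∫ s in Icc (a / 2) a, laplacePeak a s ^ n :=
        MeasureTheory.setIntegral_mono_on (MeasureTheory.integrable_const _)
          (hint.mono_set hsub) measurableSet_Icc fun s hs ↦
            pow_le_pow_left₀ (by norm_num) (one_half_le_laplacePeak ha hs) n
    _ ≤ ∫ s in Icc 0 b, laplacePeak a s ^ n := by
        refine MeasureTheory.setIntegral_mono_set hint ?_ hsub.eventuallyLE
        filter_upwards [MeasureTheory.ae_restrict_mem measurableSet_Icc] with s hs
        exact pow_nonneg (laplacePeak_nonneg ha.le hs.1) n

lemma eventually_le_norm_integral_laplacePeak_pow {q : ℝ → ℂ} (hq : Continuous q) {a b : ℝ}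
    (ha : 0 < a) (hab : a < b) (hqa : q a ≠ 0) :
    ∀ᶠ n : ℕ in Filter.atTop, ‖q a‖ * a / 4 * (1 / 2) ^ n ≤
      ‖∫ s in Icc 0 b, (laplacePeak a s ^ n : ℝ) • q s‖ := by
  have hpeak := tendsto_setIntegral_pow_smul_of_unique_maximum_of_isCompact_of_continuousOn
    (μ := MeasureTheory.volume) (x₀ := a) (isCompact_Icc (a := 0) (b := b))
    (continuous_laplacePeak a).continuousOn
    (fun s _ hsa ↦ (laplacePeak_lt_one ha.ne' hsa).trans_eq (laplacePeak_self ha.ne').symm)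
    (fun s hs ↦ laplacePeak_nonneg ha.le hs.1) (by rw [laplacePeak_self ha.ne']; exact one_pos)
    (by rw [interior_Icc]; exact subset_closure ⟨ha, hab⟩) hq.continuousOn
  filter_upwards [hpeak.norm.eventually_const_lt (half_lt_self (norm_pos_iff.2 hqa))] with n hn
  have hmass := mul_pow_le_integral_laplacePeak_pow ha hab.le n
  have hpos : 0 < ∫ s in Icc 0 b, laplacePeak a s ^ n := lt_of_lt_of_le (by positivity) hmass
  rw [norm_smul, norm_inv, Real.norm_of_nonneg hpos.le, lt_inv_mul_iff₀ hpos] at hn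
  calc ‖q a‖ * a / 4 * (1 / 2) ^ n = a / 2 * (1 / 2) ^ n * (‖q a‖ / 2) := by ring
    _ ≤ (∫ s in Icc 0 b, laplacePeak a s ^ n) * (‖q a‖ / 2) := by gcongr
    _ ≤ _ := hn.le

lemma iteratedDeriv_finiteLaplace_div {q : ℝ → ℂ} (hq : Continuous q) {a b : ℝ} (ha : a ≠ 0)
    (hb : 0 ≤ b) (n : ℕ) :
    iteratedDeriv n (finiteLaplace q b) ((n / a : ℝ) : ℂ) =
      ((-(a * Real.exp (-1))) ^ n : ℝ) • ∫ s in Icc 0 b, (laplacePeak a s ^ n : ℝ) • q s := by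
  rw [iteratedDeriv_finiteLaplace hq, finiteLaplace, MeasureTheory.integral_Icc_eq_integral_Ioc,
    ← intervalIntegral.integral_of_le hb, ← intervalIntegral.integral_smul]
  congr 1
  funext s
  have hweight : (-s) ^ n * Real.exp (-(n / a * s)) =
      (-(a * Real.exp (-1))) ^ n * laplacePeak a s ^ n := by
    rw [← mul_pow, laplacePeak, show -(n / a * s) = n * -(s / a) by ring, Real.exp_nat_mul,
      ← mul_pow, show 1 - s / a = 1 + -(s / a) by ring, Real.exp_add, Real.exp_neg 1]
    field_simp
  rw [smul_smul, ← hweight, Complex.real_smul]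
  push_cast
  ring

lemma norm_integral_laplacePeak_pow_le {q : ℝ → ℂ} (hq : Continuous q) {a b γ D : ℝ} (ha : 0 < a)
    (hb : 0 ≤ b) (hγ : 0 < γ) {n : ℕ} (hn : n ≠ 0)
    (hD : ∀ p ∈ Metric.sphere ((n / a : ℝ) : ℂ) (γ * (n / a)), ‖finiteLaplace q b p‖ ≤ D) :
    ‖∫ s in Icc 0 b, (laplacePeak a s ^ n : ℝ) • q s‖ ≤ (Real.exp 1 / γ) ^ n * D := by
  have : (0 : ℝ) < n := by positivity
  have hr : 0 < γ * (n / a) := by positivity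
  have hD₀ : 0 ≤ D := (norm_nonneg _).trans
    (hD _ (NormedSpace.sphere_nonempty (x := ((n / a : ℝ) : ℂ)).2 hr.le).choose_spec)
  have hcauchy := Complex.norm_iteratedDeriv_le_of_forall_mem_sphere_norm_le n hr
    (differentiable_finiteLaplace hq b).diffContOnCl hD
  rw [iteratedDeriv_finiteLaplace_div hq ha.ne' hb, norm_smul, norm_pow, norm_neg,
    Real.norm_of_nonneg (by positivity)] at hcauchy
  have hfact : (n.factorial : ℝ) ≤ n ^ n := by exact_mod_cast n.factorial_le_pow
  refine le_of_mul_le_mul_left ?_ (show 0 < (a * Real.exp (-1)) ^ n by positivity)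
  calc _ ≤ n.factorial * D / (γ * (n / a)) ^ n := hcauchy
    _ ≤ n ^ n * D / (γ * (n / a)) ^ n := by gcongr
    _ = (a * Real.exp (-1)) ^ n * ((Real.exp 1 / γ) ^ n * D) := by
        rw [Real.exp_neg, ← mul_assoc, ← mul_pow, mul_div_right_comm, ← div_pow]
        congr 2
        field_simp

lemma eventually_exists_lt_norm_finiteLaplace {q : ℝ → ℂ} (hq : Continuous q) {a b γ σ : ℝ}
    (ha : 0 < a) (hab : a < b) (hqa : q a ≠ 0) (hγ : 0 < γ)
    (hσ : 2 * Real.exp 1 / γ < Real.exp (σ / a)) (C : ℝ) :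
    ∀ᶠ n : ℕ in Filter.atTop, ∃ p ∈ Metric.sphere ((n / a : ℝ) : ℂ) (γ * (n / a)),
      C * Real.exp (-(σ * (n / a))) < ‖finiteLaplace q b p‖ := by
  set r := 2 * Real.exp 1 / γ * Real.exp (-(σ / a))
  have hr₀ : 0 ≤ r := by positivity
  have hr₁ : r < 1 := by
    calc r < Real.exp (σ / a) * Real.exp (-(σ / a)) :=
          mul_lt_mul_of_pos_right hσ (Real.exp_pos _)
      _ = 1 := by rw [← Real.exp_add, add_neg_cancel, Real.exp_zero]
  have hlim := (tendsto_pow_atTop_nhds_zero_of_lt_one hr₀ hr₁).const_mul C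
  rw [mul_zero] at hlim
  have hpos : 0 < ‖q a‖ * a / 4 := by positivity
  filter_upwards [eventually_le_norm_integral_laplacePeak_pow hq ha hab hqa,
    hlim.eventually_lt_const hpos, Filter.eventually_ne_atTop 0] with n hlow hsmall hn
  by_contra! hcon
  have hup := norm_integral_laplacePeak_pow_le hq ha (ha.trans hab).le hγ hn hcon
  have hrn : C * r ^ n * (1 / 2) ^ n =
      (Real.exp 1 / γ) ^ n * (C * Real.exp (-(σ * (n / a)))) := by
    rw [show -(σ * (n / a)) = n * -(σ / a) by ring, Real.exp_nat_mul, mul_assoc, ← mul_pow,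
      mul_left_comm, ← mul_pow]
    congr 2
    ring
  exact absurd (hlow.trans (hup.trans_eq hrn.symm)) (not_le.2 (by gcongr))

/-- The sine transform `∫₀ᵇ q(t) sin(zt) dt` of a function on `[0, b]`. -/
noncomputable def sineTransform (q : ℝ → ℂ) (b : ℝ) (z : ℂ) : ℂ :=
  ∫ t in (0 : ℝ)..b, q t * Complex.sin (z * t)

lemma exists_ne_zero_and_lt_exp_div {q : ℝ → ℂ} {b : ℝ} (hb : 0 < b)
    (hqb : ∀ δ > 0, ∃ t ∈ Ioo (b - δ) b, q t ≠ 0) {c σ : ℝ} (hc : 0 < c) (hσ : 0 < σ) :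
    ∃ a, 0 < a ∧ a < b ∧ q (b - a) ≠ 0 ∧ c < Real.exp (σ / a) := by
  obtain ⟨t, ht, hqt⟩ := hqb (min b (σ / c)) (by positivity)
  have hbt : 0 < b - t := by linarith [ht.2]
  have hlt : b - t < min b (σ / c) := by linarith [ht.1]
  refine ⟨b - t, hbt, hlt.trans_le (min_le_left _ _), by rwa [sub_sub_cancel], ?_⟩
  calc c ≤ σ / (b - t) := (le_div_comm₀ hc hbt).2 (hlt.le.trans (min_le_right _ _))
    _ < σ / (b - t) + 1 := lt_add_one _
    _ ≤ Real.exp (σ / (b - t)) := Real.add_one_le_exp _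

lemma norm_I_mul_sub_le_of_mem_sphere {p : ℂ} {γ' γ L' L : ℝ}
    (hp : p ∈ Metric.sphere (L' : ℂ) (γ' * L')) (hγ : 0 ≤ γ) (hγ' : γ' ≤ γ / 2) (hL'₀ : 0 ≤ L')
    (hL'L : L' ≤ L) (hLL' : L ≤ L' + γ / 2 * L) :
    ‖Complex.I * p - L * Complex.I‖ ≤ γ * L := by
  rw [mem_sphere_iff_norm] at hp
  calc ‖Complex.I * p - L * Complex.I‖ = ‖(p - L') - ((L - L' : ℝ) : ℂ)‖ := by
        rw [mul_comm (L : ℂ), ← mul_sub, norm_mul, Complex.norm_I, one_mul]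
        congr 1
        push_cast
        ring
    _ ≤ γ' * L' + (L - L') := by
        refine (norm_sub_le _ _).trans (add_le_add hp.le ?_)
        rw [Complex.norm_real, Real.norm_of_nonneg (by linarith)]
    _ ≤ γ / 2 * L + γ / 2 * L := by
        refine add_le_add ?_ (by linarith)
        gcongr
    _ = γ * L := by ring

section SineTransform

variable {q : ℝ → ℂ} (hq : Continuous q) {b : ℝ}
include hq

lemma sineTransform_eq_finiteLaplace_sub (z : ℂ) :
    sineTransform q b z = Complex.I / 2 *
      (finiteLaplace q b (Complex.I * z) - finiteLaplace q b (-(Complex.I * z))) := by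
  unfold sineTransform finiteLaplace
  rw [← intervalIntegral.integral_sub (Continuous.intervalIntegrable (by fun_prop) _ _)
    (Continuous.intervalIntegrable (by fun_prop) _ _), ← intervalIntegral.integral_const_mul]
  congr 1
  funext t
  rw [Complex.sin, show -(z * t) * Complex.I = -(Complex.I * z * t) by ring,
    show z * t * Complex.I = -(-(Complex.I * z) * t) by ring]
  ring

lemma isBoundedExponentialType_sineTransform (hb : 0 ≤ b) :
    IsBoundedExponentialType (sineTransform q b) (1 + ∫ t in (0 : ℝ)..b, ‖q t‖) b where
  differentiable := by
    have hL := differentiable_finiteLaplace hq b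
    rw [funext (sineTransform_eq_finiteLaplace_sub hq)]
    exact ((hL.comp (by fun_prop : Differentiable ℂ fun z ↦ Complex.I * z)).sub
      (hL.comp (by fun_prop : Differentiable ℂ fun z ↦ -(Complex.I * z)))).const_mul _
  one_le := le_add_of_nonneg_right
    (intervalIntegral.integral_nonneg hb fun t _ ↦ norm_nonneg (q t))
  type_nonneg := hb
  norm_le z := by
    set G := ∫ t in (0 : ℝ)..b, ‖q t‖
    have hG : 0 ≤ G := intervalIntegral.integral_nonneg hb fun t _ ↦ norm_nonneg (q t)
    have hL (p : ℂ) (hp : |p.re| = |z.im|) :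
        ‖finiteLaplace q b p‖ ≤ G * Real.exp (b * |z.im|) := by
      refine (norm_finiteLaplace_le hq hb p).trans ?_
      gcongr
      exact max_le (abs_nonneg _) (hp ▸ neg_le_abs p.re)
    rw [sineTransform_eq_finiteLaplace_sub hq, norm_mul, norm_div, Complex.norm_I,
      Complex.norm_two]
    have hsub := (norm_sub_le _ _).trans (add_le_add (hL (Complex.I * z) (by simp))
      (hL (-(Complex.I * z)) (by simp)))
    linarith [Real.exp_pos (b * |z.im|)]

lemma norm_finiteLaplace_comp_sub_left_le (hb : 0 ≤ b) {p : ℂ} (hp : 0 ≤ p.re) :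
    ‖finiteLaplace (fun s ↦ q (b - s)) b p‖ ≤ Real.exp (-(b * p.re)) *
      (2 * ‖sineTransform q b (Complex.I * p)‖ + ∫ t in (0 : ℝ)..b, ‖q t‖) := by
  have hsplit : finiteLaplace q b (-p) =
      finiteLaplace q b p + -(2 * Complex.I) * sineTransform q b (Complex.I * p) := by
    rw [sineTransform_eq_finiteLaplace_sub hq, ← mul_assoc Complex.I Complex.I, Complex.I_mul_I,
      neg_one_mul, neg_neg]
    linear_combination (finiteLaplace q b (-p) - finiteLaplace q b p) * Complex.I_sq
  have hLp := norm_finiteLaplace_le hq hb p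
  rw [max_eq_left (by linarith), mul_zero, Real.exp_zero, mul_one] at hLp
  rw [finiteLaplace_comp_sub_left, norm_mul, Complex.norm_exp, Complex.neg_re,
    Complex.re_mul_ofReal, mul_comm p.re, hsplit]
  gcongr
  refine (norm_add_le _ _).trans ?_
  rw [norm_mul, norm_neg, norm_mul, Complex.norm_I, Complex.norm_two]
  linarith

lemma exp_le_norm_sineTransform (hb : 0 ≤ b) {p : ℂ} {s : ℝ} (hp : 0 ≤ p.re) (hs : s ≤ b * p.re)
    (hlow : (2 + ∫ t in (0 : ℝ)..b, ‖q t‖) * Real.exp (-s) <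
      ‖finiteLaplace (fun s ↦ q (b - s)) b p‖) :
    Real.exp (b * p.re - s) ≤ ‖sineTransform q b (Complex.I * p)‖ := by
  set G := ∫ t in (0 : ℝ)..b, ‖q t‖
  have hG : 0 ≤ G := intervalIntegral.integral_nonneg hb fun t _ ↦ norm_nonneg (q t)
  have hlt := hlow.trans_le (norm_finiteLaplace_comp_sub_left_le hq hb hp)
  have hmul := mul_lt_mul_of_pos_left hlt (Real.exp_pos (b * p.re))
  rw [← mul_assoc (Real.exp _) (Real.exp _), ← Real.exp_add, add_neg_cancel, Real.exp_zero,
    one_mul, mul_left_comm, ← Real.exp_add, ← sub_eq_add_neg] at hmul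
  have hone : 1 ≤ Real.exp (b * p.re - s) := Real.one_le_exp (by linarith)
  nlinarith

theorem reachesTypeNearImaginaryAxis_sineTransform (hb : 0 < b)
    (hqb : ∀ δ > 0, ∃ t ∈ Ioo (b - δ) b, q t ≠ 0) :
    ReachesTypeNearImaginaryAxis (sineTransform q b) b := by
  intro γ hγ δ hδ
  set γ' := min (γ / 2) (1 / 2)
  set σ := min δ (b / 2)
  have hγ' : 0 < γ' := lt_min (by positivity) (by norm_num)
  obtain ⟨a, ha, hab, hqa, hdecay⟩ := exists_ne_zero_and_lt_exp_div hb hqb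
    (c := 2 * Real.exp 1 / γ') (σ := σ) (by positivity) (by positivity)
  have hnat := eventually_exists_lt_norm_finiteLaplace (q := fun s ↦ q (b - s)) (by fun_prop) ha
    hab hqa hγ' hdecay (2 + ∫ t in (0 : ℝ)..b, ‖q t‖)
  filter_upwards [(tendsto_nat_floor_atTop.comp
    (Filter.tendsto_id.const_mul_atTop ha)).eventually hnat,
    Filter.eventually_ge_atTop (1 / a / (γ / 2)), Filter.eventually_gt_atTop 0]
    with L ⟨p, hp, hlow⟩ hLγ hL
  simp only [Function.comp_apply, id_eq] at hp hlow
  set L' : ℝ := ⌊a * L⌋₊ / a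
  have hL'₀ : 0 ≤ L' := by positivity
  have hL'L : L' ≤ L := (div_le_iff₀' ha).2 (Nat.floor_le (by positivity))
  have hLL' : L ≤ L' + 1 / a := by
    rw [← add_div, le_div_iff₀' ha]
    exact (Nat.lt_floor_add_one _).le
  have hgrid : 1 / a ≤ γ / 2 * L := (div_le_iff₀' (by positivity)).1 hLγ
  refine ⟨Complex.I * p, norm_I_mul_sub_le_of_mem_sphere hp hγ.le (min_le_left _ _) hL'₀ hL'L
    (by linarith), ?_⟩
  have hre := (Complex.abs_re_le_norm _).trans (mem_sphere_iff_norm.1 hp).le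
  rw [Complex.sub_re, Complex.ofReal_re, abs_le] at hre
  have hhalf : L' / 2 ≤ p.re := by nlinarith [min_le_right (γ / 2) (1 / 2)]
  have hσL' : σ * L' ≤ b * p.re := by
    calc σ * L' ≤ b / 2 * L' := by gcongr; exact min_le_right _ _
      _ = b * (L' / 2) := by ring
      _ ≤ b * p.re := by gcongr
  refine le_trans ?_ (exp_le_norm_sineTransform hq hb.le (by linarith) hσL' hlow)
  rw [Complex.I_mul_im]
  gcongr
  exact min_le_left _ _

end SineTransform

/-! ### The transmutation kernel -/

lemma continuous_intervalIntegral_of_continuous {X : Type*} [TopologicalSpace X]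
    [LocallyCompactSpace X] {f : X → ℝ → ℝ} (hf : Continuous (Function.uncurry f)) {a b : X → ℝ}
    (ha : Continuous a) (hb : Continuous b) : Continuous fun x ↦ ∫ t in (a x)..(b x), f x t := by
  have hint : ∀ x c d, IntervalIntegrable (f x) MeasureTheory.volume c d := fun x c d ↦
    (hf.comp (by fun_prop : Continuous fun t : ℝ ↦ (x, t))).intervalIntegrable c d
  have hsplit : ∀ x, ∫ t in (a x)..(b x), f x t =
      (∫ t in (0 : ℝ)..(b x), f x t) - ∫ t in (0 : ℝ)..(a x), f x t := fun x ↦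
    (intervalIntegral.integral_interval_sub_left (hint x _ _) (hint x _ _)).symm
  simp only [hsplit]
  exact (intervalIntegral.continuous_parametric_intervalIntegral_of_continuous hf hb).sub
    (intervalIntegral.continuous_parametric_intervalIntegral_of_continuous hf ha)

lemma integral_integral_triangle_swap {f : ℝ → ℝ → ℝ} (hf : Continuous (Function.uncurry f))
    {a b : ℝ} (hab : a ≤ b) :
    ∫ q in a..b, ∫ r in q..b, f q r = ∫ r in a..b, ∫ q in a..r, f q r := by
  set F : ℝ → ℝ → ℝ := fun q r ↦ {p : ℝ × ℝ | p.1 < p.2}.indicator (Function.uncurry f) (q, r)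
  have hF : MeasureTheory.Integrable (Function.uncurry F)
      ((MeasureTheory.volume.restrict (Ioc a b)).prod
        (MeasureTheory.volume.restrict (Ioc a b))) := by
    rw [MeasureTheory.Measure.prod_restrict]
    exact ((hf.continuousOn.integrableOn_compact (isCompact_Icc.prod isCompact_Icc)).mono_set
      (prod_mono Ioc_subset_Icc_self Ioc_subset_Icc_self)).indicator
      (measurableSet_lt measurable_fst measurable_snd)
  have hleft : ∀ q ∈ Ioc a b, ∫ r in q..b, f q r = ∫ r in Ioc a b, F q r := by
    intro q hq
    have hFq : F q = (Ioi q).indicator (f q) := by ext r; simp [F, indicator]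
    rw [hFq, MeasureTheory.setIntegral_indicator measurableSet_Ioi, Ioc_inter_Ioi,
      sup_eq_right.2 hq.1.le, intervalIntegral.integral_of_le hq.2]
  have hright : ∀ r ∈ Ioc a b, ∫ q in a..r, f q r = ∫ q in Ioc a b, F q r := by
    intro r hr
    have hFr : (fun q ↦ F q r) = (Iio r).indicator (fun q ↦ f q r) := by
      ext q; simp [F, indicator]
    have hinter : Ioc a b ∩ Iio r = Ioo a r := by ext; grind
    rw [hFr, MeasureTheory.setIntegral_indicator measurableSet_Iio, hinter,
      intervalIntegral.integral_of_le hr.1.le, MeasureTheory.integral_Ioc_eq_integral_Ioo]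
  rw [intervalIntegral.integral_of_le hab, intervalIntegral.integral_of_le hab,
    MeasureTheory.setIntegral_congr_fun measurableSet_Ioc hleft,
    MeasureTheory.setIntegral_congr_fun measurableSet_Ioc hright,
    MeasureTheory.integral_integral_swap hF]

lemma integral_neg_self_eq_integral_add {f : ℝ → ℝ} (hf : Continuous f) (x : ℝ) :
    ∫ t in (-x)..x, f t = ∫ t in (0 : ℝ)..x, (f t + f (-t)) := by
  have hint : ∀ a b, IntervalIntegrable f MeasureTheory.volume a b := hf.intervalIntegrable
  have hneg : Continuous fun t ↦ f (-t) := by fun_prop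
  rw [intervalIntegral.integral_add (hint _ _) (hneg.intervalIntegrable _ _),
    intervalIntegral.integral_comp_neg, neg_zero, add_comm,
    intervalIntegral.integral_add_adjacent_intervals (hint _ _) (hint _ _)]

/-- The integrand of the Goursat integral equation for the transmutation kernel of
`-d²/dx² + V`, along the characteristic through `(x, w)`. -/
noncomputable def goursatIntegrand (V : ℝ → ℝ) (K : ℝ → ℝ → ℝ) (x w : ℝ) : ℝ :=
  1 / 2 * V ((x - w) / 2) - ∫ r in ((x - w) / 2)..x, V r * K r (r - (x - w))

/-- The right-hand side of the Goursat integral equation. Its fixed points are the weak solutions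
of `K_xx - K_uu = V K` with `K(x, 0) = 0` and `K(x, x) = ½ ∫₀ˣ V`, extended to be odd in `u`. -/
noncomputable def goursatMap (V : ℝ → ℝ) (K : ℝ → ℝ → ℝ) (x u : ℝ) : ℝ :=
  1 / 2 * ∫ w in (-u)..u, goursatIntegrand V K x w

lemma goursatMap_neg (V : ℝ → ℝ) (K : ℝ → ℝ → ℝ) (x u : ℝ) :
    goursatMap V K x (-u) = -goursatMap V K x u := by
  unfold goursatMap
  rw [neg_neg, intervalIntegral.integral_symm]
  ring

lemma continuous_goursatIntegrand {V : ℝ → ℝ} (hV : Continuous V) {K : ℝ → ℝ → ℝ}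
    (hK : Continuous (Function.uncurry K)) :
    Continuous (Function.uncurry (goursatIntegrand V K)) := by
  have hKc : Continuous fun p : (ℝ × ℝ) × ℝ ↦ K p.2 (p.2 - (p.1.1 - p.1.2)) :=
    hK.comp (by fun_prop : Continuous fun p : (ℝ × ℝ) × ℝ ↦ (p.2, p.2 - (p.1.1 - p.1.2)))
  refine Continuous.sub (by fun_prop) (continuous_intervalIntegral_of_continuous
    (f := fun (p : ℝ × ℝ) r ↦ V r * K r (r - (p.1 - p.2))) ?_ (by fun_prop) continuous_fst)
  exact (hV.comp continuous_snd).mul hKc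

lemma continuous_goursatMap {V : ℝ → ℝ} (hV : Continuous V) {K : ℝ → ℝ → ℝ}
    (hK : Continuous (Function.uncurry K)) : Continuous (Function.uncurry (goursatMap V K)) :=
  continuous_const.mul <| continuous_intervalIntegral_of_continuous
    (f := fun (p : ℝ × ℝ) w ↦ goursatIntegrand V K p.1 w)
    ((continuous_goursatIntegrand hV hK).comp
      (by fun_prop : Continuous fun p : (ℝ × ℝ) × ℝ ↦ (p.1.1, p.2)))
    continuous_snd.neg continuous_snd

/-- The continuous extension to the plane, by projection, of `e^{mx} L(x, u)` from
`[0, ℓ] × [-ℓ, ℓ]`. The exponential weight makes the Goursat map a contraction when `m` is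
large. -/
noncomputable def expWeightExtend {ℓ : ℝ} (hℓ : 0 ≤ ℓ) (m : ℝ)
    (L : C(Icc 0 ℓ × Icc (-ℓ) ℓ, ℝ)) (x u : ℝ) : ℝ :=
  Real.exp (m * x) * L (projIcc 0 ℓ hℓ x, projIcc (-ℓ) ℓ (neg_le_self hℓ) u)

lemma continuous_expWeightExtend {ℓ : ℝ} (hℓ : 0 ≤ ℓ) (m : ℝ) (L : C(Icc 0 ℓ × Icc (-ℓ) ℓ, ℝ)) :
    Continuous (Function.uncurry (expWeightExtend hℓ m L)) := by
  have : Continuous (projIcc 0 ℓ hℓ) := continuous_projIcc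
  have : Continuous (projIcc (-ℓ) ℓ (neg_le_self hℓ)) := continuous_projIcc
  unfold expWeightExtend Function.uncurry
  fun_prop

lemma abs_expWeightExtend_sub_le {ℓ : ℝ} (hℓ : 0 ≤ ℓ) (m : ℝ)
    (L₁ L₂ : C(Icc 0 ℓ × Icc (-ℓ) ℓ, ℝ)) (x u : ℝ) :
    |expWeightExtend hℓ m L₁ x u - expWeightExtend hℓ m L₂ x u| ≤
      Real.exp (m * x) * dist L₁ L₂ := by
  rw [expWeightExtend, expWeightExtend, ← mul_sub, abs_mul, Real.abs_exp, ← Real.dist_eq]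
  gcongr
  exact ContinuousMap.dist_apply_le_dist _

/-- The Goursat map in the weighted coordinates `K = e^{mx} L`. The second argument is clamped to
`[-x, x]`, the range on which the Goursat equation is imposed. -/
noncomputable def weightedGoursatMap {V : ℝ → ℝ} (hV : Continuous V) {ℓ : ℝ} (hℓ : 0 ≤ ℓ) (m : ℝ)
    (L : C(Icc 0 ℓ × Icc (-ℓ) ℓ, ℝ)) : C(Icc 0 ℓ × Icc (-ℓ) ℓ, ℝ) where
  toFun p := Real.exp (-(m * p.1)) *
    goursatMap V (expWeightExtend hℓ m L) p.1 (max (-p.1) (min p.2 p.1))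
  continuous_toFun := by
    have hc : Continuous fun p : Icc 0 ℓ × Icc (-ℓ) ℓ ↦
        goursatMap V (expWeightExtend hℓ m L) p.1 (max (-p.1) (min p.2 p.1)) :=
      (continuous_goursatMap hV (continuous_expWeightExtend hℓ m L)).comp
        (by fun_prop : Continuous fun p : Icc 0 ℓ × Icc (-ℓ) ℓ ↦
          ((p.1 : ℝ), max (-(p.1 : ℝ)) (min (p.2 : ℝ) p.1)))
    fun_prop

section Contraction

variable {V : ℝ → ℝ} (hV : Continuous V) {ℓ : ℝ} (hℓ : 0 ≤ ℓ) {B m : ℝ}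
  (hB : ∀ x ∈ Icc 0 ℓ, |V x| ≤ B) (hm : 0 < m)

include hV hB hm

lemma abs_goursatIntegrand_sub_le (L₁ L₂ : C(Icc 0 ℓ × Icc (-ℓ) ℓ, ℝ)) {x w : ℝ}
    (hx : x ∈ Icc 0 ℓ) (hw : w ∈ Icc (-x) x) :
    |goursatIntegrand V (expWeightExtend hℓ m L₁) x w -
        goursatIntegrand V (expWeightExtend hℓ m L₂) x w| ≤
      B * dist L₁ L₂ * (Real.exp (m * x) / m) := by
  have hint : ∀ L, IntervalIntegrable (fun r ↦ V r * expWeightExtend hℓ m L r (r - (x - w)))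
      MeasureTheory.volume ((x - w) / 2) x := fun L ↦
    (hV.mul ((continuous_expWeightExtend hℓ m L).comp
      (by fun_prop : Continuous fun r : ℝ ↦ (r, r - (x - w))))).intervalIntegrable _ _
  have hB₀ : 0 ≤ B := (abs_nonneg _).trans (hB x hx)
  have hle : (x - w) / 2 ≤ x := by linarith [hw.1]
  unfold goursatIntegrand
  rw [sub_sub_sub_cancel_left, abs_sub_comm, ← intervalIntegral.integral_sub (hint _) (hint _),
    ← Real.norm_eq_abs]
  calc _ ≤ ∫ r in ((x - w) / 2)..x, B * dist L₁ L₂ * Real.exp (m * r) := by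
        refine intervalIntegral.norm_integral_le_of_norm_le hle (.of_forall fun r hr ↦ ?_)
          (Continuous.intervalIntegrable (by fun_prop) _ _)
        have hr' : r ∈ Icc 0 ℓ := ⟨by linarith [hr.1, hw.2], hr.2.trans hx.2⟩
        rw [← mul_sub, norm_mul, mul_assoc, mul_comm (dist _ _)]
        gcongr
        · exact hB r hr'
        · exact abs_expWeightExtend_sub_le hℓ m L₁ L₂ _ _
    _ = B * dist L₁ L₂ * ((Real.exp (m * x) - Real.exp (m * ((x - w) / 2))) / m) := by
        rw [intervalIntegral.integral_const_mul,
          intervalIntegral.integral_comp_mul_left Real.exp hm.ne', integral_exp, smul_eq_mul,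
          inv_mul_eq_div]
    _ ≤ _ := by
        gcongr
        exact sub_le_self _ (Real.exp_pos _).le

lemma abs_goursatMap_sub_le (L₁ L₂ : C(Icc 0 ℓ × Icc (-ℓ) ℓ, ℝ)) {x u : ℝ}
    (hx : x ∈ Icc 0 ℓ) (hu : u ∈ Icc (-x) x) :
    |goursatMap V (expWeightExtend hℓ m L₁) x u - goursatMap V (expWeightExtend hℓ m L₂) x u| ≤
      B * dist L₁ L₂ * (Real.exp (m * x) / m) * ℓ := by
  have hint : ∀ L, IntervalIntegrable (goursatIntegrand V (expWeightExtend hℓ m L) x)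
      MeasureTheory.volume (-u) u := fun L ↦
    ((continuous_goursatIntegrand hV (continuous_expWeightExtend hℓ m L)).comp
      (by fun_prop : Continuous fun w : ℝ ↦ (x, w))).intervalIntegrable _ _
  have hu' : |u| ≤ x := abs_le.2 hu
  have hbound := intervalIntegral.norm_integral_le_of_norm_le_const
    (f := fun w ↦ goursatIntegrand V (expWeightExtend hℓ m L₁) x w -
      goursatIntegrand V (expWeightExtend hℓ m L₂) x w) (a := -u) (b := u)
    (C := B * dist L₁ L₂ * (Real.exp (m * x) / m)) fun w hw ↦
      abs_goursatIntegrand_sub_le hV hℓ hB hm L₁ L₂ hx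
        (uIcc_subset_Icc ⟨by linarith [hu.2], by linarith [hu.1]⟩ hu (uIoc_subset_uIcc hw))
  have hB₀ : 0 ≤ B := (abs_nonneg _).trans (hB x hx)
  unfold goursatMap
  rw [← mul_sub, ← intervalIntegral.integral_sub (hint _) (hint _), abs_mul,
    abs_of_pos one_half_pos]
  calc _ ≤ 1 / 2 * (B * dist L₁ L₂ * (Real.exp (m * x) / m) * |u - -u|) := by gcongr; exact hbound
    _ = B * dist L₁ L₂ * (Real.exp (m * x) / m) * |u| := by
        rw [sub_neg_eq_add, ← two_mul, abs_mul, abs_two]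
        ring
    _ ≤ _ := by
        gcongr
        exact hu'.trans hx.2

lemma contractingWith_weightedGoursatMap (hBm : B * ℓ ≤ m / 2) :
    ContractingWith (1 / 2) (weightedGoursatMap hV hℓ m) := by
  refine ⟨by norm_num, LipschitzWith.of_dist_le_mul fun L₁ L₂ ↦ ?_⟩
  refine (ContinuousMap.dist_le (by positivity)).2 fun ⟨⟨x, hx⟩, v⟩ ↦ ?_
  have hu : max (-x) (min (v : ℝ) x) ∈ Icc (-x) x :=
    ⟨le_max_left _ _, max_le (by linarith [hx.1]) (min_le_right _ _)⟩
  simp only [weightedGoursatMap, ContinuousMap.coe_mk]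
  rw [Real.dist_eq, ← mul_sub, abs_mul, Real.abs_exp]
  calc _ ≤ Real.exp (-(m * x)) * (B * dist L₁ L₂ * (Real.exp (m * x) / m) * ℓ) := by
        gcongr
        exact abs_goursatMap_sub_le hV hℓ hB hm L₁ L₂ hx hu
    _ = B * ℓ / m * dist L₁ L₂ := by
        rw [Real.exp_neg]
        field_simp
    _ ≤ 1 / 2 * dist L₁ L₂ := by
        refine mul_le_mul_of_nonneg_right ?_ dist_nonneg
        rw [div_le_iff₀ hm]
        linarith
    _ = _ := by norm_num

end Contraction

/-- `K` is a transmutation kernel on `[0, ℓ]`: a continuous solution of the Goursat integral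
equation in the triangle `|u| ≤ x ≤ ℓ`. By `volterraTransform_sin_eq`, the operator
`f ↦ f + ∫₀ˣ K(x, t) f(t) dt` turns `sin (z x)` into a solution of `-y'' + V y = z² y`. -/
structure IsTransmutationKernel (V : ℝ → ℝ) (ℓ : ℝ) (K : ℝ → ℝ → ℝ) : Prop where
  continuous : Continuous (Function.uncurry K)
  eq_goursatMap : ∀ x ∈ Icc 0 ℓ, ∀ u ∈ Icc (-x) x, K x u = goursatMap V K x u

theorem exists_isTransmutationKernel {V : ℝ → ℝ} (hV : Continuous V) {ℓ : ℝ} (hℓ : 0 ≤ ℓ) :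
    ∃ K, IsTransmutationKernel V ℓ K := by
  obtain ⟨B, hB⟩ := isCompact_Icc.exists_bound_of_continuousOn (hV.continuousOn (s := Icc 0 ℓ))
  have hB₀ : 0 ≤ B := (norm_nonneg _).trans (hB 0 ⟨le_rfl, hℓ⟩)
  set m := 2 * (B * ℓ) + 1
  have hcontr := contractingWith_weightedGoursatMap hV hℓ hB (m := m) (by positivity)
    (by simp only [m]; linarith)
  set L := hcontr.fixedPoint
  have hfix : weightedGoursatMap hV hℓ m L = L := hcontr.fixedPoint_isFixedPt
  refine ⟨expWeightExtend hℓ m L, continuous_expWeightExtend hℓ m L, fun x hx u hu ↦ ?_⟩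
  have huℓ : u ∈ Icc (-ℓ) ℓ := ⟨(neg_le_neg hx.2).trans hu.1, hu.2.trans hx.2⟩
  calc expWeightExtend hℓ m L x u
      = Real.exp (m * x) * weightedGoursatMap hV hℓ m L (⟨x, hx⟩, ⟨u, huℓ⟩) := by
        rw [hfix, expWeightExtend, projIcc_of_mem _ hx, projIcc_of_mem _ huℓ]
    _ = Real.exp (m * x) *
          (Real.exp (-(m * x)) * goursatMap V (expWeightExtend hℓ m L) x u) := by
        simp only [weightedGoursatMap, ContinuousMap.coe_mk, min_eq_left hu.2, max_eq_right hu.1]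
    _ = goursatMap V (expWeightExtend hℓ m L) x u := by
        rw [← mul_assoc, ← Real.exp_add, add_neg_cancel, Real.exp_zero, one_mul]

lemma IsTransmutationKernel.apply_neg {V : ℝ → ℝ} {ℓ : ℝ} {K : ℝ → ℝ → ℝ}
    (hK : IsTransmutationKernel V ℓ K) {x t : ℝ} (hx : x ∈ Icc 0 ℓ) (ht : t ∈ Icc 0 x) :
    K x (-t) = -K x t := by
  rw [hK.eq_goursatMap x hx t ⟨by linarith [ht.1, hx.1], ht.2⟩,
    hK.eq_goursatMap x hx (-t) ⟨neg_le_neg ht.2, by linarith [ht.1, hx.1]⟩, goursatMap_neg]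

/-- The Volterra operator `1 + K`, where `K` acts by `∫₀ˣ K(x, t) f(t) dt`. -/
noncomputable def volterraTransform (K : ℝ → ℝ → ℝ) (f : ℝ → ℝ) (x : ℝ) : ℝ :=
  f x + ∫ t in (0 : ℝ)..x, K x t * f t

lemma continuous_volterraTransform {K : ℝ → ℝ → ℝ} (hK : Continuous (Function.uncurry K))
    {f : ℝ → ℝ} (hf : Continuous f) : Continuous (volterraTransform K f) :=
  hf.add <| continuous_intervalIntegral_of_continuous (f := fun x t ↦ K x t * f t)
    (hK.mul (hf.comp continuous_snd)) continuous_const continuous_id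

lemma integral_comp_sub_two_mul (f : ℝ → ℝ) (x : ℝ) :
    ∫ q in (0 : ℝ)..x, f (x - 2 * q) = 1 / 2 * ∫ w in (-x)..x, f w := by
  rw [intervalIntegral.integral_comp_sub_mul f two_ne_zero, smul_eq_mul, mul_zero, sub_zero,
    one_div]
  congr 2
  ring

lemma integral_half_integral_mul_sin {f : ℝ → ℝ} (hf : Continuous f) (z x : ℝ) :
    ∫ u in (0 : ℝ)..x, (1 / 2 * ∫ w in (-u)..u, f w) * (z * Real.sin (z * u)) =
      ∫ q in (0 : ℝ)..x, f (x - 2 * q) * (Real.cos (z * (x - 2 * q)) - Real.cos (z * x)) := by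
  have hF : ∀ u, HasDerivAt (fun u ↦ 1 / 2 * ∫ w in (0 : ℝ)..u, (f w + f (-w)))
      (1 / 2 * (f u + f (-u))) u := fun u ↦
    ((by fun_prop : Continuous fun w ↦ f w + f (-w)).integral_hasStrictDerivAt 0 u).hasDerivAt
      |>.const_mul _
  have hcos : ∀ u, HasDerivAt (fun u ↦ Real.cos (z * x) - Real.cos (z * u))
      (z * Real.sin (z * u)) u := fun u ↦
    ((((hasDerivAt_id' u).const_mul z).cos).const_sub _).congr_deriv (by ring)
  have hparts := intervalIntegral.integral_mul_deriv_eq_deriv_mul (a := 0) (b := x)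
    (fun u _ ↦ hF u) (fun u _ ↦ hcos u) (Continuous.intervalIntegrable (by fun_prop) _ _)
    (Continuous.intervalIntegrable (by fun_prop) _ _)
  simp only [integral_neg_self_eq_integral_add hf]
  rw [hparts, integral_comp_sub_two_mul (fun w ↦ f w * (Real.cos (z * w) - Real.cos (z * x))),
    integral_neg_self_eq_integral_add (by fun_prop), intervalIntegral.integral_same, sub_self,
    mul_zero, mul_zero, zero_mul, sub_zero, zero_sub, ← intervalIntegral.integral_const_mul,
    ← intervalIntegral.integral_neg]
  congr with u
  rw [mul_neg, Real.cos_neg]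
  ring

lemma integral_comp_sub_two_mul_mul_cos_sub_cos {k : ℝ → ℝ} (hk : Continuous k) {r : ℝ}
    (hodd : ∀ t ∈ uIcc 0 r, k (-t) = -k t) (z x : ℝ) :
    ∫ q in (0 : ℝ)..r, k (r - 2 * q) * (Real.cos (z * (x - 2 * q)) - Real.cos (z * x)) =
      -(Real.sin (z * (x - r)) * ∫ t in (0 : ℝ)..r, k t * Real.sin (z * t)) := by
  have hsubst := integral_comp_sub_two_mul
    (fun w ↦ k w * (Real.cos (z * (x - r + w)) - Real.cos (z * x))) r
  simp only [sub_add_sub_cancel] at hsubst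
  rw [hsubst, integral_neg_self_eq_integral_add (by fun_prop),
    ← intervalIntegral.integral_const_mul, ← intervalIntegral.integral_const_mul,
    ← intervalIntegral.integral_neg]
  refine intervalIntegral.integral_congr fun t ht ↦ ?_
  simp only [hodd t ht, mul_add, mul_neg, Real.cos_add, Real.cos_neg, Real.sin_neg]
  ring

lemma goursatIntegrand_sub_two_mul (V : ℝ → ℝ) (K : ℝ → ℝ → ℝ) (x q : ℝ) :
    goursatIntegrand V K x (x - 2 * q) =
      1 / 2 * V q - ∫ r in q..x, V r * K r (r - 2 * q) := by
  rw [goursatIntegrand, sub_sub_cancel, mul_div_cancel_left₀ q two_ne_zero]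

lemma half_cos_sub_cos (z x q : ℝ) :
    1 / 2 * (Real.cos (z * (x - 2 * q)) - Real.cos (z * x)) =
      Real.sin (z * (x - q)) * Real.sin (z * q) := by
  rw [show z * (x - 2 * q) = z * (x - q) - z * q by ring,
    show z * x = z * (x - q) + z * q by ring, Real.cos_sub, Real.cos_add]
  ring

section Transmutation

variable {V : ℝ → ℝ} (hV : Continuous V) {ℓ : ℝ} {K : ℝ → ℝ → ℝ}
  (hK : IsTransmutationKernel V ℓ K)

include hV hK

lemma integral_integral_kernel_mul_cos_sub_cos (z : ℝ) {x : ℝ} (hx : x ∈ Icc 0 ℓ) :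
    ∫ q in (0 : ℝ)..x, (∫ r in q..x, V r * K r (r - 2 * q)) *
        (Real.cos (z * (x - 2 * q)) - Real.cos (z * x)) =
      -∫ r in (0 : ℝ)..x, Real.sin (z * (x - r)) *
        (V r * ∫ t in (0 : ℝ)..r, K r t * Real.sin (z * t)) := by
  have hKc : Continuous fun p : ℝ × ℝ ↦ K p.2 (p.2 - 2 * p.1) :=
    hK.continuous.comp (by fun_prop : Continuous fun p : ℝ × ℝ ↦ (p.2, p.2 - 2 * p.1))
  have hswap := integral_integral_triangle_swap (f := fun q r ↦ V r * K r (r - 2 * q) *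
    (Real.cos (z * (x - 2 * q)) - Real.cos (z * x)))
    (((hV.comp continuous_snd).mul hKc).mul (by fun_prop)) hx.1
  simp only [intervalIntegral.integral_mul_const] at hswap
  rw [hswap, ← intervalIntegral.integral_neg]
  refine intervalIntegral.integral_congr fun r hr ↦ ?_
  rw [uIcc_of_le hx.1] at hr
  have hKr : Continuous (K r) := hK.continuous.comp (by fun_prop : Continuous fun t ↦ (r, t))
  simp only [mul_assoc, intervalIntegral.integral_const_mul]
  rw [integral_comp_sub_two_mul_mul_cos_sub_cos hKr fun t ht ↦
    hK.apply_neg ⟨hr.1, hr.2.trans hx.2⟩ (by rwa [uIcc_of_le hr.1] at ht)]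
  ring

theorem volterraTransform_sin_eq (z : ℝ) {x : ℝ} (hx : x ∈ Icc 0 ℓ) :
    z * volterraTransform K (fun t ↦ Real.sin (z * t)) x = z * Real.sin (z * x) +
      ∫ r in (0 : ℝ)..x, Real.sin (z * (x - r)) *
        (V r * volterraTransform K (fun t ↦ Real.sin (z * t)) r) := by
  set c : ℝ → ℝ := fun q ↦ Real.cos (z * (x - 2 * q)) - Real.cos (z * x)
  have hsin : Continuous fun t ↦ Real.sin (z * t) := by fun_prop
  have hψ : Continuous (goursatIntegrand V K x) :=
    (continuous_goursatIntegrand hV hK.continuous).comp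
      (by fun_prop : Continuous fun w : ℝ ↦ (x, w))
  have hKc : Continuous fun p : ℝ × ℝ ↦ K p.2 (p.2 - 2 * p.1) :=
    hK.continuous.comp (by fun_prop : Continuous fun p : ℝ × ℝ ↦ (p.2, p.2 - 2 * p.1))
  have hJ : Continuous fun q ↦ ∫ r in q..x, V r * K r (r - 2 * q) :=
    continuous_intervalIntegral_of_continuous (f := fun q r ↦ V r * K r (r - 2 * q))
      ((hV.comp continuous_snd).mul hKc) continuous_id continuous_const
  have hI : Continuous fun r ↦ ∫ t in (0 : ℝ)..r, K r t * Real.sin (z * t) :=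
    continuous_intervalIntegral_of_continuous (f := fun r t ↦ K r t * Real.sin (z * t))
      (hK.continuous.mul (hsin.comp continuous_snd)) continuous_const continuous_id
  rw [volterraTransform, mul_add, add_right_inj]
  calc z * ∫ t in (0 : ℝ)..x, K x t * Real.sin (z * t)
      = ∫ u in (0 : ℝ)..x, goursatMap V K x u * (z * Real.sin (z * u)) := by
        rw [← intervalIntegral.integral_const_mul]
        refine intervalIntegral.integral_congr fun u hu ↦ ?_
        rw [uIcc_of_le hx.1] at hu
        rw [← hK.eq_goursatMap x hx u ⟨by linarith [hu.1, hx.1], hu.2⟩, mul_left_comm]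
    _ = ∫ q in (0 : ℝ)..x, goursatIntegrand V K x (x - 2 * q) * c q :=
        integral_half_integral_mul_sin hψ z x
    _ = (∫ q in (0 : ℝ)..x, 1 / 2 * V q * c q) -
          ∫ q in (0 : ℝ)..x, (∫ r in q..x, V r * K r (r - 2 * q)) * c q := by
        simp only [goursatIntegrand_sub_two_mul, sub_mul]
        exact intervalIntegral.integral_sub (Continuous.intervalIntegrable (by fun_prop) _ _)
          (Continuous.intervalIntegrable (by fun_prop) _ _)
    _ = _ := by
        rw [integral_integral_kernel_mul_cos_sub_cos hV hK z hx, sub_neg_eq_add,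
          ← intervalIntegral.integral_add (Continuous.intervalIntegrable (by fun_prop) _ _)
            (Continuous.intervalIntegrable (by fun_prop) _ _)]
        congr with r
        rw [volterraTransform]
        linear_combination V r * half_cos_sub_cos z x r

end Transmutation

/-! ### Eigenfunctions as transmuted sines -/

lemma exists_continuous_eqOn_Icc {f : ℝ → ℝ} {a b : ℝ} (hab : a ≤ b)
    (hf : ContinuousOn f (Icc a b)) : ∃ g, Continuous g ∧ EqOn g f (Icc a b) :=
  ⟨IccExtend hab ((Icc a b).domRestrict f),
    (continuousOn_iff_continuous_domRestrict.1 hf).Icc_extend', fun _ hx ↦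
    IccExtend_of_mem hab _ hx⟩

lemma eq_zero_of_abs_le_mul_integral_abs {f : ℝ → ℝ} {a b C : ℝ} (hf : ContinuousOn f (Icc a b))
    (hle : ∀ x ∈ Icc a b, |f x| ≤ C * ∫ r in a..x, |f r|) : ∀ x ∈ Icc a b, f x = 0 := by
  rcases lt_or_ge b a with hba | hab
  · simp [Icc_eq_empty hba.not_ge]
  obtain ⟨g, hg, hgf⟩ := exists_continuous_eqOn_Icc hab hf
  have hint : ∀ x ∈ Icc a b, ∫ r in a..x, |f r| = ∫ r in a..x, |g r| := by
    refine fun x hx ↦ intervalIntegral.integral_congr fun r hr ↦ ?_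
    rw [uIcc_of_le hx.1] at hr
    simp only [hgf ⟨hr.1, hr.2.trans hx.2⟩]
  have hderiv : ∀ x, HasDerivAt (fun x ↦ ∫ r in a..x, |g r|) |g x| x := fun x ↦
    (hg.abs.integral_hasStrictDerivAt a x).hasDerivAt
  have hzero := eq_zero_of_abs_deriv_le_mul_abs_self_of_eq_zero_right (K := C)
    (fun x _ ↦ (hderiv x).continuousAt.continuousWithinAt) (fun x _ ↦ (hderiv x).hasDerivWithinAt)
    intervalIntegral.integral_same fun x hx ↦ by
      have hx' := Ico_subset_Icc_self hx
      have hnonneg : 0 ≤ ∫ r in a..x, |g r| :=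
        intervalIntegral.integral_nonneg hx.1 fun _ _ ↦ abs_nonneg _
      rw [Real.norm_eq_abs, abs_abs, Real.norm_of_nonneg hnonneg, hgf hx', ← hint x hx']
      exact hle x hx'
  intro x hx
  have := hle x hx
  rw [hint x hx, hzero x hx, mul_zero] at this
  exact abs_nonpos_iff.1 this

lemma eq_zero_of_mul_eq_integral_sin_mul {V f : ℝ → ℝ} (hV : Continuous V) {ℓ z : ℝ} (hz : 0 < z)
    (hf : ContinuousOn f (Icc 0 ℓ))
    (hvolterra : ∀ x ∈ Icc 0 ℓ,
      z * f x = ∫ r in (0 : ℝ)..x, Real.sin (z * (x - r)) * (V r * f r)) :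
    ∀ x ∈ Icc 0 ℓ, f x = 0 := by
  obtain ⟨B, hB⟩ := isCompact_Icc.exists_bound_of_continuousOn (hV.continuousOn (s := Icc 0 ℓ))
  refine eq_zero_of_abs_le_mul_integral_abs (C := B / z) hf fun x hx ↦ ?_
  have hfx := hf.mono (Icc_subset_Icc_right hx.2)
  have hmul : ‖z * f x‖ ≤ ∫ r in (0 : ℝ)..x, B * |f r| := by
    rw [hvolterra x hx]
    refine intervalIntegral.norm_integral_le_of_norm_le hx.1 (.of_forall fun r hr ↦ ?_)
      (ContinuousOn.intervalIntegrable_of_Icc hx.1 (by fun_prop))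
    rw [norm_mul, norm_mul]
    calc _ ≤ 1 * (B * ‖f r‖) := by
          gcongr
          · exact Real.abs_sin_le_one _
          · exact hB r ⟨hr.1.le, hr.2.trans hx.2⟩
      _ = _ := one_mul _
  rw [norm_mul, Real.norm_of_nonneg hz.le, intervalIntegral.integral_const_mul] at hmul
  rwa [div_mul_eq_mul_div, le_div_iff₀' hz]

section Eigenfunction

variable {V φ p : ℝ → ℝ} (hV : Continuous V) {ℓ z : ℝ} (hφc : ContinuousOn φ (Icc 0 ℓ))
  (hpc : ContinuousOn p (Icc 0 ℓ)) (hφ : ∀ x ∈ Ioo 0 ℓ, HasDerivAt φ (p x) x)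
  (hp : ∀ x ∈ Ioo 0 ℓ, HasDerivAt p ((V x - z ^ 2) * φ x) x) (hφ₀ : φ 0 = 0)

include hV hφc hpc hφ hp hφ₀

lemma mul_eq_deriv_mul_sin_add_integral {x : ℝ} (hx : x ∈ Icc 0 ℓ) :
    z * φ x = p 0 * Real.sin (z * x) +
      ∫ r in (0 : ℝ)..x, Real.sin (z * (x - r)) * (V r * φ r) := by
  have hsub : Icc 0 x ⊆ Icc 0 ℓ := Icc_subset_Icc_right hx.2
  have hsin : Continuous fun r ↦ Real.sin (z * (x - r)) := by fun_prop
  have hcos : Continuous fun r ↦ z * Real.cos (z * (x - r)) := by fun_prop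
  have hderiv : ∀ r ∈ Ioo 0 x, HasDerivAt
      (fun r ↦ Real.sin (z * (x - r)) * p r + z * Real.cos (z * (x - r)) * φ r)
      (Real.sin (z * (x - r)) * (V r * φ r)) r := by
    intro r hr
    have hr' : r ∈ Ioo 0 ℓ := ⟨hr.1, hr.2.trans_le hx.2⟩
    have harg := ((hasDerivAt_id' r).const_sub x).const_mul z
    refine ((harg.sin.mul (hp r hr')).add ((harg.cos.const_mul z).mul (hφ r hr'))).congr_deriv ?_
    ring
  have hftc := intervalIntegral.integral_eq_sub_of_hasDerivAt_of_le hx.1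
    ((hsin.continuousOn.mul (hpc.mono hsub)).add (hcos.continuousOn.mul (hφc.mono hsub))) hderiv
    (ContinuousOn.intervalIntegrable_of_Icc hx.1
      (hsin.continuousOn.mul (hV.continuousOn.mul (hφc.mono hsub))))
  rw [hftc]
  simp only [Pi.add_apply, Pi.mul_apply]
  rw [hφ₀, sub_self, sub_zero, mul_zero, Real.sin_zero, Real.cos_zero]
  ring

/-- Both sides solve the same Volterra equation, which has a unique solution. -/
theorem exists_eq_mul_volterraTransform_sin {K : ℝ → ℝ → ℝ}
    (hK : IsTransmutationKernel V ℓ K) (hz : 0 < z) :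
    ∃ c : ℝ, ∀ x ∈ Icc 0 ℓ, φ x = c * volterraTransform K (fun t ↦ Real.sin (z * t)) x := by
  set T := volterraTransform K fun t ↦ Real.sin (z * t)
  have hT : Continuous T := continuous_volterraTransform hK.continuous (by fun_prop)
  obtain ⟨c, hc⟩ : ∃ c, z * c = p 0 := ⟨p 0 / z, mul_div_cancel₀ _ hz.ne'⟩
  refine ⟨c, fun x hx ↦ sub_eq_zero.1 (eq_zero_of_mul_eq_integral_sin_mul hV hz
    (f := fun x ↦ φ x - c * T x) (hφc.sub (by fun_prop)) (fun x hx ↦ ?_) x hx)⟩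
  have hφx : ContinuousOn φ (Icc 0 x) := hφc.mono (Icc_subset_Icc_right hx.2)
  calc z * (φ x - c * T x) = z * φ x - c * (z * T x) := by ring
    _ = (∫ r in (0 : ℝ)..x, Real.sin (z * (x - r)) * (V r * φ r)) -
          c * ∫ r in (0 : ℝ)..x, Real.sin (z * (x - r)) * (V r * T r) := by
        rw [mul_eq_deriv_mul_sin_add_integral hV hφc hpc hφ hp hφ₀ hx,
          volterraTransform_sin_eq hV hK z hx]
        linear_combination -Real.sin (z * x) * hc
    _ = _ := by
        rw [← intervalIntegral.integral_const_mul, ← intervalIntegral.integral_sub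
          (ContinuousOn.intervalIntegrable_of_Icc hx.1 (by fun_prop))
          (Continuous.intervalIntegrable (by fun_prop) _ _)]
        congr with r
        ring

end Eigenfunction

/-- The transpose of `volterraTransform K` on `[0, ℓ]`, see `integral_mul_volterraTransform`. -/
noncomputable def volterraAdjoint (K : ℝ → ℝ → ℝ) (ℓ : ℝ) (h : ℝ → ℝ) (t : ℝ) : ℝ :=
  h t + ∫ x in t..ℓ, K x t * h x

lemma volterraAdjoint_eq_zero (K : ℝ → ℝ → ℝ) {ℓ : ℝ} {h : ℝ → ℝ} {t : ℝ} (ht : t ≤ ℓ)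
    (hzero : ∀ x ∈ Icc t ℓ, h x = 0) : volterraAdjoint K ℓ h t = 0 := by
  have hint : ∫ x in t..ℓ, K x t * h x = ∫ _ in t..ℓ, (0 : ℝ) :=
    intervalIntegral.integral_congr fun x hx ↦ by
      rw [uIcc_of_le ht] at hx
      simp only [hzero x hx, mul_zero]
  rw [volterraAdjoint, hint, hzero t ⟨le_rfl, ht⟩, intervalIntegral.integral_zero, add_zero]

section Adjoint

variable {K : ℝ → ℝ → ℝ} (hK : Continuous (Function.uncurry K)) {h : ℝ → ℝ} (hh : Continuous h)

include hK hh

lemma continuous_volterraAdjoint (ℓ : ℝ) : Continuous (volterraAdjoint K ℓ h) :=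
  hh.add <| continuous_intervalIntegral_of_continuous (f := fun t x ↦ K x t * h x)
    ((hK.comp continuous_swap).mul (hh.comp continuous_snd)) continuous_id continuous_const

lemma integral_mul_volterraTransform {ℓ : ℝ} (hℓ : 0 ≤ ℓ) {f : ℝ → ℝ} (hf : Continuous f) :
    ∫ x in (0 : ℝ)..ℓ, h x * volterraTransform K f x =
      ∫ t in (0 : ℝ)..ℓ, volterraAdjoint K ℓ h t * f t := by
  have : Continuous fun x ↦ ∫ t in (0 : ℝ)..x, K x t * f t :=
    continuous_intervalIntegral_of_continuous (f := fun x t ↦ K x t * f t)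
      (hK.mul (hf.comp continuous_snd)) continuous_const continuous_id
  have : Continuous fun t ↦ ∫ x in t..ℓ, K x t * h x :=
    continuous_intervalIntegral_of_continuous (f := fun t x ↦ K x t * h x)
      ((hK.comp continuous_swap).mul (hh.comp continuous_snd)) continuous_id continuous_const
  have hswap := integral_integral_triangle_swap (f := fun t x ↦ K x t * h x * f t)
    (((hK.comp continuous_swap).mul (hh.comp continuous_snd)).mul (hf.comp continuous_fst)) hℓ
  calc _ = (∫ x in (0 : ℝ)..ℓ, h x * f x) +
          ∫ x in (0 : ℝ)..ℓ, h x * ∫ t in (0 : ℝ)..x, K x t * f t := by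
        simp only [volterraTransform, mul_add]
        exact intervalIntegral.integral_add (Continuous.intervalIntegrable (by fun_prop) _ _)
          (Continuous.intervalIntegrable (by fun_prop) _ _)
    _ = (∫ x in (0 : ℝ)..ℓ, h x * f x) +
          ∫ t in (0 : ℝ)..ℓ, (∫ x in t..ℓ, K x t * h x) * f t := by
        simp only [← intervalIntegral.integral_mul_const, ← intervalIntegral.integral_const_mul]
        rw [hswap]
        simp only [mul_assoc, mul_left_comm (h _)]
    _ = _ := by
        simp only [volterraAdjoint, add_mul]
        exact (intervalIntegral.integral_add (Continuous.intervalIntegrable (by fun_prop) _ _)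
          (Continuous.intervalIntegrable (by fun_prop) _ _)).symm

lemma eq_zero_of_volterraAdjoint_eq_zero {ℓ : ℝ}
    (hzero : ∀ t ∈ Icc 0 ℓ, volterraAdjoint K ℓ h t = 0) : ∀ x ∈ Icc 0 ℓ, h x = 0 := by
  obtain ⟨C, hC⟩ := (isCompact_Icc.prod isCompact_Icc).exists_bound_of_continuousOn
    (hK.continuousOn (s := Icc 0 ℓ ×ˢ Icc 0 ℓ))
  have hreflect := eq_zero_of_abs_le_mul_integral_abs (f := fun s ↦ h (ℓ - s)) (a := 0) (b := ℓ)
    (C := C) (by fun_prop) fun s hs ↦ by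
      have ht : ℓ - s ∈ Icc 0 ℓ := ⟨sub_nonneg.2 hs.2, sub_le_self _ hs.1⟩
      rw [eq_neg_of_add_eq_zero_left (hzero _ ht),
        intervalIntegral.integral_comp_sub_left (fun r ↦ |h r|), sub_zero, abs_neg,
        ← Real.norm_eq_abs, ← intervalIntegral.integral_const_mul]
      refine intervalIntegral.norm_integral_le_of_norm_le ht.2 (.of_forall fun x hx ↦ ?_)
        (Continuous.intervalIntegrable (by fun_prop) _ _)
      rw [norm_mul]
      exact mul_le_mul_of_nonneg_right (hC (x, ℓ - s) ⟨⟨ht.1.trans hx.1.le, hx.2⟩, ht⟩)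
        (norm_nonneg _)
  intro x hx
  simpa only [sub_sub_cancel] using
    hreflect (ℓ - x) ⟨sub_nonneg.2 hx.2, sub_le_self _ hx.1⟩

end Adjoint

lemma exists_right_endpoint_of_support {g : ℝ → ℝ} (hg : Continuous g) {a c : ℝ}
    (hne : ∃ t ∈ Ioo a c, g t ≠ 0) :
    ∃ b ∈ Ioc a c, (∀ t ∈ Ioo b c, g t = 0) ∧ ∀ δ > 0, ∃ t ∈ Ioo (b - δ) b, g t ≠ 0 := by
  set S := Ioo a c ∩ {t | g t ≠ 0}
  have hS : S.Nonempty := hne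
  have hbdd : BddAbove S := ⟨c, fun s hs ↦ hs.1.2.le⟩
  have hopen : IsOpen S := isOpen_Ioo.inter (isOpen_ne_fun hg continuous_const)
  have hpos : a < sSup S := hS.some_mem.1.1.trans_le (le_csSup hbdd hS.some_mem)
  have hnotMem : sSup S ∉ S := fun hmem ↦ by
    obtain ⟨l, u, hlu, hsub⟩ := mem_nhds_iff_exists_Ioo_subset.1 (hopen.mem_nhds hmem)
    obtain ⟨s, hs, hsu⟩ := exists_between hlu.2
    exact hs.not_ge (le_csSup hbdd (hsub ⟨hlu.1.trans hs, hsu⟩))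
  refine ⟨sSup S, ⟨hpos, csSup_le hS fun s hs ↦ hs.1.2.le⟩, fun t ht ↦ ?_, fun δ hδ ↦ ?_⟩
  · by_contra hgt
    exact ht.1.not_ge (le_csSup hbdd ⟨⟨hpos.trans ht.1, ht.2⟩, hgt⟩)
  · obtain ⟨s, hs, hδs⟩ := exists_lt_of_lt_csSup hS (sub_lt_self _ hδ)
    exact ⟨s, ⟨hδs, (le_csSup hbdd hs).lt_of_ne fun heq ↦ hnotMem (heq ▸ hs)⟩, hs.2⟩

/-! ### Annihilated modes as zeros of a sine transform -/

lemma IsDirichletEigenpair.exists_eq_mul_volterraTransform {V W ψ : ℝ → ℝ} {μ : ℝ}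
    (hψ : IsDirichletEigenpair V μ ψ) (hμ : 0 < μ) (hW : Continuous W) (hWV : EqOn W V (Icc 0 1))
    {K : ℝ → ℝ → ℝ} (hK : IsTransmutationKernel W 1 K) :
    ∃ c ≠ 0, ∀ x ∈ Icc (0 : ℝ) 1,
      ψ x = c * volterraTransform K (fun t ↦ Real.sin (√μ * t)) x := by
  obtain ⟨hC2, ⟨x₀, hx₀, hψx₀⟩, hode, hψ₀, -⟩ := hψ
  have hunique : UniqueDiffOn ℝ (Icc (0 : ℝ) 1) := uniqueDiffOn_Icc zero_lt_one
  set p := derivWithin ψ (Icc 0 1)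
  have hC1 : ContDiffOn ℝ 1 p (Icc 0 1) := hC2.derivWithin hunique (by norm_num)
  have hψp : ∀ x ∈ Ioo (0 : ℝ) 1, HasDerivAt ψ (p x) x := fun x hx ↦
    (hC2.differentiableOn two_ne_zero x (Ioo_subset_Icc_self hx)).hasDerivWithinAt.hasDerivAt
      (Icc_mem_nhds hx.1 hx.2)
  have hp : ∀ x ∈ Ioo (0 : ℝ) 1, HasDerivAt p ((W x - √μ ^ 2) * ψ x) x := by
    intro x hx
    refine ((hC1.differentiableOn one_ne_zero x
      (Ioo_subset_Icc_self hx)).hasDerivWithinAt.hasDerivAt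
      (Icc_mem_nhds hx.1 hx.2)).congr_deriv ?_
    rw [Real.sq_sqrt hμ.le, hWV (Ioo_subset_Icc_self hx)]
    linarith [hode x hx]
  obtain ⟨c, hc⟩ := exists_eq_mul_volterraTransform_sin hW hC2.continuousOn hC1.continuousOn
    hψp hp hψ₀ hK (Real.sqrt_pos.2 hμ)
  refine ⟨c, fun hc₀ ↦ hψx₀ ?_, hc⟩
  rw [hc x₀ hx₀, hc₀, zero_mul]

lemma sineTransform_ofReal_eq_zero {g : ℝ → ℝ} (hg : Continuous g) {b c : ℝ} (hbc : b ≤ c)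
    (hzero : ∀ t ∈ Ioo b c, g t = 0) {z : ℝ}
    (hint : ∫ t in (0 : ℝ)..c, g t * Real.sin (z * t) = 0) :
    sineTransform (fun t ↦ (g t : ℂ)) b z = 0 := by
  have htail : ∫ t in b..c, g t * Real.sin (z * t) = ∫ _ in b..c, (0 : ℝ) :=
    intervalIntegral.integral_congr_Ioo_of_le hbc fun t ht ↦ by simp only [hzero t ht, zero_mul]
  rw [← intervalIntegral.integral_add_adjacent_intervals (b := b)
    (Continuous.intervalIntegrable (by fun_prop) _ _)
    (Continuous.intervalIntegrable (by fun_prop) _ _), htail, intervalIntegral.integral_zero,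
    add_zero] at hint
  have hcast : sineTransform (fun t ↦ (g t : ℂ)) b z =
      ((∫ t in (0 : ℝ)..b, g t * Real.sin (z * t) : ℝ) : ℂ) := by
    rw [← intervalIntegral.integral_ofReal, sineTransform]
    push_cast
    rfl
  rw [hcast, hint, Complex.ofReal_zero]

lemma exists_volterraAdjoint_ne_zero {K : ℝ → ℝ → ℝ} (hK : Continuous (Function.uncurry K))
    {h : ℝ → ℝ} (hh : Continuous h) {ℓ : ℝ} (hℓ : 0 < ℓ) (hne : ∃ x ∈ Icc 0 ℓ, h x ≠ 0) :
    ∃ t ∈ Ioo 0 ℓ, volterraAdjoint K ℓ h t ≠ 0 := by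
  by_contra! hzero
  have hclosure : EqOn (volterraAdjoint K ℓ h) 0 (closure (Ioo 0 ℓ)) :=
    EqOn.closure hzero (continuous_volterraAdjoint hK hh ℓ) continuous_zero
  rw [closure_Ioo hℓ.ne] at hclosure
  obtain ⟨x, hx, hhx⟩ := hne
  exact hhx (eq_zero_of_volterraAdjoint_eq_zero hK hh hclosure x hx)

theorem exists_sineTransform_sqrt_eq_zero {ε : ℝ} {V h : ℝ → ℝ} (hV : ContinuousOn V (Icc 0 1))
    (hh : ContinuousOn h (Icc 0 1)) (hne : ∃ x ∈ Icc (0 : ℝ) 1, h x ≠ 0)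
    (hsupp : ∀ x ∈ Icc (0 : ℝ) 1, x ∉ Icc 0 ε → h x = 0) :
    ∃ g : ℝ → ℝ, Continuous g ∧ ∃ b ∈ Ioc 0 ε, (∀ δ > 0, ∃ t ∈ Ioo (b - δ) b, g t ≠ 0) ∧
      ∀ μ ψ, IsDirichletEigenpair V μ ψ → 0 < μ → ∫ x in (0 : ℝ)..1, h x * ψ x = 0 →
        sineTransform (fun t ↦ (g t : ℂ)) b (√μ : ℝ) = 0 := by
  obtain ⟨W, hW, hWV⟩ := exists_continuous_eqOn_Icc zero_le_one hV
  obtain ⟨k, hk, hkh⟩ := exists_continuous_eqOn_Icc zero_le_one hh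
  obtain ⟨K, hK⟩ := exists_isTransmutationKernel hW zero_le_one
  set g := volterraAdjoint K 1 k
  have hg : Continuous g := continuous_volterraAdjoint hK.continuous hk 1
  have hgε : ∀ t ∈ Icc (0 : ℝ) 1, ε < t → g t = 0 := fun t ht hεt ↦
    volterraAdjoint_eq_zero K ht.2 fun x hx ↦ by
      have hx' : x ∈ Icc (0 : ℝ) 1 := ⟨ht.1.trans hx.1, hx.2⟩
      rw [hkh hx', hsupp x hx' fun hxε ↦ (hεt.trans_le hx.1).not_ge hxε.2]
  obtain ⟨b, hb, hbg, hgb⟩ := exists_right_endpoint_of_support hg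
    (exists_volterraAdjoint_ne_zero hK.continuous hk one_pos
      (hne.imp fun x hx ↦ ⟨hx.1, by rw [hkh hx.1]; exact hx.2⟩))
  have hbε : b ≤ ε := by
    by_contra! hεb
    obtain ⟨t, ht, hgt⟩ := hgb (b - max ε 0) (sub_pos.2 (max_lt hεb hb.1))
    rw [sub_sub_cancel] at ht
    have hlt := max_lt_iff.1 ht.1
    exact hgt (hgε t ⟨hlt.2.le, ht.2.le.trans hb.2⟩ hlt.1)
  refine ⟨g, hg, b, ⟨hb.1, hbε⟩, hgb, fun μ ψ hψ hμ hint ↦ ?_⟩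
  obtain ⟨c, hc, hψc⟩ := hψ.exists_eq_mul_volterraTransform hμ hW hWV hK
  refine sineTransform_ofReal_eq_zero hg hb.2 hbg ((mul_eq_zero_iff_left hc).1 (.trans ?_ hint))
  rw [← integral_mul_volterraTransform hK.continuous hk zero_le_one (by fun_prop),
    ← intervalIntegral.integral_const_mul]
  refine intervalIntegral.integral_congr fun x hx ↦ ?_
  rw [uIcc_of_le zero_le_one] at hx
  simp only [hψc x hx, hkh hx]
  ring

lemma finite_and_natCard_le_of_forall_finset {α : Type*} {A : Set α} {C : ℝ}
    (hA : ∀ T : Finset α, ↑T ⊆ A → T.card ≤ C) : A.Finite ∧ Nat.card A ≤ C := by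
  have hfin : A.Finite := by
    by_contra hinf
    obtain ⟨n, hn⟩ := exists_nat_gt C
    obtain ⟨T, hTA, hT⟩ := Set.Infinite.exists_subset_card_eq hinf n
    exact hn.not_ge (hT ▸ hA T hTA)
  refine ⟨hfin, ?_⟩
  rw [Nat.card_eq_card_finite_toFinset hfin]
  exact hA _ hfin.coe_toFinset.subset

/-- The indices of the modes with eigenvalue in `(0, lambda]` annihilated by the datum `h`; the
paper's `d(lambda)` is its cardinality. -/
def annihilatedModes {ι : Type*} (lam : ι → ℝ) (phi : ι → ℝ → ℝ) (h : ℝ → ℝ) (lambda : ℝ) :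
    Set ι :=
  {i | 0 < lam i ∧ lam i ≤ lambda ∧ ∫ x in (0 : ℝ)..1, h x * phi i x = 0}

section AnnihilatedModes

variable {ι : Type*} {ε : ℝ} {V h : ℝ → ℝ} (hV : ContinuousOn V (Icc 0 1)) {lam : ι → ℝ}
  {phi : ι → ℝ → ℝ} (hlam : Function.Injective lam)
  (hphi : ∀ i, IsDirichletEigenpair V (lam i) (phi i)) (hh : ContinuousOn h (Icc 0 1))
  (hne : ∃ x ∈ Icc (0 : ℝ) 1, h x ≠ 0) (hsupp : ∀ x ∈ Icc (0 : ℝ) 1, x ∉ Icc 0 ε → h x = 0)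

include hV hlam hphi hh hne hsupp

theorem eventually_card_annihilatedModes_le {η : ℝ} (hη : 0 < η) :
    ∀ᶠ lambda in Filter.atTop, (annihilatedModes lam phi h lambda).Finite ∧
      Nat.card (annihilatedModes lam phi h lambda) ≤ (ε / Real.pi + η) * √lambda := by
  obtain ⟨g, hg, b, hb, hgb, hzero⟩ := exists_sineTransform_sqrt_eq_zero hV hh hne hsupp
  have hq : Continuous fun t ↦ (g t : ℂ) := by fun_prop
  have hlow := reachesTypeNearImaginaryAxis_sineTransform hq hb.1
    fun δ hδ ↦ (hgb δ hδ).imp fun t ht ↦ ⟨ht.1, Complex.ofReal_ne_zero.2 ht.2⟩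
  filter_upwards [Real.tendsto_sqrt_atTop.eventually
    ((isBoundedExponentialType_sineTransform hq hb.1.le).eventually_card_zeros_le hlow hη)]
    with lambda hcard
  refine finite_and_natCard_le_of_forall_finset fun T hT ↦ ?_
  have hinj : InjOn (fun i ↦ √(lam i)) T := fun i hi j hj hij ↦
    hlam ((Real.sqrt_inj (hT hi).1.le (hT hj).1.le).1 hij)
  rw [← Finset.card_image_of_injOn hinj]
  refine (hcard _ fun x hx ↦ ?_).trans (by gcongr; exact hb.2)
  obtain ⟨i, hi, rfl⟩ := Finset.mem_image.1 hx
  obtain ⟨hpos, hle, hint⟩ := hT hi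
  exact ⟨hzero _ _ (hphi i) hpos hint, Real.sqrt_nonneg _, Real.sqrt_le_sqrt hle⟩

theorem statement15_general :
    (∀ lambda, (annihilatedModes lam phi h lambda).Finite) ∧
      Filter.limsup (fun lambda ↦ (Nat.card (annihilatedModes lam phi h lambda) : ℝ) / √lambda)
        Filter.atTop ≤ ε / Real.pi := by
  have hev {η : ℝ} (hη : 0 < η) :=
    eventually_card_annihilatedModes_le hV hlam hphi hh hne hsupp hη
  refine ⟨fun lambda ↦ ?_, le_of_forall_pos_le_add fun η hη ↦ ?_⟩
  · obtain ⟨lambda', hle, hfin, -⟩ :=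
      ((Filter.eventually_ge_atTop lambda).and (hev one_pos)).exists
    exact hfin.subset fun i hi ↦ ⟨hi.1, hi.2.1.trans hle, hi.2.2⟩
  · refine Filter.limsup_le_of_le (Filter.isCoboundedUnder_le_of_le _ (x := 0)
      fun lambda ↦ by positivity) ?_
    filter_upwards [hev hη, Filter.eventually_gt_atTop 0] with lambda hcard hlambda
    exact (div_le_iff₀ (Real.sqrt_pos.2 hlambda)).2 hcard.2

end AnnihilatedModes

/-- upper density bound for the spectral modes annihilated by an initial
datum supported in `[0,ε]`. -/
theorem statement15
    (ε : ℝ) (hε : ε ∈ Ioo (0:ℝ) 1)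
    (V : ℝ → ℝ) (hV : ContinuousOn V (Icc 0 1))
    (lam : ℕ → ℝ) (phi : ℕ → ℝ → ℝ) (hsys : IsDirichletSystem V lam phi)
    (hasymp : ∃ C : ℝ, ∀ k, |lam k - (((k:ℝ) + 1) * Real.pi)^2| ≤ C)
    (h : ℝ → ℝ) (hh : ContinuousOn h (Icc 0 1))
    (hne : ∃ x ∈ Icc (0:ℝ) 1, h x ≠ 0)
    (hsupp : ∀ x ∈ Icc (0:ℝ) 1, x ∉ Icc (0:ℝ) ε → h x = 0) :
    Filter.limsup
      (fun lambda : ℝ =>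
        (Nat.card {k : ℕ | 0 < lam k ∧ lam k ≤ lambda ∧
            ∫ x in (0:ℝ)..1, h x * phi k x = 0} : ℝ) / Real.sqrt lambda)
      Filter.atTop ≤ ε / Real.pi := by
  exact (statement15_general hV hsys.1.injective hsys.2.2.1 hh hne hsupp).2
end
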